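/- (Kubilyus' theorem.) There exist constants b > 0 and C > 0 such that for all u ≥ 2 and all 0 ≤ α ≤ β ≤ 2π, the number of Gaussian primes ω ∈ ℤ[i] with |ω|² ≤ u and α ≤ arg(ω) ≤ β equals (2/π)·(β − α)·∫₂^u dv/log v + E, where |E| ≤ C · u · exp(−b·√(log u)). -/

import Mathlib

/-- The argument of a complex number, normalized to lie in `[0, 2π)`. -/
noncomputable def arg2pi (z : ℂ) : ℝ :=
  if 0 ≤ z.arg then z.arg else z.arg + 2 * Real.pi

open Complex Metric Set in
lemma logderiv_bound {f : ℂ → ℂ} {R M : ℝ} (hR : 0 < R) (hM : 0 < M)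
    (hf : DifferentiableOn ℂ f (ball 0 R)) (h0 : f 0 = 1) (hb : ∀ z ∈ ball (0:ℂ) R, ‖f z‖ ≤ Real.exp M)
    (hne : ∀ z ∈ ball (0:ℂ) R, f z ≠ 0) {z : ℂ} (hz : ‖z‖ ≤ R / 2) :
    ‖deriv f z / f z‖ ≤ 24 * M / R := by
  have hdf : DifferentiableOn ℂ (deriv f) (ball 0 R) := hf.deriv isOpen_ball
  obtain ⟨g, hg⟩ := (hdf.div hf hne).isExactOn_ball
  have h00 : (0:ℂ) ∈ ball (0:ℂ) R := by simpa using hR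
  have hgd : DifferentiableOn ℂ g (ball 0 R) := fun w hw => (hg w hw).differentiableAt.differentiableWithinAt
  have key : ∀ w ∈ ball (0:ℂ) R, f w * exp (-(g w - g 0)) = 1 := by
    intro w hw
    have := isOpen_ball.is_const_of_deriv_eq_zero (𝕜 := ℂ) (s := ball (0:ℂ) R)
      (f := fun w => f w * exp (-(g w - g 0))) (convex_ball _ _).isPreconnected
      (by fun_prop) ?_ hw h00
    · simpa [h0] using this
    · intro v hv
      have h1 := (hf.differentiableAt (isOpen_ball.mem_nhds hv)).hasDerivAt
      have h2 := h1.mul (((hg v hv).sub_const (g 0)).neg.cexp)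
      refine (HasDerivAt.deriv (f := fun w => f w * exp (-(g w - g 0))) h2).trans ?_
      have := hne v hv
      simp only [Pi.div_apply, Pi.zero_apply, Pi.neg_apply]
      field_simp
      ring
  have hre : ∀ w ∈ ball (0:ℂ) R, (g w - g 0).re ≤ M := by
    intro w hw
    have h1 : f w = exp (g w - g 0) := by
      have := key w hw
      rw [exp_neg] at this
      field_simp at this
      exact this
    have h2 := hb w hw
    rw [h1, norm_exp] at h2
    exact Real.exp_le_exp.mp h2
  have hB : ∀ w, ‖w‖ ≤ 3 * R / 4 → ‖g w - g 0‖ ≤ 6 * M := by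
    intro w hw
    have hw' : w ∈ ball (0:ℂ) R := by rw [mem_ball_zero_iff]; linarith
    have := borelCaratheodory_zero (f := fun w => g w - g 0) hM (hgd.sub_const _) hre hR hw' (by simp)
    refine this.trans ?_
    rw [div_le_iff₀ (by linarith)]
    nlinarith
  have hzb : z ∈ ball (0:ℂ) R := by rw [mem_ball_zero_iff]; linarith
  have hsub : closedBall z (R/4) ⊆ ball 0 R := by
    intro w hw
    rw [mem_closedBall, dist_eq_norm] at hw
    rw [mem_ball_zero_iff]
    have := norm_sub_norm_le w z
    linarith
  have := norm_deriv_le_of_forall_mem_sphere_norm_le (f := fun w => g w - g 0) (c := z) (R := R/4)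
    (C := 6 * M) (by linarith)
    (DifferentiableOn.diffContOnCl ((hgd.sub_const _).mono (by
      rw [closure_ball _ (by linarith)]; exact hsub)))
    (fun w hw => hB w (by
      rw [mem_sphere, dist_eq_norm] at hw
      have := norm_sub_norm_le w z
      linarith))
  rw [((hg z hzb).sub_const (g 0)).deriv] at this
  refine this.trans (le_of_eq ?_)
  field_simp; ring

open Complex Metric Set in
lemma div_out_zero {f : ℂ → ℂ} {R : ℝ} {U : Set ℂ} (hU : IsOpen U) (hR : 0 < R)
    (hRU : closedBall 0 R ⊆ U) (hf : DifferentiableOn ℂ f U) (h0 : f 0 = 1)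
    {ρ : ℂ} (hρ : ‖ρ‖ ≤ R / 3) (hz : f ρ = 0) :
    ∃ g : ℂ → ℂ, DifferentiableOn ℂ g U ∧ g 0 = 1 ∧ (∀ B, (∀ z ∈ closedBall (0:ℂ) R, ‖f z‖ ≤ B) →
      ∀ z ∈ closedBall (0:ℂ) R, ‖g z‖ ≤ B / 2) ∧
      (∀ z, g z = 0 → f z = 0) ∧ deriv f 0 = deriv g 0 + -1 / ρ := by
  have hρ0 : ρ ≠ 0 := by rintro rfl; rw [h0] at hz; exact one_ne_zero hz
  have hρU : ρ ∈ U := hRU (by rw [mem_closedBall_zero_iff]; linarith)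
  have hgd : DifferentiableOn ℂ (fun z => -ρ * dslope f ρ z) U :=
    ((differentiableOn_dslope (hU.mem_nhds hρU)).mpr hf).const_mul _
  have hfg : ∀ z, f z = (-ρ * dslope f ρ z) * ((z - ρ) / (-ρ)) := by
    intro z
    have := sub_smul_dslope f ρ z
    rw [hz, sub_zero, smul_eq_mul] at this
    rw [← this]; field_simp
  have hg0 : -ρ * dslope f ρ 0 = 1 := by
    have := hfg 0
    rw [h0, zero_sub, div_self (neg_ne_zero.mpr hρ0), mul_one] at this
    exact this.symm
  refine ⟨_, hgd, hg0, ?_, ?_, ?_⟩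
  · intro B hb z hzz
    refine norm_le_of_forall_mem_frontier_norm_le (U := ball (0:ℂ) R) isBounded_ball
      (DifferentiableOn.diffContOnCl (hgd.mono (by rwa [closure_ball _ hR.ne']))) ?_
      (by rwa [closure_ball _ hR.ne'])
    intro w hw
    rw [frontier_ball _ hR.ne', mem_sphere_zero_iff_norm] at hw
    have h1 := hb w (by rw [mem_closedBall_zero_iff]; linarith)
    have h2 : 2 * ‖ρ‖ ≤ ‖w - ρ‖ := by have := norm_sub_norm_le w ρ; linarith
    rw [hfg w, norm_mul, norm_div, norm_neg] at h1
    have h3 : 2 ≤ ‖w - ρ‖ / ‖ρ‖ := by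
      rwa [le_div_iff₀ (norm_pos_iff.mpr hρ0)]
    have h4 := norm_nonneg (-ρ * dslope f ρ w)
    nlinarith
  · intro z h
    rw [hfg z]
    exact mul_eq_zero_of_left h _
  · have h00 : (0:ℂ) ∈ U := hRU (by simpa using hR.le)
    have h1 := (hgd.differentiableAt (hU.mem_nhds h00)).hasDerivAt
    have h2 := h1.mul (((hasDerivAt_id (0:ℂ)).sub_const ρ).div_const (-ρ))
    have h3 : HasDerivAt f _ 0 := h2.congr_of_eventuallyEq (Filter.Eventually.of_forall hfg)
    rw [h3.deriv, hg0]
    simp only [id, zero_sub, div_self (neg_ne_zero.mpr hρ0), mul_one]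
    rw [one_mul, neg_div, div_neg]

open Complex Metric Set in
lemma landau_aux {R M : ℝ} {U : Set ℂ} (hU : IsOpen U) (hR : 0 < R) (hM : 0 < M)
    (hRU : closedBall 0 R ⊆ U) (n : ℕ) : ∀ f : ℂ → ℂ, DifferentiableOn ℂ f U → f 0 = 1 →
    (∀ z ∈ closedBall (0:ℂ) R, ‖f z‖ ≤ Real.exp M) → (∀ z ∈ closedBall (0:ℂ) R, ‖f z‖ ≤ 2 ^ n) →
    (∀ z, ‖z‖ ≤ R / 3 → f z = 0 → z.re < 0) → -(72 * M / R) ≤ (deriv f 0).re := by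
  have nz : ∀ f : ℂ → ℂ, DifferentiableOn ℂ f U → f 0 = 1 →
      (∀ z ∈ closedBall (0:ℂ) R, ‖f z‖ ≤ Real.exp M) → (¬ ∃ ρ, ‖ρ‖ ≤ R / 3 ∧ f ρ = 0) →
      -(72 * M / R) ≤ (deriv f 0).re := by
    intro f hf h0 hb h
    push Not at h
    have hs : ball (0:ℂ) (R/3) ⊆ closedBall 0 R :=
      ball_subset_closedBall.trans (closedBall_subset_closedBall (by linarith))
    have := logderiv_bound (R := R/3) (z := 0) (by linarith) hM (hf.mono (hs.trans hRU)) h0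
      (fun z hz => hb z (hs hz)) (fun z hz => h z (mem_ball_zero_iff.mp hz).le) (by simp; linarith)
    rw [h0, div_one] at this
    have h2 := (abs_le.mp ((abs_re_le_norm _).trans this)).1
    refine le_trans (le_of_eq ?_) h2
    field_simp; norm_num
  induction n with
  | zero =>
    intro f hf h0 hb hb2 hre
    by_cases h : ∃ ρ, ‖ρ‖ ≤ R / 3 ∧ f ρ = 0
    · obtain ⟨ρ, hρ, hz⟩ := h
      obtain ⟨g, -, g0, gb, -⟩ := div_out_zero hU hR hRU hf h0 hρ hz
      have := gb _ hb2 0 (by simpa using hR.le)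
      rw [g0] at this; norm_num at this
    · exact nz f hf h0 hb h
  | succ n ih =>
    intro f hf h0 hb hb2 hre
    by_cases h : ∃ ρ, ‖ρ‖ ≤ R / 3 ∧ f ρ = 0
    · obtain ⟨ρ, hρ, hz⟩ := h
      obtain ⟨g, gd, g0, gb, gz, gg⟩ := div_out_zero hU hR hRU hf h0 hρ hz
      have h1 := ih g gd g0 (fun z hz => (gb _ hb z hz).trans (by have := Real.exp_pos M; linarith))
        (fun z hz => (gb _ hb2 z hz).trans (by rw [pow_succ]; linarith))
        (fun z h1 h2 => hre z h1 (gz z h2))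
      have h2 := hre ρ hρ hz
      have h3 : 0 ≤ (-1 / ρ : ℂ).re := by
        rw [neg_div, one_div, neg_re, inv_re, ← neg_div]
        exact div_nonneg (by linarith) (normSq_nonneg _)
      rw [gg, add_re]; linarith
    · exact nz f hf h0 hb h

open Complex Metric Set in
/-- one-sided bound for the log-derivative, with and without a distinguished zero -/
lemma landau {R M : ℝ} {U : Set ℂ} {s : ℂ} {f : ℂ → ℂ} (hU : IsOpen U) (hR : 0 < R) (hM : 0 < M)
    (hRU : closedBall s R ⊆ U) (hf : DifferentiableOn ℂ f U) (h0 : f s ≠ 0)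
    (hb : ∀ z ∈ closedBall s R, ‖f z‖ ≤ Real.exp M * ‖f s‖)
    (hre : ∀ z, f z = 0 → z.re < s.re) :
    -(72 * M / R) ≤ (deriv f s / f s).re ∧ ∀ ρ, ‖ρ - s‖ ≤ R / 3 → f ρ = 0 →
      -(72 * M / R) + (1 / (s - ρ)).re ≤ (deriv f s / f s).re := by
  set F : ℂ → ℂ := fun z => f (s + z) / f s with hF
  set V : Set ℂ := (fun z => s + z) ⁻¹' U
  have hV : IsOpen V := hU.preimage (by fun_prop)
  have hFd : DifferentiableOn ℂ F V :=
    (DifferentiableOn.comp (f := fun z => s + z) hf (by fun_prop) (fun z hz => hz)).div_const _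
  have hRV : closedBall 0 R ⊆ V := by
    intro z hz
    apply hRU
    simpa [mem_closedBall, dist_eq_norm] using hz
  have hF0 : F 0 = 1 := by simp [hF, h0]
  have hFb : ∀ z ∈ closedBall (0:ℂ) R, ‖F z‖ ≤ Real.exp M := by
    intro z hz
    rw [hF, norm_div, div_le_iff₀ (norm_pos_iff.mpr h0)]
    apply hb
    simpa [mem_closedBall, dist_eq_norm] using hz
  have hd : deriv F 0 = deriv f s / f s := by
    rw [hF, deriv_div_const, deriv_comp_const_add, add_zero]
  have hz : ∀ z, F z = 0 → z.re < 0 := by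
    intro z hz
    have := hre (s + z) (by simpa [hF, h0] using hz)
    rw [add_re] at this; linarith
  obtain ⟨n, hn⟩ := pow_unbounded_of_one_lt (Real.exp M) (one_lt_two)
  have main : ∀ G : ℂ → ℂ, DifferentiableOn ℂ G V → G 0 = 1 →
    (∀ z ∈ closedBall (0:ℂ) R, ‖G z‖ ≤ Real.exp M) → (∀ z, G z = 0 → z.re < 0) →
      -(72 * M / R) ≤ (deriv G 0).re := fun G h1 h2 h3 h4 =>
    landau_aux hV hR hM hRV n G h1 h2 h3 (fun z hz => (h3 z hz).trans hn.le) (fun z _ => h4 z)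
  rw [← hd]
  refine ⟨main F hFd hF0 hFb hz, fun ρ hρ hρ0 => ?_⟩
  obtain ⟨g, gd, g0, gb, gz, gg⟩ := div_out_zero (ρ := ρ - s) hV hR hRV hFd hF0 hρ (by simp [hF, hρ0])
  have h1 := main g gd g0 (fun z hz => (gb _ hFb z hz).trans (by have := Real.exp_pos M; linarith))
    (fun z h => hz z (gz z h))
  rw [gg, add_re]
  have : (-1 / (ρ - s) : ℂ) = 1 / (s - ρ) := by rw [← neg_sub s ρ, neg_div_neg_eq]
  rw [this]; linarith

open scoped Classical in
noncomputable def vM (z : GaussianInt) : ℝ :=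
  if h : ∃ p : GaussianInt, ∃ j : ℕ, Prime p ∧ 0 < j ∧ Associated (p ^ j) z
  then Real.log (h.choose.norm.natAbs) else 0

def nrm (z : GaussianInt) : ℕ := z.norm.natAbs

lemma nrm_eq (z : GaussianInt) : (nrm z : ℤ) = z.re ^ 2 + z.im ^ 2 := by
  rw [nrm, Int.natCast_natAbs, abs_of_nonneg (GaussianInt.norm_nonneg z), Zsqrtd.norm_def]; ring

lemma nrm_mul (z w : GaussianInt) : nrm (z * w) = nrm z * nrm w := by
  simp [nrm, Zsqrtd.norm_mul, Int.natAbs_mul]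

lemma nrm_pow (z : GaussianInt) (k : ℕ) : nrm (z ^ k) = nrm z ^ k := by
  induction k with
  | zero => simp [nrm]
  | succ k ih => rw [pow_succ, pow_succ, nrm_mul, ih]

lemma nrm_pos {z : GaussianInt} (hz : z ≠ 0) : 0 < nrm z :=
  Int.natAbs_pos.mpr (by rw [ne_eq, Zsqrtd.norm_eq_zero_iff (by norm_num)]; exact hz)

lemma nrm_unit {z : GaussianInt} (hz : IsUnit z) : nrm z = 1 := Zsqrtd.norm_eq_one_iff.mpr hz

lemma nrm_assoc {z w : GaussianInt} (h : Associated z w) : nrm z = nrm w := by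
  obtain ⟨u, rfl⟩ := h
  rw [nrm_mul, nrm_unit u.isUnit, mul_one]

lemma nrm_prime {p : GaussianInt} (hp : Prime p) : 2 ≤ nrm p := by
  have h1 := nrm_pos hp.ne_zero
  have h2 : nrm p ≠ 1 := fun h => hp.not_isUnit (Zsqrtd.norm_eq_one_iff.mp h)
  omega

lemma nrm_norm (z : GaussianInt) : (nrm z : ℝ) = ‖GaussianInt.toComplex z‖ ^ 2 := by
  rw [Complex.sq_norm, ← GaussianInt.intCast_real_norm, nrm, ← Int.cast_natCast, Int.natCast_natAbs,
    abs_of_nonneg (GaussianInt.norm_nonneg z)]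

lemma finite_nrm_le (n : ℕ) : {z : GaussianInt | z ≠ 0 ∧ nrm z ≤ n}.Finite := by
  refine ((Set.finite_Icc (-(n:ℤ)) n).prod (Set.finite_Icc (-(n:ℤ)) n)).image
    (fun p => (⟨p.1, p.2⟩ : GaussianInt)) |>.subset ?_
  rintro z ⟨-, hz⟩
  have := nrm_eq z
  refine ⟨(z.re, z.im), ⟨⟨?_, ?_⟩, ⟨?_, ?_⟩⟩, rfl⟩ <;> simp only <;> nlinarith

noncomputable def Sle (n : ℕ) : Finset GaussianInt := (finite_nrm_le n).toFinset

lemma mem_Sle {n : ℕ} {z : GaussianInt} : z ∈ Sle n ↔ z ≠ 0 ∧ nrm z ≤ n := by simp [Sle]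

noncomputable def Sn (n : ℕ) : Finset GaussianInt := (Sle n).filter (fun z => nrm z = n)

lemma mem_Sn {n : ℕ} {z : GaussianInt} : z ∈ Sn n ↔ z ≠ 0 ∧ nrm z = n := by
  simp only [Sn, Finset.mem_filter, mem_Sle]; constructor
  · rintro ⟨⟨a, b⟩, c⟩; exact ⟨a, c⟩
  · rintro ⟨a, c⟩; exact ⟨⟨a, c.le⟩, c⟩

lemma vM_eq {p d : GaussianInt} {j : ℕ} (hp : Prime p) (hj : 0 < j) (h : Associated (p ^ j) d) :
    vM d = Real.log (nrm p) := by
  have hex : ∃ p : GaussianInt, ∃ j : ℕ, Prime p ∧ 0 < j ∧ Associated (p ^ j) d := ⟨p, j, hp, hj, h⟩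
  rw [vM, dif_pos hex]
  obtain ⟨i, hq, hi, hqa⟩ := hex.choose_spec
  set q := hex.choose
  have h1 : p ∣ q ^ i := (dvd_pow_self p hj.ne').trans (h.trans hqa.symm).dvd
  have h2 := hp.associated_of_dvd hq (hp.dvd_of_dvd_pow h1)
  rw [← nrm_assoc h2.symm]; rfl

lemma vM_cases (d : GaussianInt) : vM d = 0 ∨ ∃ p : GaussianInt, ∃ j : ℕ, Prime p ∧ 0 < j ∧ Associated (p ^ j) d := by
  by_cases h : ∃ p : GaussianInt, ∃ j : ℕ, Prime p ∧ 0 < j ∧ Associated (p ^ j) d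
  · exact Or.inr h
  · left; rw [vM, dif_neg h]

lemma vM_nonneg (d : GaussianInt) : 0 ≤ vM d := by
  rcases vM_cases d with h | ⟨p, j, hp, hj, h⟩
  · exact h.ge
  · rw [vM_eq hp hj h]; exact Real.log_natCast_nonneg _

lemma vM_le (d : GaussianInt) : vM d ≤ Real.log (nrm d) := by
  rcases vM_cases d with h | ⟨p, j, hp, hj, h⟩
  · rw [h]; exact Real.log_natCast_nonneg _
  · rw [vM_eq hp hj h, ← nrm_assoc h, nrm_pow]
    have := nrm_prime hp
    apply Real.log_le_log (by positivity)
    exact_mod_cast Nat.le_self_pow hj.ne' _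

open scoped Classical in
noncomputable def divs (z : GaussianInt) : Finset GaussianInt := (Sle (nrm z)).filter (· ∣ z)

lemma mem_divs {z d : GaussianInt} (hz : z ≠ 0) : d ∈ divs z ↔ d ∣ z := by
  simp only [divs, Finset.mem_filter, mem_Sle, and_iff_right_iff_imp]
  rintro ⟨e, rfl⟩
  refine ⟨left_ne_zero_of_mul hz, ?_⟩
  rw [nrm_mul]
  exact Nat.le_mul_of_pos_right _ (nrm_pos (right_ne_zero_of_mul hz))

def gI : GaussianInt := ⟨0, 1⟩

lemma assoc_iff {q d : GaussianInt} : Associated q d ↔ d ∈ ({q, -q, gI * q, -gI * q} : Finset GaussianInt) := by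
  simp only [Finset.mem_insert, Finset.mem_singleton]
  have hI : IsUnit gI := Zsqrtd.norm_eq_one_iff.mp (by simp [gI, Zsqrtd.norm_def])
  constructor
  · rintro ⟨u, rfl⟩
    have h := nrm_unit u.isUnit
    have h2 := nrm_eq (u : GaussianInt)
    rw [h] at h2
    obtain ⟨⟨a, b⟩, hu⟩ : ∃ v : GaussianInt, v = (u : GaussianInt) := ⟨_, rfl⟩
    rw [← hu] at h2 ⊢
    simp only [Nat.cast_one] at h2
    have ha : a ≤ 1 := by nlinarith
    have ha' : -1 ≤ a := by nlinarith
    have hb : b ≤ 1 := by nlinarith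
    have hb' : -1 ≤ b := by nlinarith
    simp only [Zsqrtd.ext_iff, Zsqrtd.re_mul, Zsqrtd.im_mul, gI, Zsqrtd.re_neg, Zsqrtd.im_neg]
    interval_cases a <;> interval_cases b <;> simp at h2 <;> simp
  · rintro (rfl | rfl | rfl | rfl)
    · rfl
    · exact (Associated.refl q).neg_right
    · exact (associated_unit_mul_left q _ hI).symm
    · exact (associated_unit_mul_left q _ hI.neg).symm

lemma card_assoc {q : GaussianInt} (hq : q ≠ 0) :
    ({q, -q, gI * q, -gI * q} : Finset GaussianInt).card = 4 := by
  have h : q.re ≠ 0 ∨ q.im ≠ 0 := by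
    by_contra h; push Not at h; exact hq (Zsqrtd.ext_iff.mpr h)
  rw [Finset.card_insert_of_notMem, Finset.card_insert_of_notMem, Finset.card_insert_of_notMem,
    Finset.card_singleton] <;>
  simp only [Finset.mem_insert, Finset.mem_singleton, Zsqrtd.ext_iff, Zsqrtd.re_mul, Zsqrtd.im_mul, gI,
    Zsqrtd.re_neg, Zsqrtd.im_neg] <;> omega

lemma sum_vM (z : GaussianInt) : z ≠ 0 → ∑ d ∈ divs z, vM d = 4 * Real.log (nrm z) := by
  classical
  induction z using UniqueFactorizationMonoid.induction_on_prime with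
  | h₁ => simp
  | h₂ u hu =>
    intro h
    rw [nrm_unit hu, Nat.cast_one, Real.log_one, mul_zero]
    refine Finset.sum_eq_zero fun d hd => ?_
    rw [mem_divs h] at hd
    rcases vM_cases d with h | ⟨p, j, hp, hj, h⟩
    · exact h
    · exact absurd (isUnit_of_dvd_unit ((dvd_pow_self p hj.ne').trans (h.dvd.trans hd)) hu) hp.not_isUnit
  | h₃ a p ha hp ih =>
    intro h
    have hsub : divs a ⊆ divs (p * a) := by
      intro d hd
      rw [mem_divs ha] at hd
      rw [mem_divs h]
      exact hd.mul_left p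
    obtain ⟨c, hac, hpc⟩ :=
      (FiniteMultiplicity.of_prime_left hp ha).exists_eq_pow_mul_and_not_dvd
    generalize multiplicity p a = v at hac
    rw [← Finset.sum_sdiff hsub, ih ha, nrm_mul, Nat.cast_mul, Real.log_mul
      (by exact_mod_cast (nrm_pos hp.ne_zero).ne') (by exact_mod_cast (nrm_pos ha).ne'), mul_add]
    congr 1
    have hq : p ^ (v + 1) ≠ 0 := pow_ne_zero _ hp.ne_zero
    rw [← Finset.sum_subset (s₁ := {p ^ (v+1), -p ^ (v+1), gI * p ^ (v+1), -gI * p ^ (v+1)})]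
    · rw [Finset.sum_congr rfl (fun d hd => vM_eq hp (Nat.succ_pos v) (assoc_iff.mpr hd)),
        Finset.sum_const, card_assoc hq]
      simp
    · intro d hd
      have hd := assoc_iff.mpr hd
      rw [Finset.mem_sdiff, mem_divs h, mem_divs ha, ← hd.dvd_iff_dvd_left, ← hd.dvd_iff_dvd_left, hac]
      constructor
      · exact ⟨c, by ring⟩
      · rw [pow_succ, mul_dvd_mul_iff_left (pow_ne_zero _ hp.ne_zero)]; exact hpc
    · intro d hd hd2
      rw [← assoc_iff] at hd2
      rw [Finset.mem_sdiff, mem_divs h, mem_divs ha] at hd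
      rcases vM_cases d with h0 | ⟨q, j, hq, hj, hqd⟩
      · exact h0
      · exfalso
        rw [← hqd.dvd_iff_dvd_left, ← hqd.dvd_iff_dvd_left] at hd
        by_cases hpq : Associated p q
        · have hpj : Associated (p ^ j) (q ^ j) := hpq.pow_pow
          rw [← hpj.dvd_iff_dvd_left, ← hpj.dvd_iff_dvd_left] at hd
          have h1 : v < j := by
            by_contra hlt
            apply hd.2
            rw [hac]
            exact (pow_dvd_pow p (not_lt.mp hlt)).mul_right c
          have h2 : j ≤ v + 1 := by
            by_contra hlt
            have : p ^ (v + 1 + 1) ∣ p * a := (pow_dvd_pow p (by omega)).trans hd.1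
            rw [hac, ← mul_assoc, ← pow_succ', pow_succ _ (v+1),
              mul_dvd_mul_iff_left (pow_ne_zero _ hp.ne_zero)] at this
            exact hpc this
          have h3 : j = v + 1 := by omega
          subst h3
          exact hd2 (hpj.trans hqd)
        · apply hd.2
          have : IsCoprime (q ^ j) p := by
            apply IsCoprime.pow_left
            rw [(hq.irreducible).coprime_iff_not_dvd]
            intro hh
            exact hpq (hq.associated_of_dvd hp hh).symm
          exact this.dvd_of_dvd_mul_left hd.1

noncomputable def chi (m : ℤ) (z : GaussianInt) : ℂ :=
  (GaussianInt.toComplex z / (‖GaussianInt.toComplex z‖ : ℂ)) ^ m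

lemma chi_mul (m : ℤ) (z w : GaussianInt) : chi m (z * w) = chi m z * chi m w := by
  simp only [chi, map_mul, norm_mul, Complex.ofReal_mul, mul_div_mul_comm, mul_zpow]

lemma toC_ne {z : GaussianInt} (hz : z ≠ 0) : GaussianInt.toComplex z ≠ 0 := by
  rwa [ne_eq, GaussianInt.toComplex_eq_zero]

lemma norm_chi (m : ℤ) {z : GaussianInt} (hz : z ≠ 0) : ‖chi m z‖ = 1 := by
  have := norm_ne_zero_iff.mpr (toC_ne hz)
  simp [chi, norm_zpow, div_self this]

lemma chi_zero (z : GaussianInt) : chi 0 z = 1 := by simp [chi]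

noncomputable def fib (w : GaussianInt → ℂ) (n : ℕ) : ℂ := (1 / 4) * ∑ z ∈ Sn n, w z
noncomputable def aa (m : ℤ) : ℕ → ℂ := fib (chi m)
noncomputable def lam (m : ℤ) : ℕ → ℂ := fib (fun z => vM z * chi m z)

lemma sum_fib (w : GaussianInt → ℂ) (g : ℕ → ℂ) (N : ℕ) :
    ∑ n ∈ Finset.range (N + 1), fib w n * g n = (1 / 4) * ∑ z ∈ Sle N, w z * g (nrm z) := by
  classical
  rw [← Finset.sum_fiberwise_of_maps_to (s := Sle N) (t := Finset.range (N+1)) (g := nrm)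
    (fun z hz => by rw [Finset.mem_range]; have := (mem_Sle.mp hz).2; omega), Finset.mul_sum]
  refine Finset.sum_congr rfl fun n hn => ?_
  have : (Sle N).filter (fun z => nrm z = n) = Sn n := by
    ext z
    rw [Finset.mem_range] at hn
    simp only [Finset.mem_filter, mem_Sle, mem_Sn]
    constructor
    · rintro ⟨⟨a, b⟩, c⟩; exact ⟨a, c⟩
    · rintro ⟨a, c⟩; exact ⟨⟨a, by omega⟩, c⟩
  rw [this, fib, mul_assoc, Finset.sum_mul]
  congr 1
  refine Finset.sum_congr rfl fun z hz => ?_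
  rw [(mem_Sn.mp hz).2]

lemma conv_eq (m : ℤ) (n : ℕ) :
    ∑ p ∈ n.divisorsAntidiagonal, lam m p.1 * aa m p.2 = Real.log n * aa m n := by
  classical
  have hR : (Real.log n : ℂ) * aa m n = (1/16) * ∑ z ∈ Sn n, ∑ d ∈ divs z, (vM d * chi m z : ℂ) := by
    rw [aa, fib, ← mul_assoc, mul_comm _ (1/4 : ℂ), mul_assoc, Finset.mul_sum, Finset.mul_sum, Finset.mul_sum]
    refine Finset.sum_congr rfl fun z hz => ?_
    rw [← Finset.sum_mul, ← Complex.ofReal_sum, sum_vM z (mem_Sn.mp hz).1, (mem_Sn.mp hz).2]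
    push_cast; ring
  have hL : ∑ p ∈ n.divisorsAntidiagonal, lam m p.1 * aa m p.2 =
      (1/16) * ∑ p ∈ n.divisorsAntidiagonal, ∑ x ∈ Sn p.1 ×ˢ Sn p.2, (vM x.1 * chi m x.1 * chi m x.2 : ℂ) := by
    rw [Finset.mul_sum]
    refine Finset.sum_congr rfl fun p _ => ?_
    simp only [lam, aa, fib, Finset.sum_product]
    rw [← Finset.sum_mul_sum]
    ring
  rw [hL, hR, Finset.sum_sigma', Finset.sum_sigma']
  congr 1
  refine Finset.sum_bij (fun x _ => ⟨x.2.1 * x.2.2, x.2.1⟩) ?_ ?_ ?_ ?_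
  · rintro ⟨⟨a, b⟩, ⟨d, e⟩⟩ h
    simp only [Finset.mem_sigma, Nat.mem_divisorsAntidiagonal, Finset.mem_product, mem_Sn] at h ⊢
    obtain ⟨⟨rfl, h0⟩, ⟨hd, rfl⟩, ⟨he, rfl⟩⟩ := h
    exact ⟨⟨mul_ne_zero hd he, nrm_mul _ _⟩, (mem_divs (mul_ne_zero hd he)).mpr (dvd_mul_right _ _)⟩
  · rintro ⟨⟨a, b⟩, ⟨d, e⟩⟩ h ⟨⟨a', b'⟩, ⟨d', e'⟩⟩ h' heq
    simp only [Finset.mem_sigma, Nat.mem_divisorsAntidiagonal, Finset.mem_product, mem_Sn] at h h'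
    obtain ⟨⟨rfl, h0⟩, ⟨hd, rfl⟩, ⟨he, rfl⟩⟩ := h
    obtain ⟨⟨-, -⟩, ⟨hd', rfl⟩, ⟨he', rfl⟩⟩ := h'
    simp only [Sigma.mk.injEq, heq_eq_eq] at heq
    obtain ⟨h1, rfl⟩ := heq
    obtain rfl := mul_left_cancel₀ hd h1
    rfl
  · rintro ⟨z, d⟩ h
    simp only [Finset.mem_sigma, mem_Sn] at h
    obtain ⟨⟨hz, rfl⟩, hd⟩ := h
    rw [mem_divs hz] at hd
    obtain ⟨e, rfl⟩ := hd
    refine ⟨⟨(nrm d, nrm e), (d, e)⟩, ?_, rfl⟩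
    simp only [Finset.mem_sigma, Nat.mem_divisorsAntidiagonal, Finset.mem_product, mem_Sn]
    refine ⟨⟨(nrm_mul _ _).symm, (nrm_pos hz).ne'⟩, ⟨left_ne_zero_of_mul hz, trivial⟩, right_ne_zero_of_mul hz, trivial⟩
  · rintro ⟨⟨a, b⟩, ⟨d, e⟩⟩ h
    simp only [chi_mul]; ring

lemma pow_lip {u v : ℂ} (hu : ‖u‖ = 1) (hv : ‖v‖ = 1) (n : ℕ) : ‖u ^ n - v ^ n‖ ≤ n * ‖u - v‖ := by
  induction n with
  | zero => simp
  | succ n ih =>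
    have : u ^ (n+1) - v ^ (n+1) = u ^ n * (u - v) + (u ^ n - v ^ n) * v := by ring
    rw [this]
    refine (norm_add_le _ _).trans ?_
    rw [norm_mul, norm_mul, norm_pow, hu, hv]
    push_cast
    simp only [one_pow]; linarith

lemma zpow_lip {u v : ℂ} (hu : ‖u‖ = 1) (hv : ‖v‖ = 1) (m : ℤ) : ‖u ^ m - v ^ m‖ ≤ |(m:ℝ)| * ‖u - v‖ := by
  obtain ⟨n, rfl | rfl⟩ := m.eq_nat_or_neg
  · simpa using pow_lip hu hv n
  · have hu0 : u ≠ 0 := by rintro rfl; simp at hu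
    have hv0 : v ≠ 0 := by rintro rfl; simp at hv
    rw [zpow_neg, zpow_neg, zpow_natCast, zpow_natCast, inv_sub_inv (pow_ne_zero _ hu0) (pow_ne_zero _ hv0),
      norm_div, norm_mul, norm_pow, norm_pow, hu, hv, norm_sub_rev]
    simpa using pow_lip hu hv n

lemma dir_lip {w z : ℂ} (hw : w ≠ 0) (hz : z ≠ 0) :
    ‖w / (‖w‖ : ℂ) - z / (‖z‖ : ℂ)‖ ≤ 2 * ‖w - z‖ / ‖z‖ := by
  have h1 := norm_pos_iff.mpr hw
  have h2 := norm_pos_iff.mpr hz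
  have hw' : (‖w‖ : ℂ) ≠ 0 := by exact_mod_cast h1.ne'
  have hz' : (‖z‖ : ℂ) ≠ 0 := by exact_mod_cast h2.ne'
  have : w / (‖w‖ : ℂ) - z / (‖z‖ : ℂ) = (w - z) / (‖z‖ : ℂ) + w / ‖w‖ * ((‖z‖ - ‖w‖ : ℝ) / (‖z‖ : ℂ)) := by
    push_cast; field_simp; ring
  rw [this]
  refine (norm_add_le _ _).trans ?_
  rw [norm_mul, norm_div, norm_div, norm_div, Complex.norm_real, Complex.norm_real, Complex.norm_real,
    norm_norm, norm_norm, div_self h1.ne', one_mul, ← add_div, two_mul]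
  gcongr
  rw [norm_sub_rev w z]
  exact abs_norm_sub_norm_le z w

noncomputable def fw (m : ℤ) (y : ℝ) (w : ℂ) : ℂ := (w / (‖w‖ : ℂ)) ^ m * (max 0 (1 - ‖w‖ ^ 2 * y) : ℝ)

lemma sum_inv_norm (N M : ℕ) (h : N ≤ M ^ 2) :
    ∑ z ∈ Sle N, 1 / ‖GaussianInt.toComplex z‖ ≤ 8 * M := by
  classical
  have hmx : ∀ z ∈ Sle N, 1 ≤ max z.re.natAbs z.im.natAbs ∧ max z.re.natAbs z.im.natAbs ≤ M ∧
      1 / ‖GaussianInt.toComplex z‖ ≤ 1 / (max z.re.natAbs z.im.natAbs : ℕ) := by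
    intro z hz
    rw [mem_Sle] at hz
    have h1 := nrm_eq z
    have h2 : (max z.re.natAbs z.im.natAbs) ^ 2 ≤ nrm z := by
      zify
      rw [h1]
      rcases max_cases z.re.natAbs z.im.natAbs with h | h <;> rcases max_cases |z.re| |z.im| with h' | h' <;>
      rw [h'.1, sq_abs] <;> nlinarith
    have h0 : 1 ≤ max z.re.natAbs z.im.natAbs := by
      have h : z.re ≠ 0 ∨ z.im ≠ 0 := by
        by_contra h; push Not at h; exact hz.1 (Zsqrtd.ext_iff.mpr h)
      omega
    refine ⟨h0, ?_, ?_⟩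
    · exact (Nat.pow_le_pow_iff_left two_ne_zero).mp (h2.trans (hz.2.trans h))
    · have h3 : ((max z.re.natAbs z.im.natAbs : ℕ) : ℝ) ^ 2 ≤ ‖GaussianInt.toComplex z‖ ^ 2 := by
        rw [← nrm_norm]; exact_mod_cast h2
      have h4 := abs_le_of_sq_le_sq h3 (norm_nonneg _)
      apply one_div_le_one_div_of_le
      · exact_mod_cast h0
      · exact (le_abs_self _).trans h4
  rw [← Finset.sum_fiberwise_of_maps_to (t := Finset.Icc 1 M) (g := fun z => max z.re.natAbs z.im.natAbs)
    (fun z hz => Finset.mem_Icc.mpr ⟨(hmx z hz).1, (hmx z hz).2.1⟩)]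
  calc _ ≤ ∑ j ∈ Finset.Icc 1 M, (8:ℝ) := by
        refine Finset.sum_le_sum fun j hj => ?_
        have hj1 := (Finset.mem_Icc.mp hj).1
        have hj0 : (0:ℝ) < j := by exact_mod_cast hj1
        have hc : ((Sle N).filter (fun z => max z.re.natAbs z.im.natAbs = j)).card ≤ 8 * j := by
          rw [← Int.card_box (by omega : j ≠ 0)]
          apply Finset.card_le_card_of_injOn (fun z => (z.re, z.im))
          · intro z hz
            simp only [Finset.coe_filter, Set.mem_ofPred_eq] at hz
            simp [Int.mem_box, hz.2]
          · intro z _ w _ h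
            simp only [Prod.mk.injEq] at h
            exact Zsqrtd.ext_iff.mpr h
        calc _ ≤ ∑ z ∈ (Sle N).filter (fun z => max z.re.natAbs z.im.natAbs = j), 1 / (j:ℝ) := by
              refine Finset.sum_le_sum fun z hz => ?_
              rw [Finset.mem_filter] at hz
              have := (hmx z hz.1).2.2
              rwa [hz.2] at this
          _ ≤ _ := by
              rw [Finset.sum_const, nsmul_eq_mul, mul_one_div, div_le_iff₀ hj0]
              exact_mod_cast hc
    _ = 8 * M := by simp [mul_comm]

def cell (z : GaussianInt) : Set ℂ := {w | ⌊w.re⌋ = z.re ∧ ⌊w.im⌋ = z.im}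

open MeasureTheory
lemma cell_eq (z : GaussianInt) : cell z = Set.Ico (z.re : ℝ) (z.re + 1) ×ℂ Set.Ico (z.im : ℝ) (z.im + 1) := by
  ext w
  simp [cell, Complex.mem_reProdIm, Int.floor_eq_iff]

lemma cell_meas (z : GaussianInt) : MeasurableSet (cell z) := by
  rw [cell_eq]
  exact (Complex.measurable_re measurableSet_Ico).inter (Complex.measurable_im measurableSet_Ico)

lemma cell_vol (z : GaussianInt) : volume (cell z) = 1 := by
  have h := Complex.volume_preserving_equiv_real_prod.measure_preimage
    (s := Set.Ico (z.re : ℝ) (z.re + 1) ×ˢ Set.Ico (z.im : ℝ) (z.im + 1))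
    (measurableSet_Ico.prod measurableSet_Ico).nullMeasurableSet
  rw [Measure.volume_eq_prod, Measure.prod_prod] at h
  rw [cell_eq]
  refine (h.trans (by simp))

lemma cell_dist {z : GaussianInt} {w : ℂ} (hw : w ∈ cell z) : ‖w - GaussianInt.toComplex z‖ ^ 2 ≤ 2 := by
  rw [cell_eq, Complex.mem_reProdIm] at hw
  obtain ⟨⟨h1, h2⟩, h3, h4⟩ := hw
  rw [Complex.sq_norm, Complex.normSq_apply]
  simp only [Complex.sub_re, Complex.sub_im, GaussianInt.toComplex_def, Complex.add_re, Complex.intCast_re,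
    Complex.mul_re, Complex.intCast_im, Complex.I_re, Complex.I_im, Complex.add_im, Complex.mul_im]
  nlinarith

instance : Countable GaussianInt :=
  Function.Injective.countable (f := fun z : GaussianInt => (z.re, z.im))
    (fun z w h => by simp only [Prod.mk.injEq] at h; exact Zsqrtd.ext_iff.mpr h)

lemma fw_cont0 (y : ℝ) : Continuous (fun w : ℂ => (max 0 (1 - ‖w‖ ^ 2 * y) : ℝ)) := by fun_prop

lemma fw_supp0 {y : ℝ} (hy : 0 < y) : HasCompactSupport (fun w : ℂ => (max 0 (1 - ‖w‖ ^ 2 * y) : ℝ)) := by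
  apply HasCompactSupport.intro (isCompact_closedBall (0:ℂ) (1 / Real.sqrt y))
  intro w hw
  rw [mem_closedBall_zero_iff, not_le, div_lt_iff₀ (by positivity)] at hw
  apply max_eq_left
  have := Real.sq_sqrt hy.le
  have h2 : 1 < (‖w‖ * Real.sqrt y) ^ 2 := by nlinarith
  rw [mul_pow, this] at h2
  linarith

lemma fw_int (m : ℤ) {y : ℝ} (hy : 0 < y) : Integrable (fw m y) := by
  have h1 : Integrable (fun w : ℂ => ((max 0 (1 - ‖w‖ ^ 2 * y) : ℝ) : ℂ)) :=
    ((fw_cont0 y).integrable_of_hasCompactSupport (fw_supp0 hy)).ofReal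
  refine h1.bdd_mul (c := 1) ?_ (Filter.Eventually.of_forall fun w => ?_)
  · apply Measurable.aestronglyMeasurable
    have : Measurable (fun w : ℂ => w / (‖w‖ : ℂ)) := by fun_prop
    exact this.pow_const m
  · rcases eq_or_ne w 0 with rfl | hw
    · rcases eq_or_ne m 0 with rfl | hm <;> simp [zero_zpow, *]
    · have := norm_ne_zero_iff.mpr hw
      simp [norm_zpow, div_self this]

lemma fw_integral_ne {m : ℤ} (hm : m ≠ 0) (y : ℝ) : ∫ w, fw m y w = 0 := by
  set a : Circle := Circle.exp (Real.pi / m)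
  have h1 : ∫ w, fw m y (rotation a w) = ∫ w, fw m y w :=
    (rotation a).measurePreserving.integral_comp (rotation a).toHomeomorph.measurableEmbedding _
  have h2 : ∀ w, fw m y (rotation a w) = - fw m y w := by
    intro w
    have ha : ((a : ℂ)) ^ m = -1 := by
      rw [Circle.coe_exp, ← Complex.exp_int_mul, ← Complex.exp_pi_mul_I]
      congr 1
      push_cast
      field_simp
    simp only [fw, rotation_apply, norm_mul, Circle.norm_coe, one_mul, mul_div_assoc, mul_zpow, ha]
    ring
  simp only [h2, integral_neg] at h1
  have : (2:ℂ) * ∫ w, fw m y w = 0 := by linear_combination -h1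
  simpa using this

noncomputable def kap : ℝ := (1/4) * ∫ w : ℂ, max 0 (1 - ‖w‖ ^ 2 * 1)

lemma kap_pos : 0 < kap := by
  have := (fw_cont0 1).integral_pos_of_hasCompactSupport_nonneg_nonzero (μ := volume) (fw_supp0 one_pos)
    (fun w => le_max_left _ _) (x := 0) (by simp)
  unfold kap; linarith

lemma fw_integral_zero {y : ℝ} (hy : 0 < y) : ∫ w, fw 0 y w = (4 * kap / y : ℝ) := by
  have h := Measure.integral_comp_smul (volume : Measure ℂ) (fun w : ℂ => max 0 (1 - ‖w‖ ^ 2 * 1)) (Real.sqrt y)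
  simp only [norm_smul, mul_pow, Real.norm_eq_abs, sq_abs, Real.sq_sqrt hy.le, Complex.finrank_real_complex] at h
  rw [show (fun w => fw 0 y w) = fun w => ((max 0 (1 - ‖w‖ ^ 2 * y) : ℝ) : ℂ) from funext fun w => by simp [fw],
    integral_complex_ofReal]
  congr 1
  simp only [mul_one, mul_comm y] at h
  rw [h, kap, abs_of_pos (by positivity)]
  simp
  field_simp

lemma cell_bound (m : ℤ) {y : ℝ} (hy : 0 < y) {z : GaussianInt} (hz : z ≠ 0) {w : ℂ} (hw : w ∈ cell z) :
    ‖fw m y w - fw m y (GaussianInt.toComplex z)‖ ≤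
      3 * |(m:ℝ)| * (1 / ‖GaussianInt.toComplex z‖) + 6 * y * ‖GaussianInt.toComplex z‖ := by
  have hd := cell_dist hw
  have hzc := toC_ne hz
  have hn1 : 1 ≤ ‖GaussianInt.toComplex z‖ := by
    have h1 := nrm_norm z
    have h2 : (1:ℝ) ≤ nrm z := by exact_mod_cast nrm_pos hz
    have := norm_nonneg (GaussianInt.toComplex z)
    nlinarith
  have hw0 : w ≠ 0 := by
    rintro rfl
    simp only [cell, Complex.zero_re, Complex.zero_im, Set.mem_ofPred_eq, Int.floor_zero] at hw
    exact hz (Zsqrtd.ext_iff.mpr ⟨hw.1.symm, hw.2.symm⟩)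
  set Z := GaussianInt.toComplex z
  have hd' : ‖w - Z‖ ≤ 3 / 2 := by nlinarith [norm_nonneg (w - Z)]
  have hu : ∀ v : ℂ, v ≠ 0 → ‖v / (‖v‖ : ℂ)‖ = 1 := fun v hv => by
    have := norm_ne_zero_iff.mpr hv
    simp [div_self this]
  have h1 : ‖(w / (‖w‖ : ℂ)) ^ m - (Z / (‖Z‖ : ℂ)) ^ m‖ ≤ 3 * |(m:ℝ)| * (1 / ‖Z‖) := by
    refine (zpow_lip (hu w hw0) (hu Z hzc) m).trans ?_
    have h := (dir_lip hw0 hzc).trans (show 2 * ‖w - Z‖ / ‖Z‖ ≤ 3 * (1 / ‖Z‖) by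
      rw [mul_one_div]; gcongr; linarith)
    nlinarith [abs_nonneg (m:ℝ)]
  have h2 : |max 0 (1 - ‖w‖ ^ 2 * y) - max 0 (1 - ‖Z‖ ^ 2 * y)| ≤ 6 * y * ‖Z‖ := by
    have h0 := abs_max_sub_max_le_abs (1 - ‖w‖ ^ 2 * y) (1 - ‖Z‖ ^ 2 * y) 0
    rw [max_comm _ (0:ℝ), max_comm _ (0:ℝ)] at h0
    refine h0.trans ?_
    have h3 := abs_le.mp ((abs_norm_sub_norm_le w Z).trans hd')
    have h4 := norm_nonneg w
    have h5 : |‖Z‖ ^ 2 - ‖w‖ ^ 2| ≤ 6 * ‖Z‖ := by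
      rw [abs_le]; constructor <;> nlinarith
    have : 1 - ‖w‖ ^ 2 * y - (1 - ‖Z‖ ^ 2 * y) = (‖Z‖ ^ 2 - ‖w‖ ^ 2) * y := by ring
    rw [this, abs_mul, abs_of_pos hy]
    nlinarith
  have hm1 : |max 0 (1 - ‖w‖ ^ 2 * y)| ≤ 1 := by
    rw [abs_of_nonneg (le_max_left _ _)]
    exact max_le zero_le_one (by have : 0 ≤ ‖w‖ ^ 2 * y := by positivity
                                 linarith)
  have : fw m y w - fw m y Z = ((w / (‖w‖ : ℂ)) ^ m - (Z / (‖Z‖ : ℂ)) ^ m) * (max 0 (1 - ‖w‖ ^ 2 * y) : ℝ)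
      + (Z / (‖Z‖ : ℂ)) ^ m * ((max 0 (1 - ‖w‖ ^ 2 * y) - max 0 (1 - ‖Z‖ ^ 2 * y) : ℝ) : ℂ) := by
    simp only [fw]; push_cast; ring
  rw [this]
  refine (norm_add_le _ _).trans ?_
  rw [norm_mul, norm_mul, Complex.norm_real, Complex.norm_real, norm_zpow (Z / _), hu Z hzc, one_zpow, one_mul,
    Real.norm_eq_abs, Real.norm_eq_abs]
  have := mul_le_of_le_one_right (norm_nonneg ((w / (‖w‖ : ℂ)) ^ m - (Z / (‖Z‖ : ℂ)) ^ m)) hm1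
  linarith

lemma lattice_bound (m : ℤ) {y : ℝ} (hy : 0 < y) (hy1 : y ≤ 1) :
    ‖∑ z ∈ Sle ⌈9 / y⌉₊, chi m z * (max 0 (1 - nrm z * y) : ℝ) - ∫ w, fw m y w‖ ≤
      3000 * (1 + |(m:ℝ)|) / Real.sqrt y := by
  classical
  set N := ⌈9 / y⌉₊ with hN
  set R := 1 / Real.sqrt y with hR
  have hsy : 0 < Real.sqrt y := Real.sqrt_pos.mpr hy
  have hsy1 : Real.sqrt y ≤ 1 := Real.sqrt_le_one.mpr hy1
  have hR1 : 1 ≤ R := by rw [hR, le_div_iff₀ hsy]; linarith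
  have hRy : R ^ 2 = 1 / y := by rw [hR, div_pow, one_pow, Real.sq_sqrt hy.le]
  have hNl : 9 * R ^ 2 ≤ N := by rw [hRy, mul_one_div]; exact Nat.le_ceil _
  have hNu : (N:ℝ) ≤ 10 * R ^ 2 := by
    have := Nat.ceil_lt_add_one (show 0 ≤ 9 / y by positivity)
    have h2 : 9 / y = 9 * R ^ 2 := by rw [hRy, mul_one_div]
    rw [← hN, h2] at this; nlinarith
  set T := insert (0 : GaussianInt) (Sle N) with hT
  have h0T : (0 : GaussianInt) ∉ Sle N := by simp [mem_Sle]
  have hcells : ∫ w, fw m y w = ∑ z ∈ T, ∫ w in cell z, fw m y w := by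
    have hU : (⋃ z, cell z) = Set.univ := by
      ext w; simp only [Set.mem_iUnion, Set.mem_univ, iff_true]
      exact ⟨⟨⌊w.re⌋, ⌊w.im⌋⟩, rfl, rfl⟩
    have h1 := hasSum_integral_iUnion (f := fw m y) (μ := volume) cell_meas (by
      intro z z' hzz
      refine Set.disjoint_left.mpr fun w h1 h2 => hzz ?_
      exact Zsqrtd.ext_iff.mpr ⟨h1.1.symm.trans h2.1, h1.2.symm.trans h2.2⟩) (fw_int m hy).integrableOn
    rw [hU, setIntegral_univ] at h1
    refine h1.unique (hasSum_sum_of_ne_finset_zero fun z hz => ?_)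
    refine setIntegral_eq_zero_of_forall_eq_zero fun w hw => ?_
    rw [hT, Finset.mem_insert, mem_Sle] at hz
    push Not at hz
    have h3 := hz.2 hz.1
    have h4 : 9 * R ^ 2 ≤ ‖GaussianInt.toComplex z‖ ^ 2 := by
      rw [← nrm_norm]; exact hNl.trans (by exact_mod_cast h3.le)
    have h5 : 3 * R ≤ ‖GaussianInt.toComplex z‖ := by
      nlinarith [norm_nonneg (GaussianInt.toComplex z)]
    have h6 := cell_dist hw
    have h7 : ‖w - GaussianInt.toComplex z‖ ≤ 3 / 2 := by nlinarith [norm_nonneg (w - GaussianInt.toComplex z)]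
    have h8 := abs_le.mp ((abs_norm_sub_norm_le w (GaussianInt.toComplex z)).trans h7)
    have h9 : R ≤ ‖w‖ := by linarith
    have h10 : 1 ≤ ‖w‖ ^ 2 * y := by
      have : R ^ 2 * y = 1 := by rw [hRy]; field_simp
      nlinarith
    rw [fw, max_eq_left (by linarith)]; simp
  have hfz : ∀ z, chi m z * (max 0 (1 - nrm z * y) : ℝ) = fw m y (GaussianInt.toComplex z) := by
    intro z; rw [nrm_norm]; rfl
  have hvol : ∀ z, volume.real (cell z) = 1 := fun z => by rw [Measure.real, cell_vol]; simp
  have hz0 : ‖∫ w in cell 0, fw m y w‖ ≤ 1 := by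
    have := norm_setIntegral_le_of_norm_le_const (s := cell 0) (f := fw m y) (C := 1) (μ := volume)
      (by rw [cell_vol]; simp) (fun w hw => by
        rw [fw, norm_mul, Complex.norm_real, Real.norm_eq_abs, abs_of_nonneg (le_max_left _ _)]
        have h1 : max 0 (1 - ‖w‖ ^ 2 * y) ≤ 1 := max_le zero_le_one (by
          have : 0 ≤ ‖w‖ ^ 2 * y := by positivity
          linarith)
        have h2 : ‖(w / (‖w‖ : ℂ)) ^ m‖ ≤ 1 := by
          rcases eq_or_ne w 0 with rfl | hw
          · rcases eq_or_ne m 0 with rfl | hm <;> simp [zero_zpow, *]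
          · have := norm_ne_zero_iff.mpr hw
            simp [norm_zpow, div_self this]
        exact mul_le_one₀ h2 (le_max_left _ _) h1)
    rwa [hvol, mul_one] at this
  rw [hcells, hT, Finset.sum_insert h0T, sub_add_eq_sub_sub_swap, ← Finset.sum_sub_distrib]
  refine (norm_sub_le _ _).trans ?_
  obtain ⟨M, hM1, hM2⟩ : ∃ M : ℕ, N ≤ M ^ 2 ∧ (M:ℝ) ≤ 5 * R := by
    refine ⟨⌈4 * R⌉₊, ?_, ?_⟩
    · have h1 : 4 * R ≤ ⌈4 * R⌉₊ := Nat.le_ceil _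
      have : (N:ℝ) ≤ (⌈4 * R⌉₊ : ℝ) ^ 2 := by nlinarith
      exact_mod_cast this
    · have := Nat.ceil_lt_add_one (show 0 ≤ 4 * R by positivity)
      linarith
  have hsum := sum_inv_norm N M hM1
  have hterm : ∀ z ∈ Sle N, ‖chi m z * (max 0 (1 - nrm z * y) : ℝ) - ∫ w in cell z, fw m y w‖ ≤
      (3 * |(m:ℝ)| + 60) * (1 / ‖GaussianInt.toComplex z‖) := by
    intro z hz
    rw [mem_Sle] at hz
    have h1 : chi m z * (max 0 (1 - nrm z * y) : ℝ) - ∫ w in cell z, fw m y w =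
        ∫ w in cell z, (fw m y (GaussianInt.toComplex z) - fw m y w) := by
      rw [integral_sub (by rw [integrable_const_iff]; right
                           exact ⟨by rw [Measure.restrict_apply_univ, cell_vol]; simp⟩)
        (fw_int m hy).integrableOn, hfz, setIntegral_const, hvol, one_smul]
    rw [h1]
    have h2 := norm_setIntegral_le_of_norm_le_const (s := cell z) (μ := volume)
      (f := fun w => fw m y (GaussianInt.toComplex z) - fw m y w) (by rw [cell_vol]; simp) (fun w hw => by rw [norm_sub_rev]; exact cell_bound m hy hz.1 hw)
    rw [hvol, mul_one] at h2
    refine h2.trans ?_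
    rw [add_mul]
    refine add_le_add le_rfl ?_
    have hzp := norm_pos_iff.mpr (toC_ne hz.1)
    rw [mul_one_div, le_div_iff₀ hzp]
    have h3 : ‖GaussianInt.toComplex z‖ ^ 2 ≤ 10 * R ^ 2 := by
      rw [← nrm_norm]; exact le_trans (by exact_mod_cast hz.2) hNu
    have : R ^ 2 * y = 1 := by rw [hRy]; field_simp
    nlinarith
  have h3 : ‖∑ z ∈ Sle N, (chi m z * (max 0 (1 - nrm z * y) : ℝ) - ∫ w in cell z, fw m y w)‖ ≤
      (3 * |(m:ℝ)| + 60) * (8 * M) := by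
    refine (norm_sum_le_of_le _ hterm).trans ?_
    rw [← Finset.mul_sum]
    gcongr
  have h4 : 3000 * (1 + |(m:ℝ)|) / Real.sqrt y = 3000 * (1 + |(m:ℝ)|) * R := by rw [hR]; ring
  rw [h4]
  have := abs_nonneg (m:ℝ)
  have h5 : (3 * |(m:ℝ)| + 60) * (8 * M) ≤ (3 * |(m:ℝ)| + 60) * (8 * (5 * R)) := by gcongr
  nlinarith [mul_nonneg this (by linarith : 0 ≤ R)]

open MeasureTheory
open Filter Topology Set in
lemma ker_mellin {s : ℂ} (hs : 0 < s.re) :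
    HasMellin (fun t : ℝ => ((max 0 (1 - t) : ℝ) : ℂ)) s (1 / (s * (s + 1))) := by
  have h1 := hasMellin_one_Ioc hs
  have h2 := hasMellin_cpow_Ioc 1 (s := s) (by simp; linarith)
  have h3 := hasMellin_sub h1.1 h2.1
  rw [h1.2, h2.2] at h3
  have e : (fun t : ℝ => (Ioc (0:ℝ) 1).indicator (fun _ => (1:ℂ)) t - (Ioc (0:ℝ) 1).indicator (fun t => (t:ℂ) ^ (1:ℂ)) t)
      = (Ioi (0:ℝ)).indicator (fun t : ℝ => ((max 0 (1 - t) : ℝ) : ℂ)) := by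
    ext t
    by_cases h : t ∈ Ioi (0:ℝ)
    · rw [indicator_of_mem h]
      by_cases h' : t ≤ 1
      · rw [indicator_of_mem (show t ∈ Ioc (0:ℝ) 1 from ⟨h, h'⟩), indicator_of_mem (show t ∈ Ioc (0:ℝ) 1 from ⟨h, h'⟩), max_eq_right (by linarith)]; simp
      · rw [indicator_of_notMem (fun q => h' q.2), indicator_of_notMem (fun q => h' q.2), max_eq_left (by linarith)]; simp
    · rw [indicator_of_notMem h, indicator_of_notMem (fun q => h q.1), indicator_of_notMem (fun q => h q.1)]; simp
  rw [e] at h3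
  have e2 : ∀ t ∈ Ioi (0:ℝ), (t:ℂ) ^ (s-1) • (Ioi (0:ℝ)).indicator (fun t : ℝ => ((max 0 (1 - t) : ℝ) : ℂ)) t = (t:ℂ) ^ (s-1) • ((max 0 (1 - t) : ℝ) : ℂ) := by
    intro t ht; rw [indicator_of_mem ht]
  constructor
  · exact (integrableOn_congr_fun e2 measurableSet_Ioi).mp h3.1
  · have := h3.2
    rw [mellin, setIntegral_congr_fun measurableSet_Ioi e2] at this
    rw [mellin, this]
    have a1 : s ≠ 0 := by rintro rfl; simp at hs
    have a2 : s + 1 ≠ 0 := by intro h; have := congrArg Complex.re h; simp at this; linarith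
    field_simp; ring

noncomputable def gg (a : ℕ → ℂ) (y : ℝ) : ℂ := ∑' n, a n * (max 0 (1 - n * y) : ℝ)

lemma gg_eq (a : ℕ → ℂ) {y : ℝ} {N : ℕ} (hy : 0 < y) (h : 1 ≤ N * y) :
    gg a y = ∑ n ∈ Finset.range (N + 1), a n * (max 0 (1 - n * y) : ℝ) := by
  refine tsum_eq_sum fun n hn => ?_
  have : (N:ℝ) ≤ n := by
    simp at hn; exact_mod_cast (by omega : N ≤ n)
  rw [max_eq_left (by nlinarith)]; simp

open Filter Topology in
lemma gg_cont (a : ℕ → ℂ) {y : ℝ} (hy : 0 < y) : ContinuousAt (gg a) y := by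
  obtain ⟨N, hN⟩ := exists_nat_ge (2 / y)
  have : gg a =ᶠ[𝓝 y] fun y => ∑ n ∈ Finset.range (N + 1), a n * (max 0 (1 - n * y) : ℝ) := by
    filter_upwards [lt_mem_nhds (show y / 2 < y by linarith)] with z hz
    refine gg_eq a (by linarith) ?_
    rw [div_le_iff₀ hy] at hN
    nlinarith [Nat.cast_nonneg (α := ℝ) N]
  rw [continuousAt_congr this]
  fun_prop

lemma gg_zero (a : ℕ → ℂ) (ha : a 0 = 0) {y : ℝ} (hy : 1 ≤ y) : gg a y = 0 := by
  rw [gg_eq a (N := 1) (by linarith) (by simpa using hy)]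
  simp [Finset.sum_range_succ, ha, hy]

lemma gg_bound (a : ℕ → ℂ) (ha : a 0 = 0) {c : ℝ} (hc : 1 < c) (hs : LSeriesSummable a c) {y : ℝ} (hy : 0 < y) :
    ‖gg a y‖ ≤ (∑' n, ‖LSeries.term a c n‖) * y ^ (-c) := by
  rw [← tsum_mul_right]
  refine tsum_of_norm_bounded ((hs.norm.mul_right _).hasSum) fun n => ?_
  rcases eq_or_ne n 0 with rfl | hn
  · simp [ha]
  have hn' : (0:ℝ) < n := by positivity
  rw [LSeries.norm_term_eq, if_neg hn, norm_mul, Complex.norm_real, Complex.ofReal_re, div_mul_eq_mul_div, mul_div_assoc]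
  gcongr
  rw [Real.norm_of_nonneg (le_max_left _ _), Real.rpow_neg hy.le, inv_eq_one_div, div_div, ← Real.mul_rpow hy.le hn'.le]
  refine max_le (by positivity) ?_
  by_cases h : 1 ≤ y * n
  · exact le_trans (by nlinarith) (by positivity : (0:ℝ) ≤ _)
  · push Not at h
    rw [le_div_iff₀ (by positivity)]
    have := Real.rpow_le_one (by positivity) h.le (by linarith : 0 ≤ c)
    have h0 : 0 < (y * n) ^ c := by positivity
    nlinarith

open Filter Topology Set in
lemma gg_mellin (a : ℕ → ℂ) (ha : a 0 = 0) (hs : ∀ s : ℂ, 1 < s.re → LSeriesSummable a s) {s : ℂ} (h : 1 < s.re) :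
    HasMellin (gg a) s (LSeries a s / (s * (s + 1))) := by
  have hk := ker_mellin (s := s) (by linarith)
  have hloc : LocallyIntegrableOn (gg a) (Ioi 0) := by
    refine ContinuousOn.locallyIntegrableOn (fun y hy => (gg_cont a hy).continuousWithinAt) measurableSet_Ioi
  constructor
  · refine mellinConvergent_of_isBigO_rpow (a := s.re + 1) (b := (1 + s.re)/2) hloc ?_ (by linarith) ?_ (by linarith)
    · refine Asymptotics.IsBigO.of_bound 1 ?_
      filter_upwards [eventually_ge_atTop 1] with y hy
      rw [gg_zero a ha hy]; simp
    · refine Asymptotics.IsBigO.of_bound (∑' n, ‖LSeries.term a ((1 + s.re)/2 : ℝ) n‖) ?_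
      filter_upwards [self_mem_nhdsWithin] with y hy
      rw [Real.norm_of_nonneg (by have : (0:ℝ) < y := hy; positivity)]
      exact gg_bound a ha (by linarith) (hs _ (by simp; linarith)) hy
  · set G : ℝ → ℝ := fun x => ‖(x:ℂ) ^ (s - 1) • ((max 0 (1 - x) : ℝ) : ℂ)‖ with hG
    set F : ℕ → ℝ → ℂ := fun n t => a n * ((t:ℂ) ^ (s - 1) • ((max 0 (1 - n * t) : ℝ) : ℂ)) with hF
    have hFi : ∀ n, IntegrableOn (F n) (Ioi 0) := by
      intro n
      rcases eq_or_ne n 0 with rfl | hn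
      · simp [hF, ha]
      · exact (((MellinConvergent.comp_mul_left (a := n) (by positivity)).mpr hk.1).const_mul (a n))
    have hFv : ∀ n, ∫ t in Ioi 0, F n t = LSeries.term a s n * (1 / (s * (s + 1))) := by
      intro n
      rcases eq_or_ne n 0 with rfl | hn
      · simp [hF, ha]
      · rw [integral_const_mul]
        have := mellin_comp_mul_left (fun t : ℝ => ((max 0 (1 - t) : ℝ) : ℂ)) s (a := n) (by positivity)
        rw [hk.2, mellin] at this
        rw [this, LSeries.term_of_ne_zero hn, smul_eq_mul, Complex.cpow_neg]
        push_cast; ring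
    have hFn : ∀ n, ∫ t in Ioi 0, ‖F n t‖ = ‖LSeries.term a s n‖ * ∫ t in Ioi 0, G t := by
      intro n
      rcases eq_or_ne n 0 with rfl | hn
      · simp [hF, ha]
      · have hn' : (0:ℝ) < n := by positivity
        have := integral_comp_mul_left_Ioi G 0 hn'
        rw [mul_zero] at this
        have e : ∀ t ∈ Ioi (0:ℝ), ‖F n t‖ = (‖a n‖ * (n:ℝ) ^ (1 - s.re)) * G (n * t) := by
          intro t ht
          have ht : 0 < t := ht
          simp only [hF, hG, norm_mul, norm_smul, Complex.norm_cpow_eq_rpow_re_of_pos ht, Complex.norm_cpow_eq_rpow_re_of_pos (mul_pos hn' ht)]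
          rw [Real.mul_rpow hn'.le ht.le]
          have : (n:ℝ) ^ (1 - s.re) * (n:ℝ) ^ ((s - 1).re) = 1 := by
            rw [← Real.rpow_add hn']; simp
          linear_combination (-‖a n‖ * t ^ (s - 1).re * ‖((max 0 (1 - n * t) : ℝ) : ℂ)‖) * this
        rw [setIntegral_congr_fun measurableSet_Ioi e, integral_const_mul, this, LSeries.norm_term_eq, if_neg hn,
          Real.rpow_sub hn', Real.rpow_one, smul_eq_mul]
        field_simp
    have := hasSum_integral_of_summable_integral_norm (μ := volume.restrict (Ioi 0)) (F := F) hFi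
      (by simp_rw [hFn]; exact (hs s h).norm.mul_right _)
    simp_rw [hFv] at this
    have h2 := ((hs s h).hasSum.mul_right (1 / (s * (s + 1)))).unique this
    rw [mellin, div_eq_mul_one_div, LSeries, h2]
    refine setIntegral_congr_fun measurableSet_Ioi fun t ht => ?_
    simp only [hF, gg, smul_eq_mul]
    rw [← tsum_mul_left]
    refine tsum_congr fun n => by ring

open MeasureTheory
lemma Sn_zero : Sn 0 = ∅ := by
  ext z; rw [mem_Sn]; constructor
  · rintro ⟨h, h'⟩; have := nrm_pos h; omega
  · simp
lemma fib_zero (w : GaussianInt → ℂ) : fib w 0 = 0 := by simp [fib, Sn_zero]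

lemma card_Sle (n : ℕ) : ((Sle n).card : ℝ) ≤ 32 * n := by
  rcases Nat.eq_zero_or_pos n with rfl | hn
  · have : Sle 0 = ∅ := by
      ext z; rw [mem_Sle]; constructor
      · rintro ⟨h, h'⟩; have := nrm_pos h; omega
      · simp
    simp [this]
  have h1 := sum_inv_norm n (Nat.sqrt n + 1) (by have := Nat.lt_succ_sqrt n; rw [sq]; exact this.le)
  have hs : (Nat.sqrt n : ℝ) ^ 2 ≤ n := by exact_mod_cast Nat.sqrt_le' n
  have hs1 : (1:ℝ) ≤ Nat.sqrt n := by exact_mod_cast Nat.sqrt_pos.mpr hn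
  set M : ℝ := ((Nat.sqrt n + 1 : ℕ) : ℝ) with hM
  have hM' : M = Nat.sqrt n + 1 := by simp [hM]
  have h2 : ∑ z ∈ Sle n, 1 / M ≤ ∑ z ∈ Sle n, 1 / ‖GaussianInt.toComplex z‖ := by
    refine Finset.sum_le_sum fun z hz => ?_
    rw [mem_Sle] at hz
    refine one_div_le_one_div_of_le (norm_pos_iff.mpr (toC_ne hz.1)) ?_
    have h3 : (n:ℝ) ≤ M ^ 2 := by rw [hM]; exact_mod_cast (by have := Nat.lt_succ_sqrt n; rw [sq]; exact this.le)
    have h4 : (nrm z : ℝ) ≤ n := by exact_mod_cast hz.2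
    rw [nrm_norm] at h4
    exact abs_le_of_sq_le_sq' (by linarith) (by positivity) |>.2
  rw [Finset.sum_const, nsmul_eq_mul] at h2
  have h5 := h2.trans h1
  rw [mul_one_div, div_le_iff₀ (by positivity)] at h5
  nlinarith

lemma fib_norm (w : GaussianInt → ℂ) (v : GaussianInt → ℝ) (h : ∀ z, z ≠ 0 → ‖w z‖ ≤ v z) (n : ℕ) :
    ‖fib w n‖ ≤ (1/4) * ∑ z ∈ Sn n, v z := by
  rw [fib, norm_mul]
  have : ‖(1/4:ℂ)‖ = 1/4 := by norm_num
  rw [this]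
  gcongr
  exact norm_sum_le_of_le _ fun z hz => h z (mem_Sn.mp hz).1

lemma aa_norm (m : ℤ) (n : ℕ) : ‖aa m n‖ ≤ (1/4) * (Sn n).card := by
  refine (fib_norm _ (fun _ => 1) (fun z hz => (norm_chi m hz).le) n).trans (by simp)

lemma aa_zero_eq (n : ℕ) : aa 0 n = (((1/4) * (Sn n).card : ℝ) : ℂ) := by simp [aa, fib, chi_zero]

noncomputable def lamr (n : ℕ) : ℝ := (1/4) * ∑ z ∈ Sn n, vM z
lemma lam_zero_eq (n : ℕ) : lam 0 n = (lamr n : ℂ) := by simp [lam, fib, chi_zero, lamr]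
lemma lamr_nonneg (n : ℕ) : 0 ≤ lamr n := mul_nonneg (by norm_num) (Finset.sum_nonneg fun z _ => vM_nonneg z)
lemma lam_norm (m : ℤ) (n : ℕ) : ‖lam m n‖ ≤ lamr n := by
  refine fib_norm _ _ (fun z hz => ?_) n
  rw [norm_mul, norm_chi m hz, Complex.norm_real, Real.norm_of_nonneg (vM_nonneg z), mul_one]
lemma lamr_le (n : ℕ) : lamr n ≤ Real.log n * ((1/4) * (Sn n).card) := by
  have : ∑ z ∈ Sn n, vM z ≤ ∑ z ∈ Sn n, Real.log n := Finset.sum_le_sum fun z hz => by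
    have := vM_le z; rwa [(mem_Sn.mp hz).2] at this
  rw [Finset.sum_const, nsmul_eq_mul] at this
  rw [lamr]; linarith

lemma sum_card_Sn (n : ℕ) : ∑ k ∈ Finset.Icc 1 n, ((1/4) * (Sn k).card : ℝ) ≤ 8 * n := by
  have h := sum_fib (fun _ => 1) (fun _ => 1) n
  have h2 : (∑ k ∈ Finset.range (n+1), ((1/4) * (Sn k).card : ℝ)) = (1/4) * (Sle n).card := by
    have : ((∑ k ∈ Finset.range (n+1), ((1/4) * (Sn k).card : ℝ) : ℝ) : ℂ) = ((1/4) * (Sle n).card : ℝ) := by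
      push_cast; simpa [fib] using h
    exact_mod_cast this
  have h3 : ∑ k ∈ Finset.Icc 1 n, ((1/4) * (Sn k).card : ℝ) ≤ ∑ k ∈ Finset.range (n+1), ((1/4) * (Sn k).card : ℝ) := by
    refine Finset.sum_le_sum_of_subset_of_nonneg (fun k hk => ?_) (fun _ _ _ => by positivity)
    simp at hk ⊢; omega
  have := card_Sle n
  linarith

lemma aa_summable (m : ℤ) {s : ℂ} (hs : 1 < s.re) : LSeriesSummable (aa m) s := by
  refine LSeriesSummable_of_sum_norm_bigO (r := 1) (Asymptotics.IsBigO.of_bound 8 (Filter.Eventually.of_forall fun n => ?_)) (by norm_num) hs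
  rw [Real.norm_of_nonneg (Finset.sum_nonneg fun _ _ => norm_nonneg _), Real.rpow_one, Real.norm_natCast]
  exact (Finset.sum_le_sum fun k _ => aa_norm m k).trans (sum_card_Sn n)

lemma aa_absc (m : ℤ) {s : ℂ} (hs : 1 < s.re) : LSeries.abscissaOfAbsConv (aa m) < s.re := by
  have : LSeries.abscissaOfAbsConv (aa m) ≤ (1:ℝ) := LSeries.abscissaOfAbsConv_le_of_forall_lt_LSeriesSummable
    (fun y hy => aa_summable m (by simpa using hy))
  exact this.trans_lt (by exact_mod_cast hs)

lemma lam_summable (m : ℤ) {s : ℂ} (hs : 1 < s.re) : LSeriesSummable (lam m) s := by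
  refine (LSeriesSummable_logMul_of_lt_re (aa_absc 0 hs)).norm.of_norm_bounded fun n => ?_
  refine LSeries.norm_term_le _ ?_
  refine (lam_norm m n).trans ((lamr_le n).trans (le_of_eq ?_))
  rw [LSeries.logMul, aa_zero_eq, norm_mul, ← Complex.natCast_log, Complex.norm_real, Complex.norm_real, Real.norm_of_nonneg (Real.log_natCast_nonneg n), Real.norm_of_nonneg (by positivity)]

noncomputable def pp (y : ℝ) : ℝ := max 0 (1 - y) ^ 2 / (2 * y)

lemma pp_cont {y : ℝ} (hy : 0 < y) : ContinuousAt pp y := by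
  unfold pp
  refine ContinuousAt.div (by fun_prop) (by fun_prop) (by positivity)

open Set in
lemma pp_mellin {s : ℂ} (hs : 1 < s.re) : HasMellin (fun t => (pp t : ℂ)) s (1 / ((s - 1) * (s * (s + 1)))) := by
  have h1 := hasMellin_const_smul (hasMellin_one_Ioc (s := s) (by linarith)).1 (2:ℂ)
  have h2 := hasMellin_cpow_Ioc 1 (s := s) (by simp; linarith)
  have h0 := hasMellin_cpow_Ioc (-1) (s := s) (by simp; linarith)
  have h3 := hasMellin_sub h0.1 h1.1
  have h4 := hasMellin_add h3.1 h2.1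
  have h5 := hasMellin_const_smul h4.1 (1/2:ℂ)
  rw [h4.2, h3.2, h1.2, h0.2, h2.2, (hasMellin_one_Ioc (s := s) (by linarith)).2] at h5
  have e2 : ∀ t ∈ Ioi (0:ℝ), (t:ℂ) ^ (s-1) • ((1/2:ℂ) • ((Ioc (0:ℝ) 1).indicator (fun t => (t:ℂ) ^ (-1:ℂ)) t - (2:ℂ) • (Ioc (0:ℝ) 1).indicator (fun _ => (1:ℂ)) t
      + (Ioc (0:ℝ) 1).indicator (fun t => (t:ℂ) ^ (1:ℂ)) t)) = (t:ℂ) ^ (s-1) • (pp t : ℂ) := by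
    intro t ht
    congr 1
    have ht0 : (t:ℂ) ≠ 0 := by exact_mod_cast (ne_of_gt ht)
    by_cases h' : t ≤ 1
    · have hm : t ∈ Ioc (0:ℝ) 1 := ⟨ht, h'⟩
      rw [indicator_of_mem hm, indicator_of_mem hm, indicator_of_mem hm, pp, max_eq_right (by linarith), Complex.cpow_neg_one]
      push_cast; simp; field_simp; ring
    · have hm : t ∉ Ioc (0:ℝ) 1 := fun q => h' q.2
      rw [indicator_of_notMem hm, indicator_of_notMem hm, indicator_of_notMem hm, pp, max_eq_left (by linarith)]
      simp
  constructor
  · exact (integrableOn_congr_fun e2 measurableSet_Ioi).mp h5.1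
  · have := h5.2
    rw [mellin, setIntegral_congr_fun measurableSet_Ioi e2] at this
    rw [mellin, this]
    have a1 : s ≠ 0 := by rintro rfl; simp at hs; linarith
    have a2 : s + 1 ≠ 0 := by intro h; have := congrArg Complex.re h; simp at this; linarith
    have a3 : s - 1 ≠ 0 := by intro h; have := congrArg Complex.re h; simp at this; linarith
    simp only [smul_eq_mul, ← sub_eq_add_neg]
    field_simp; ring

noncomputable def dlt (m : ℤ) : ℝ := if m = 0 then 1 else 0

noncomputable def rr (m : ℤ) (y : ℝ) : ℂ := gg (aa m) y - (2 * kap * dlt m : ℝ) • (pp y : ℂ)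

lemma rr_zero (m : ℤ) {y : ℝ} (hy : 1 ≤ y) : rr m y = 0 := by
  rw [rr, gg_zero (aa m) (fib_zero _) hy, pp, max_eq_left (by linarith)]; simp

lemma rr_bound : ∃ C > 0, ∀ (m : ℤ) (y : ℝ), 0 < y → ‖rr m y‖ ≤ C * (1 + |(m:ℝ)|) * y ^ (-(1/2) : ℝ) := by
  refine ⟨750 + 2 * kap, by have := kap_pos; positivity, fun m y hy => ?_⟩
  have hk := kap_pos
  have hm : 0 ≤ |(m:ℝ)| := abs_nonneg _
  rcases le_total 1 y with h1 | h1
  · rw [rr_zero m h1]; simp; positivity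
  have hN : 1 ≤ (⌈9 / y⌉₊ : ℝ) * y := by
    have := Nat.le_ceil (9 / y)
    rw [div_le_iff₀ hy] at this; linarith
  have h2 := lattice_bound m hy h1
  have h3 := sum_fib (chi m) (fun n => (max 0 (1 - n * y) : ℝ)) ⌈9 / y⌉₊
  rw [rr, gg_eq _ hy hN, aa, h3]
  have e : (∫ w, fw m y w) = (4 * (dlt m * kap / y) : ℝ) := by
    rcases eq_or_ne m 0 with rfl | h
    · rw [fw_integral_zero hy]; simp [dlt]; ring
    · rw [fw_integral_ne h]; simp [dlt, h]
  rw [e] at h2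
  have hp : |2 * pp y - 1 / y| ≤ 2 := by
    rw [pp, max_eq_right (by linarith)]
    have : 2 * ((1 - y) ^ 2 / (2 * y)) - 1 / y = y - 2 := by field_simp; ring
    rw [this, abs_le]; constructor <;> linarith
  set S := ∑ z ∈ Sle ⌈9 / y⌉₊, chi m z * ((max 0 (1 - (nrm z) * y) : ℝ) : ℂ)
  have e2 : 1 / 4 * S - (2 * kap * dlt m : ℝ) • (pp y : ℂ) = (1/4) * (S - (4 * (dlt m * kap / y) : ℝ)) - ((kap * dlt m) * (2 * pp y - 1 / y) : ℝ) := by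
    simp only [Complex.real_smul]; push_cast; ring
  rw [e2]
  have hd : 0 ≤ dlt m ∧ dlt m ≤ 1 := by unfold dlt; split_ifs <;> norm_num
  refine (norm_sub_le _ _).trans ?_
  rw [norm_mul, Complex.norm_real, Real.norm_eq_abs, abs_mul, abs_of_nonneg (mul_nonneg hk.le hd.1)]
  have h4 : ‖(1/4:ℂ)‖ = 1/4 := by norm_num
  rw [h4]
  have h5 : y ^ (-(1/2) : ℝ) = 1 / √y := by rw [Real.rpow_neg hy.le, Real.sqrt_eq_rpow]; simp
  have h6 : 1 ≤ 1 / √y := by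
    rw [le_div_iff₀ (by positivity), one_mul]; exact Real.sqrt_le_one.mpr h1
  rw [h5]
  have h7 : kap * dlt m * |2 * pp y - 1 / y| ≤ kap * 1 * 2 := by gcongr; exact hd.2
  have h8 : 2 * kap * 1 * 1 ≤ 2 * kap * (1 + |(m:ℝ)|) * (1/√y) := by gcongr; linarith
  have h9 : 3000*(1+|(m:ℝ)|)/√y = 3000 * ((1 + |(m:ℝ)|) * (1/√y)) := by ring
  rw [h9] at h2
  nlinarith

noncomputable def HH (m : ℤ) (s : ℂ) : ℂ := mellin (rr m) s

lemma rr_cont (m : ℤ) {y : ℝ} (hy : 0 < y) : ContinuousAt (rr m) y := by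
  unfold rr
  have := pp_cont hy
  have h2 := gg_cont (aa m) hy
  fun_prop

open Filter Set Topology in
lemma HH_diff (m : ℤ) {s : ℂ} (hs : 1/2 < s.re) : DifferentiableAt ℂ (HH m) s := by
  obtain ⟨C, hC, hb⟩ := rr_bound
  refine mellin_differentiableAt_of_isBigO_rpow (a := s.re + 1) (b := 1/2)
    (ContinuousOn.locallyIntegrableOn (fun y hy => (rr_cont m hy).continuousWithinAt) measurableSet_Ioi) ?_ (by linarith) ?_ hs
  · refine Asymptotics.IsBigO.of_bound 1 ?_
    filter_upwards [eventually_ge_atTop 1] with y hy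
    rw [rr_zero m hy]; simp
  · refine Asymptotics.IsBigO.of_bound (C * (1 + |(m:ℝ)|)) ?_
    filter_upwards [self_mem_nhdsWithin] with y hy
    have hy : (0:ℝ) < y := hy
    rw [Real.norm_of_nonneg (by positivity)]
    exact hb m y hy

open Set in
lemma HH_bound : ∃ C > 0, ∀ (m : ℤ) (s : ℂ), 1/2 < s.re → ‖HH m s‖ ≤ C * (1 + |(m:ℝ)|) / (s.re - 1/2) := by
  obtain ⟨C, hC, hb⟩ := rr_bound
  refine ⟨C, hC, fun m s hs => ?_⟩
  have hi : IntervalIntegrable (fun t : ℝ => t ^ (s.re - 3/2)) volume 0 1 := intervalIntegral.intervalIntegrable_rpow' (by linarith)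
  have hv : ∫ t in Ioc (0:ℝ) 1, t ^ (s.re - 3/2) = 1 / (s.re - 1/2) := by
    rw [← intervalIntegral.integral_of_le zero_le_one, integral_rpow (Or.inl (by linarith)), Real.one_rpow, Real.zero_rpow (by linarith)]
    ring_nf
  have hi2 : IntegrableOn (fun t : ℝ => t ^ (s.re - 3/2)) (Ioc 0 1) := (intervalIntegrable_iff_integrableOn_Ioc_of_le zero_le_one).mp hi
  have := norm_integral_le_of_norm_le (μ := volume.restrict (Ioi (0:ℝ))) (f := fun t : ℝ => (t:ℂ) ^ (s - 1) • rr m t)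
    (g := (Ioc (0:ℝ) 1).indicator (fun t => (C * (1 + |(m:ℝ)|)) * t ^ (s.re - 3/2)))
    (by
      rw [integrable_indicator_iff measurableSet_Ioc, IntegrableOn, Measure.restrict_restrict_of_subset Ioc_subset_Ioi_self]
      exact hi2.const_mul _)
    (by
      refine (ae_restrict_iff' measurableSet_Ioi).mpr (Filter.Eventually.of_forall fun t ht => ?_)
      have ht : 0 < t := ht
      rcases le_or_gt t 1 with h1 | h1
      · rw [indicator_of_mem (show t ∈ Ioc (0:ℝ) 1 from ⟨ht, h1⟩), norm_smul, Complex.norm_cpow_eq_rpow_re_of_pos ht]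
        have e : s.re - 3/2 = (s - 1).re + (-(1/2)) := by simp; ring
        rw [e, Real.rpow_add ht]
        have := mul_le_mul_of_nonneg_left (hb m t ht) (by positivity : 0 ≤ t ^ (s-1).re)
        linarith
      · rw [rr_zero m h1.le, smul_zero, norm_zero]
        exact indicator_nonneg (fun x hx => by have := hx.1; positivity) _)
  rw [integral_indicator measurableSet_Ioc, Measure.restrict_restrict_of_subset Ioc_subset_Ioi_self, integral_const_mul, hv] at this
  rw [HH, mellin]
  refine this.trans (le_of_eq (by ring))

lemma ne_of_re {s : ℂ} (hs : 1 < s.re) : s ≠ 0 ∧ s + 1 ≠ 0 ∧ s - 1 ≠ 0 := by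
  refine ⟨?_, ?_, ?_⟩ <;> (intro h; have := congrArg Complex.re h; simp at this; linarith)

lemma HH_eq (m : ℤ) {s : ℂ} (hs : 1 < s.re) :
    s * (s + 1) * HH m s = LSeries (aa m) s - 2 * kap * dlt m / (s - 1) := by
  have h1 := gg_mellin (aa m) (fib_zero _) (fun s hs => aa_summable m hs) hs
  have h2 := pp_mellin hs
  have h3 := hasMellin_const_smul h2.1 (2 * kap * dlt m : ℝ)
  have h4 := hasMellin_sub h1.1 h3.1
  obtain ⟨a1, a2, a3⟩ := ne_of_re hs
  rw [h1.2, h3.2, h2.2] at h4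
  have : HH m s = _ := h4.2
  rw [this, Complex.real_smul]
  push_cast
  field_simp

noncomputable def FF (m : ℤ) (s : ℂ) : ℂ := if m = 0 then 2 * kap + s * (s + 1) * (s - 1) * HH 0 s else s * (s + 1) * HH m s

lemma FF_eq (m : ℤ) {s : ℂ} (hs : 1 < s.re) : FF m s = (if m = 0 then s - 1 else 1) * LSeries (aa m) s := by
  have h := HH_eq m hs
  obtain ⟨a1, a2, a3⟩ := ne_of_re hs
  unfold FF
  split_ifs with h0
  · subst h0
    simp only [dlt, if_true, Complex.ofReal_one, mul_one] at h
    field_simp at h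
    linear_combination h
  · simp [dlt, h0] at h
    rw [h, one_mul]

lemma FF_one : FF 0 1 = 2 * kap := by simp [FF]

lemma FF_diff (m : ℤ) {s : ℂ} (hs : 1/2 < s.re) : DifferentiableAt ℂ (FF m) s := by
  have h0 := HH_diff m hs
  unfold FF
  split_ifs with h
  · subst h
    fun_prop
  · fun_prop

lemma FF_bound : ∃ C > 0, ∀ (m : ℤ) (s : ℂ), 3/4 ≤ s.re → ‖FF m s‖ ≤ C * (1 + |(m:ℝ)|) * (1 + ‖s‖) ^ 3 := by
  obtain ⟨C, hC, hb⟩ := HH_bound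
  have hk := kap_pos
  refine ⟨4 * C + 2 * kap, by positivity, fun m s hs => ?_⟩
  have h1 : ‖HH m s‖ ≤ 4 * C * (1 + |(m:ℝ)|) := by
    refine (hb m s (by linarith)).trans ?_
    rw [div_le_iff₀ (by linarith)]
    have : 0 ≤ C * (1 + |(m:ℝ)|) := by positivity
    nlinarith
  have n1 : ‖s‖ ≤ 1 + ‖s‖ := by linarith
  have n2 : ‖s + 1‖ ≤ 1 + ‖s‖ := by refine (norm_add_le _ _).trans ?_; simp; linarith
  have n3 : ‖s - 1‖ ≤ 1 + ‖s‖ := by refine (norm_sub_le _ _).trans ?_; simp; linarith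
  have n4 : 1 ≤ 1 + ‖s‖ := by linarith [norm_nonneg s]
  unfold FF
  split_ifs with h
  · subst h
    refine (norm_add_le _ _).trans ?_
    have e1 : ‖(2 * kap : ℂ)‖ = 2 * kap := by rw [norm_mul, Complex.norm_real, Real.norm_of_nonneg hk.le]; norm_num
    rw [e1, norm_mul, norm_mul, norm_mul]
    have : ‖s‖ * ‖s + 1‖ * ‖s - 1‖ * ‖HH 0 s‖ ≤ (1 + ‖s‖) * (1 + ‖s‖) * (1 + ‖s‖) * (4 * C * (1 + |((0:ℤ):ℝ)|)) := by gcongr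
    have h3 : 1 ≤ (1 + ‖s‖) ^ 3 := one_le_pow₀ n4
    simp at this ⊢
    nlinarith
  · rw [norm_mul, norm_mul]
    have : ‖s‖ * ‖s + 1‖ * ‖HH m s‖ ≤ (1 + ‖s‖) * (1 + ‖s‖) * (4 * C * (1 + |(m:ℝ)|)) := by gcongr
    have h3 : (1 + ‖s‖) ^ 2 ≤ (1 + ‖s‖) ^ 3 := pow_le_pow_right₀ n4 (by norm_num)
    have h4 : 0 ≤ C * (1 + |(m:ℝ)|) := by positivity
    have h5 : 0 ≤ kap * (1 + |(m:ℝ)|) * (1 + ‖s‖) ^ 3 := by positivity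
    nlinarith

open MeasureTheory
lemma aa_one {m : ℤ} (hm : 4 ∣ m) : aa m 1 = 1 := by
  have hS : Sn 1 = ({1, -1, gI * 1, -gI * 1} : Finset GaussianInt) := by
    ext z
    rw [mem_Sn, ← assoc_iff, associated_one_iff_isUnit.symm.trans (Associated.comm) |>.symm]
    constructor
    · rintro ⟨_, h⟩; exact Zsqrtd.norm_eq_one_iff.mp h
    · intro h; exact ⟨h.ne_zero, nrm_unit h⟩
  have hc := card_assoc (q := 1) one_ne_zero
  have h1 : ∀ z ∈ Sn 1, chi m z = 1 := by
    intro z hz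
    obtain ⟨k, rfl⟩ := hm
    have hz4 : z ^ 4 = 1 := by
      rw [hS] at hz
      simp only [Finset.mem_insert, Finset.mem_singleton] at hz
      rcases hz with rfl | rfl | rfl | rfl <;> decide
    have hn : ‖GaussianInt.toComplex z‖ = 1 := by
      have := nrm_norm z
      rw [(mem_Sn.mp hz).2] at this
      have h3 := norm_nonneg (GaussianInt.toComplex z)
      push_cast at this
      nlinarith
    rw [chi, hn, zpow_mul, Complex.ofReal_one, div_one]
    have : (GaussianInt.toComplex z) ^ (4:ℤ) = 1 := by
      have := congrArg GaussianInt.toComplex hz4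
      rw [map_pow, map_one] at this
      exact_mod_cast this
    rw [this, one_zpow]
  rw [aa, fib, Finset.sum_congr rfl h1, hS]
  simp only [Finset.sum_const, nsmul_eq_mul, hc]
  norm_num

lemma absc_lt {f : ℕ → ℂ} (h : ∀ s : ℂ, 1 < s.re → LSeriesSummable f s) {s : ℂ} (hs : 1 < s.re) :
    LSeries.abscissaOfAbsConv f < s.re := by
  have : LSeries.abscissaOfAbsConv f ≤ (1:ℝ) := LSeries.abscissaOfAbsConv_le_of_forall_lt_LSeriesSummable
    (fun y hy => h _ (by simpa using hy))
  exact this.trans_lt (by exact_mod_cast hs)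

noncomputable def DD (m : ℤ) (s : ℂ) : ℂ := LSeries (lam m) s

open LSeries.notation in
lemma L_deriv (m : ℤ) {s : ℂ} (hs : 1 < s.re) :
    HasDerivAt (LSeries (aa m)) (-(DD m s * LSeries (aa m) s)) s := by
  have h := LSeries_hasDerivAt (aa_absc m hs)
  rw [DD, ← LSeries_convolution' (lam_summable m hs) (aa_summable m hs)]
  have : (lam m) ⍟ (aa m) = LSeries.logMul (aa m) := by
    ext n
    rw [LSeries.convolution_def, LSeries.logMul]
    refine (conv_eq m n).trans ?_
    simp
  rw [this]; exact h

noncomputable def pl (m : ℤ) (n : ℕ) : ℂ := lam m n / (Real.log n : ℂ)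

lemma pl_norm (m : ℤ) (n : ℕ) : ‖pl m n‖ ≤ lamr n / Real.log n := by
  rw [pl, norm_div, Complex.norm_real, Real.norm_of_nonneg (Real.log_natCast_nonneg n)]
  exact div_le_div_of_nonneg_right (lam_norm m n) (Real.log_natCast_nonneg n)

lemma pl_zero_eq (n : ℕ) : pl 0 n = ((lamr n / Real.log n : ℝ) : ℂ) := by
  rw [pl, lam_zero_eq]; push_cast; rfl

lemma pl_summable (m : ℤ) {s : ℂ} (hs : 1 < s.re) : LSeriesSummable (pl m) s := by
  refine (aa_summable 0 hs).norm.of_norm_bounded fun n => ?_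
  refine LSeries.norm_term_le _ ((pl_norm m n).trans ?_)
  rw [aa_zero_eq, Complex.norm_real, Real.norm_of_nonneg (by positivity)]
  refine div_le_of_le_mul₀ (Real.log_natCast_nonneg n) (by positivity) ?_
  have := lamr_le n; linarith

lemma pl_deriv (m : ℤ) {s : ℂ} (hs : 1 < s.re) : HasDerivAt (LSeries (pl m)) (-(DD m s)) s := by
  have h := LSeries_hasDerivAt (absc_lt (fun s hs => pl_summable m hs) hs)
  have : LSeries.logMul (pl m) = lam m := by
    ext n
    rw [LSeries.logMul, pl, ← Complex.natCast_log]
    by_cases h : Real.log n = 0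
    · have h1 := lam_norm m n
      have h2 := lamr_le n
      rw [h, zero_mul] at h2
      have : lam m n = 0 := norm_le_zero_iff.mp (h1.trans h2)
      simp [this]
    · have : (Real.log n : ℂ) ≠ 0 := by exact_mod_cast h
      field_simp
  rw [this] at h
  exact h

open Filter Topology in
lemma L_exp {m : ℤ} (hm : 4 ∣ m) {s : ℂ} (hs : 1 < s.re) :
    LSeries (aa m) s = Complex.exp (LSeries (pl m) s) := by
  set g : ℂ → ℂ := fun s => LSeries (aa m) s * Complex.exp (-LSeries (pl m) s)
  have hd : ∀ s : ℂ, 1 < s.re → HasDerivAt g 0 s := by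
    intro s hs
    have := (L_deriv m hs).mul ((pl_deriv m hs).neg.cexp)
    convert! this using 1
    simp; ring
  have hopen : IsOpen {s : ℂ | 1 < s.re} := isOpen_lt continuous_const Complex.continuous_re
  have hpc : IsPreconnected {s : ℂ | 1 < s.re} := (convex_halfSpace_re_gt 1).isPreconnected
  have hconst : ∀ x : ℝ, 1 < x → g x = g s := fun x hx =>
    hopen.is_const_of_deriv_eq_zero hpc (fun z hz => (hd z hz).differentiableAt.differentiableWithinAt)
      (fun z hz => (hd z hz).deriv) (by simpa using hx) hs
  have t1 := LSeries.tendsto_atTop (f := aa m) ((absc_lt (fun s hs => aa_summable m hs) hs).trans (EReal.coe_lt_top _))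
  have t2 := LSeries.tendsto_atTop (f := pl m) ((absc_lt (fun s hs => pl_summable m hs) hs).trans (EReal.coe_lt_top _))
  have hp1 : pl m 1 = 0 := by simp [pl]
  rw [hp1] at t2
  rw [aa_one hm] at t1
  have t3 : Tendsto (fun x : ℝ => g x) atTop (𝓝 (1 * Complex.exp (-0))) :=
    t1.mul ((Complex.continuous_exp.tendsto _).comp t2.neg)
  have t4 : Tendsto (fun x : ℝ => g x) atTop (𝓝 (g s)) := by
    refine tendsto_const_nhds.congr' ?_
    filter_upwards [eventually_gt_atTop 1] with x hx using (hconst x hx).symm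
  have := tendsto_nhds_unique t4 t3
  simp only [g, neg_zero, Complex.exp_zero, mul_one, Complex.exp_neg] at this
  field_simp at this
  exact this

lemma L_ne {m : ℤ} (hm : 4 ∣ m) {s : ℂ} (hs : 1 < s.re) : LSeries (aa m) s ≠ 0 := by
  rw [L_exp hm hs]; exact Complex.exp_ne_zero _

lemma series_le {f : ℕ → ℂ} {g : ℕ → ℝ} (h : ∀ n, ‖f n‖ ≤ g n) {s : ℂ}
    (hg : LSeriesSummable (fun n => (g n : ℂ)) s) :
    ‖LSeries f s‖ ≤ (LSeries (fun n => (g n : ℂ)) (s.re : ℂ)).re := by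
  have hg' : LSeriesSummable (fun n => (g n : ℂ)) (s.re : ℂ) :=
    (LSeriesSummable_iff_of_re_eq_re (by simp)).mp hg
  have h1 : ∀ n, ‖LSeries.term f s n‖ ≤ (LSeries.term (fun n => (g n : ℂ)) (s.re : ℂ) n).re := by
    intro n
    rcases eq_or_ne n 0 with rfl | hn
    · simp
    · rw [LSeries.norm_term_eq, if_neg hn, LSeries.term_of_ne_zero hn]
      have : ((n:ℂ) ^ (s.re:ℂ)) = (((n:ℝ) ^ s.re : ℝ) : ℂ) := by
        rw [Complex.ofReal_cpow (by positivity)]; simp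
      rw [this, ← Complex.ofReal_div, Complex.ofReal_re]
      gcongr; exact h n
  have h2 := (Complex.reCLM.hasSum hg'.hasSum)
  exact tsum_of_norm_bounded h2 h1

lemma L_lower {m : ℤ} (hm : 4 ∣ m) {s : ℂ} (hs : 1 < s.re) :
    1 ≤ ‖LSeries (aa m) s‖ * ‖LSeries (aa 0) (s.re : ℂ)‖ := by
  have hs' : 1 < ((s.re : ℂ)).re := by simpa using hs
  rw [L_exp hm hs, L_exp (dvd_zero 4) hs', Complex.norm_exp, Complex.norm_exp, ← Real.exp_add]
  refine Real.one_le_exp ?_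
  have h0 : pl 0 = fun n => ((lamr n / Real.log n : ℝ) : ℂ) := funext pl_zero_eq
  have h1 := series_le (pl_norm m) (s := s) (by rw [← h0]; exact pl_summable 0 hs)
  rw [← h0] at h1
  have := Complex.abs_re_le_norm (LSeries (pl m) s)
  have := neg_abs_le (LSeries (pl m) s).re
  linarith

lemma DD_le (m : ℤ) {s : ℂ} (hs : 1 < s.re) : ‖DD m s‖ ≤ (DD 0 (s.re : ℂ)).re := by
  have h0 : lam 0 = fun n => (lamr n : ℂ) := funext lam_zero_eq
  have h1 := series_le (lam_norm m) (s := s) (by rw [← h0]; exact lam_summable 0 hs)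
  rwa [← h0] at h1

lemma w341 {w : ℂ} (hw : ‖w‖ = 1) : 0 ≤ 3 + 4 * w.re + (w ^ 2).re := by
  have h : w.re ^ 2 + w.im ^ 2 = 1 := by
    have := Complex.sq_norm w
    rw [hw, Complex.normSq_apply] at this; nlinarith
  rw [sq, Complex.mul_re]
  nlinarith [sq_nonneg (w.re + 1)]

lemma l341 (m : ℤ) {σ : ℝ} (hσ : 1 < σ) (t : ℝ) :
    0 ≤ 3 * (DD 0 (σ:ℂ)).re + 4 * (DD m (σ + t * Complex.I)).re + (DD (2 * m) (σ + 2 * t * Complex.I)).re := by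
  have hs : ∀ (k : ℤ) (τ : ℝ), HasSum (fun n => (LSeries.term (lam k) (σ + τ * Complex.I) n).re) (DD k (σ + τ * Complex.I)).re := by
    intro k τ
    exact Complex.reCLM.hasSum (lam_summable k (s := σ + τ * Complex.I) (by simpa using hσ)).hasSum
  have h0 := hs 0 0
  have h1 := hs m t
  have h2 := hs (2 * m) (2 * t)
  have h3 := ((h0.mul_left 3).add (h1.mul_left 4)).add h2
  have := h3.nonneg (fun n => ?_)
  · convert! this using 3 <;> simp
  rcases eq_or_ne n 0 with rfl | hn
  · simp
  have hn' : (0:ℝ) < n := by positivity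
  have hterm : ∀ (k : ℤ) (τ : ℝ), (LSeries.term (lam k) (σ + τ * Complex.I) n) =
      (1/4) * ∑ z ∈ Sn n, ((vM z * (n:ℝ) ^ (-σ) : ℝ) : ℂ) * (chi k z * (n:ℂ) ^ (-(τ * Complex.I))) := by
    intro k τ
    rw [LSeries.term_of_ne_zero hn, lam, fib, div_eq_mul_inv, ← Complex.cpow_neg, neg_add, Complex.cpow_add _ _ (by exact_mod_cast hn)]
    rw [mul_assoc, Finset.sum_mul]
    congr 1
    refine Finset.sum_congr rfl fun z _ => ?_
    push_cast
    rw [Complex.ofReal_cpow hn'.le]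
    push_cast; ring
  simp only [hterm]
  have hre : ∀ S : ℂ, ((1/4) * S).re = (1/4) * S.re := by intro S; simp
  rw [hre, hre, hre, Complex.re_sum, Complex.re_sum, Complex.re_sum]
  have : 3 * (1 / 4 * ∑ z ∈ Sn n, (((vM z * (n:ℝ) ^ (-σ) : ℝ) : ℂ) * (chi 0 z * (n:ℂ) ^ (-((0:ℝ) * Complex.I)))).re)
      + 4 * (1 / 4 * ∑ z ∈ Sn n, (((vM z * (n:ℝ) ^ (-σ) : ℝ) : ℂ) * (chi m z * (n:ℂ) ^ (-(t * Complex.I)))).re)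
      + 1 / 4 * ∑ z ∈ Sn n, (((vM z * (n:ℝ) ^ (-σ) : ℝ) : ℂ) * (chi (2 * m) z * (n:ℂ) ^ (-((2 * t : ℝ) * Complex.I)))).re
      = 1 / 4 * ∑ z ∈ Sn n, (vM z * (n:ℝ) ^ (-σ)) * (3 + 4 * (chi m z * (n:ℂ) ^ (-(t * Complex.I))).re
        + ((chi m z * (n:ℂ) ^ (-(t * Complex.I))) ^ 2).re) := by
    have e2 : ∀ z, chi (2 * m) z * (n:ℂ) ^ (-((2 * t : ℝ) * Complex.I)) = (chi m z * (n:ℂ) ^ (-(t * Complex.I))) ^ 2 := by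
      intro z
      rw [mul_pow, ← Complex.cpow_nat_mul, chi, chi, mul_comm 2 m, zpow_mul]
      norm_cast
      congr 2
      push_cast; ring
    have e0 : (1 * (n:ℂ) ^ (-((0:ℝ) * Complex.I))).re = 1 := by simp
    simp only [Complex.re_ofReal_mul, e2, chi_zero, e0, Finset.mul_sum, ← Finset.sum_add_distrib]
    refine Finset.sum_congr rfl fun z _ => by ring
  rw [this]
  refine mul_nonneg (by norm_num) (Finset.sum_nonneg fun z hz => ?_)
  refine mul_nonneg (mul_nonneg (vM_nonneg z) (by positivity)) (w341 ?_)
  rw [norm_mul, norm_chi m (mem_Sn.mp hz).1, one_mul, Complex.norm_natCast_cpow_of_pos (by omega)]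
  simp

open MeasureTheory Metric
lemma FF_ne {m : ℤ} (hm : 4 ∣ m) {s : ℂ} (hs : 1 < s.re) : FF m s ≠ 0 := by
  rw [FF_eq m hs]
  refine mul_ne_zero ?_ (L_ne hm hs)
  split_ifs
  · exact (ne_of_re hs).2.2
  · exact one_ne_zero

lemma isOpen_re (a : ℝ) : IsOpen {s : ℂ | a < s.re} := isOpen_lt continuous_const Complex.continuous_re

open Filter Topology in
lemma FF_logderiv {m : ℤ} (hm : 4 ∣ m) {s : ℂ} (hs : 1 < s.re) :
    deriv (FF m) s / FF m s = -DD m s + dlt m / (s - 1) := by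
  have he : FF m =ᶠ[𝓝 s] fun s => (if m = 0 then s - 1 else 1) * LSeries (aa m) s := by
    filter_upwards [(isOpen_re 1).mem_nhds hs] with z hz using FF_eq m hz
  rw [he.deriv_eq, FF_eq m hs]
  have hL := L_ne hm hs
  have h3 := (ne_of_re hs).2.2
  have hd := L_deriv m hs
  by_cases h : m = 0
  · simp only [h, if_true, dlt] at *
    have := ((hasDerivAt_id s).sub_const 1).mul hd
    rw [show (fun s => (s - 1) * LSeries (aa 0) s) = (fun x => id x - 1) * LSeries (aa 0) from rfl, this.deriv]
    simp only [id]; field_simp; push_cast; ring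
  · simp only [h, if_false, dlt, one_mul] at *
    rw [show (fun s => LSeries (aa m) s) = LSeries (aa m) from rfl, hd.deriv]
    field_simp; simp

lemma FF_dcont {m : ℤ} {s : ℂ} (hs : 1/2 < s.re) : ContinuousAt (deriv (FF m)) s := by
  have h : DifferentiableOn ℂ (FF m) {s : ℂ | 1/2 < s.re} := fun z hz => (FF_diff m hz).differentiableWithinAt
  exact ((h.deriv (isOpen_re _)).differentiableAt ((isOpen_re _).mem_nhds hs)).continuousAt

lemma DD_bound : ∃ C > 0, ∀ σ : ℝ, 1 < σ → σ ≤ 2 → (DD 0 (σ:ℂ)).re ≤ 1 / (σ - 1) + C := by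
  have hc : ContinuousOn (fun σ : ℝ => deriv (FF 0) (σ:ℂ) / FF 0 σ) (Set.Icc 1 2) := by
    intro σ hσ
    have h1 : (1/2:ℝ) < (σ:ℂ).re := by simp; linarith [hσ.1]
    have hne : FF 0 σ ≠ 0 := by
      rcases hσ.1.eq_or_lt with h | h
      · rw [← h]; simp [FF_one, kap_pos.ne']
      · exact FF_ne (dvd_zero 4) (by simpa using h)
    have hcoe : ContinuousAt (fun σ : ℝ => (σ:ℂ)) σ := Complex.continuous_ofReal.continuousAt
    exact (ContinuousAt.div (ContinuousAt.comp (f := fun σ : ℝ => (σ:ℂ)) (FF_dcont h1) hcoe)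
      (ContinuousAt.comp (f := fun σ : ℝ => (σ:ℂ)) (FF_diff 0 h1).continuousAt hcoe) hne).continuousWithinAt
  obtain ⟨C, hC⟩ := isCompact_Icc.exists_bound_of_continuousOn hc
  refine ⟨|C| + 1, by positivity, fun σ h1 h2 => ?_⟩
  have h := FF_logderiv (dvd_zero 4) (s := σ) (by simpa using h1)
  have h3 := hC σ ⟨h1.le, h2⟩
  have h4 : DD 0 σ = ((1 / (σ - 1) : ℝ) : ℂ) - deriv (FF 0) (σ:ℂ) / FF 0 σ := by
    rw [h]; simp [dlt]
  rw [h4, Complex.sub_re, Complex.ofReal_re]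
  have h5 := (abs_le.mp (Complex.abs_re_le_norm (deriv (FF 0) (σ:ℂ) / FF 0 σ))).1
  have := le_abs_self C
  linarith

lemma FF_lower : ∃ c > 0, ∀ m : ℤ, 4 ∣ m → ∀ s : ℂ, 1 < s.re → s.re ≤ 2 → c * (s.re - 1) ^ 2 ≤ ‖FF m s‖ := by
  obtain ⟨C, hC, hb⟩ := FF_bound
  refine ⟨1 / (27 * C), by positivity, fun m hm s h1 h2 => ?_⟩
  have h3 := L_lower hm h1
  have hx : 0 < s.re - 1 := by linarith
  have hs' : 1 < ((s.re : ℂ)).re := by simpa using h1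
  have h4 := hb 0 (s.re : ℂ) (by simp; linarith)
  rw [FF_eq 0 hs', if_pos rfl, norm_mul] at h4
  have e1 : ‖(s.re:ℂ) - 1‖ = s.re - 1 := by
    rw [← Complex.ofReal_one, ← Complex.ofReal_sub, Complex.norm_real, Real.norm_of_nonneg hx.le]
  have e2 : ‖(s.re:ℂ)‖ = s.re := by rw [Complex.norm_real, Real.norm_of_nonneg (by linarith)]
  rw [e1, e2] at h4
  have h5 : (1 + s.re) ^ 3 ≤ 27 := by
    have : (1 + s.re) ^ 3 ≤ 3 ^ 3 := by gcongr; linarith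
    linarith
  have h6 : (s.re - 1) * ‖LSeries (aa 0) (s.re:ℂ)‖ ≤ 27 * C := by
    refine h4.trans ?_
    simp; nlinarith
  have h7 : s.re - 1 ≤ ‖LSeries (aa m) s‖ * (27 * C) := by
    have := mul_le_mul_of_nonneg_left h6 (norm_nonneg (LSeries (aa m) s))
    have := mul_le_mul_of_nonneg_left h3 hx.le
    nlinarith
  have h8 : s.re - 1 ≤ ‖(if m = 0 then s - 1 else 1 : ℂ)‖ := by
    split_ifs
    · have := Complex.abs_re_le_norm (s - 1)
      have := le_abs_self (s - 1).re
      simp at *; linarith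
    · simp; linarith
  rw [FF_eq m h1, norm_mul, div_mul_eq_mul_div, one_mul, div_le_iff₀ (by positivity)]
  have := mul_le_mul h8 h7 hx.le (norm_nonneg _)
  nlinarith

lemma ratio : ∃ A > 0, ∀ q X : ℝ, 0 < q → q ≤ 1 → 3 ≤ X → ∀ m : ℤ, 4 ∣ m → |(m:ℝ)| ≤ 2 * X → ∀ s : ℂ,
    |s.im| ≤ 2 * X → q ^ 2 / Real.log X ≤ s.re - 1 → s.re ≤ 21/20 → ∀ z ∈ closedBall s (1/5),
    ‖FF m z‖ ≤ Real.exp (A * Real.log X / q) * ‖FF m s‖ := by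
  obtain ⟨C, hC, hb⟩ := FF_bound
  obtain ⟨c, hc, hl⟩ := FF_lower
  refine ⟨|Real.log (243 * C / c)| + 10, by positivity, fun q X hq hq1 hX m hm hmX s ht hs1 hs2 z hz => ?_⟩
  have hX1 : 1 ≤ Real.log X := by
    rw [Real.le_log_iff_exp_le (by linarith)]
    have := Real.exp_one_lt_d9; linarith
  have hXp : 0 < X := by linarith
  have hpos : 0 < q ^ 2 / Real.log X := by positivity
  rw [mem_closedBall, dist_eq_norm] at hz
  have hzr : |(z - s).re| ≤ 1/5 := (Complex.abs_re_le_norm _).trans hz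
  have hzre : 3/4 ≤ z.re := by
    have := (abs_le.mp hzr).1
    simp at this; linarith
  have hns : ‖s‖ ≤ 21/20 + 2 * X := by
    refine (Complex.norm_le_abs_re_add_abs_im s).trans ?_
    rw [abs_of_nonneg (by linarith)]; linarith
  have hnz : ‖z‖ ≤ 1/5 + (21/20 + 2 * X) := by
    have := norm_add_le (z - s) s
    rw [sub_add_cancel] at this; linarith
  have h1 := hb m z hzre
  have h2 : ‖FF m z‖ ≤ C * (3 * X) * (3 * X) ^ 3 := by
    refine h1.trans ?_
    gcongr
    · linarith
    · linarith
  have h3 := hl m hm s (by linarith) (by linarith)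
  have h4 : c * (q ^ 2 / Real.log X) ^ 2 ≤ ‖FF m s‖ := by
    refine le_trans ?_ h3
    gcongr
  have h5 : c * (q ^ 2 / X) ^ 2 ≤ ‖FF m s‖ := by
    refine le_trans ?_ h4
    gcongr
    exact (Real.log_le_sub_one_of_pos hXp).trans (by linarith)
  have h6 : 243 * C / c * (X ^ 6 * (1/q) ^ 4) ≤ Real.exp ((|Real.log (243 * C / c)| + 10) * Real.log X / q) := by
    have a1 : 243 * C / c ≤ Real.exp (|Real.log (243 * C / c)| * Real.log X / q) := by
      rw [← Real.log_le_iff_le_exp (by positivity)]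
      refine (le_abs_self _).trans ?_
      rw [le_div_iff₀ hq]
      exact mul_le_mul_of_nonneg_left (by linarith) (abs_nonneg (Real.log (243 * C / c)))
    have a2 : X ^ 6 ≤ Real.exp (6 * Real.log X / q) := by
      rw [← Real.log_le_iff_le_exp (by positivity), Real.log_pow, le_div_iff₀ hq]
      push_cast
      nlinarith
    have a3 : (1/q) ^ 4 ≤ Real.exp (4 * Real.log X / q) := by
      rw [← Real.log_le_iff_le_exp (by positivity), Real.log_pow]
      have := Real.log_le_sub_one_of_pos (show 0 < 1/q by positivity)
      have : (1/q) ≤ Real.log X / q := by gcongr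
      push_cast
      rw [mul_div_assoc]; nlinarith
    have e : (|Real.log (243 * C / c)| + 10) * Real.log X / q = |Real.log (243 * C / c)| * Real.log X / q + (6 * Real.log X / q + 4 * Real.log X / q) := by ring
    rw [e, Real.exp_add, Real.exp_add]
    gcongr
  calc ‖FF m z‖ ≤ C * (3 * X) * (3 * X) ^ 3 := h2
    _ ≤ 243 * C / c * (X ^ 6 * (1/q) ^ 4) * (c * (q ^ 2 / X) ^ 2) := by
        field_simp
        have : 0 < C * X ^ 4 := by positivity
        norm_num
    _ ≤ _ := by gcongr

open MeasureTheory Metric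
lemma one_le_log {X : ℝ} (hX : 3 ≤ X) : 1 ≤ Real.log X := by
  rw [Real.le_log_iff_exp_le (by linarith)]
  have := Real.exp_one_lt_d9; linarith

lemma pole_bound {m : ℤ} {s : ℂ} {r : ℝ} (hr : 0 < r) (h : m = 0 → r ≤ |s.im|) :
    (dlt m / (s - 1) : ℂ).re ≤ 1 / r := by
  by_cases hm : m = 0
  · have h1 : r ≤ ‖s - 1‖ := (h hm).trans (by simpa using Complex.abs_im_le_norm (s - 1))
    refine (Complex.re_le_norm _).trans ?_
    simp only [dlt, hm, if_true, norm_div, Complex.ofReal_one, norm_one]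
    gcongr
  · simp [dlt, hm]; positivity

set_option maxHeartbeats 1000000 in
open Filter Topology in
lemma zero_free : ∃ c > 0, c ≤ 1/30 ∧ ∀ m : ℤ, 4 ∣ m → ∀ ρ : ℂ,
    1 - c / Real.log (|(m:ℝ)| + |ρ.im| + 3) ≤ ρ.re → FF m ρ ≠ 0 := by
  obtain ⟨r, hr, hr1⟩ : ∃ r > 0, ∀ ρ : ℂ, ‖ρ - 1‖ < 2 * r → FF 0 ρ ≠ 0 := by
    have h1 : ContinuousAt (FF 0) 1 := (FF_diff 0 (by norm_num)).continuousAt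
    have h2 := h1.eventually_ne (by rw [FF_one]; simp [kap_pos.ne'] : FF 0 1 ≠ 0)
    obtain ⟨ε, hε, h⟩ := Metric.eventually_nhds_iff.mp h2
    exact ⟨ε/2, by positivity, fun ρ hρ => h (by rw [dist_eq_norm]; linarith)⟩
  obtain ⟨A, hA, hrat⟩ := ratio
  obtain ⟨C, hC, hDb⟩ := DD_bound
  set B := 1800 * A + 5 * (1/r) + 3 * C with hB
  have hBpos : 0 < B := by positivity
  set q := min (1/10) (1 / (2 * B)) with hq
  have hq0 : 0 < q := by positivity
  have hq1 : q ≤ 1/10 := min_le_left _ _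
  have hqB : q * B ≤ 1/2 := by
    have : q ≤ 1 / (2 * B) := min_le_right _ _
    rw [le_div_iff₀ (by positivity)] at this; linarith
  refine ⟨min (q ^ 2 / 8) r, by positivity, (min_le_left _ _).trans (by nlinarith), fun m hm ρ hρ h0 => ?_⟩
  set X := |(m:ℝ)| + |ρ.im| + 3 with hX
  have hm0 : 0 ≤ |(m:ℝ)| := abs_nonneg _
  have hi0 : 0 ≤ |ρ.im| := abs_nonneg _
  have hX3 : 3 ≤ X := by rw [hX]; linarith
  have hl := one_le_log hX3
  set l := Real.log X
  have hρ1 : ρ.re ≤ 1 := by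
    by_contra h; push Not at h; exact FF_ne hm h h0
  have hgap1 : 1 - ρ.re ≤ q ^ 2 / 8 / l := by
    have : min (q ^ 2 / 8) r / l ≤ q ^ 2 / 8 / l := by gcongr; exact min_le_left _ _
    linarith
  have hgap2 : 1 - ρ.re ≤ r := by
    have : min (q ^ 2 / 8) r / l ≤ r / 1 := by gcongr; exact min_le_right _ _
    linarith
  have hγ : m = 0 → r ≤ |ρ.im| := by
    rintro rfl
    by_contra h; push Not at h
    refine hr1 ρ ?_ h0
    refine (Complex.norm_le_abs_re_add_abs_im _).trans_lt ?_
    have : |(ρ - 1).re| ≤ r := by rw [abs_le]; constructor <;> simp <;> linarith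
    have : |(ρ - 1).im| < r := by simpa using h
    linarith
  set δ := q ^ 2 / l with hδ
  have hδ0 : 0 < δ := by positivity
  have hδ1 : δ ≤ 1/100 := by
    rw [hδ, div_le_iff₀ (by linarith)]; nlinarith
  have hδ2 : q ^ 2 / 8 / l = δ / 8 := by rw [hδ]; ring
  rw [hδ2] at hgap1
  set σ := 1 + δ with hσ
  have hball : ∀ s : ℂ, s.re = σ → closedBall s (1/5) ⊆ {s : ℂ | 3/4 < s.re} := by
    intro s hs z hz
    rw [mem_closedBall, dist_eq_norm] at hz
    have := (abs_le.mp ((Complex.abs_re_le_norm _).trans hz)).1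
    simp at this ⊢; linarith
  have hdiff : ∀ k : ℤ, DifferentiableOn ℂ (FF k) {s : ℂ | 3/4 < s.re} := fun k z hz =>
    (FF_diff k (by have : (3/4:ℝ) < z.re := hz; linarith)).differentiableWithinAt
  set M := A * l / q with hM
  have hM0 : 0 < M := by positivity
  set s : ℂ := σ + ρ.im * Complex.I with hs
  set s2 : ℂ := σ + 2 * ρ.im * Complex.I with hs2
  have sre : s.re = σ := by simp [hs]
  have sim : s.im = ρ.im := by simp [hs]
  have s2re : s2.re = σ := by simp [hs2]
  have s2im : s2.im = 2 * ρ.im := by simp [hs2]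
  have hm2 : 4 ∣ 2 * m := hm.mul_left 2
  have L1 := (landau (isOpen_re _) (by norm_num) hM0 (hball s sre) (hdiff m) (FF_ne hm (by rw [sre]; linarith))
    (hrat q X hq0 (by linarith) hX3 m hm (by linarith) s (by rw [sim]; linarith) (by rw [sre]; linarith) (by rw [sre]; linarith))
    (fun z hz => by
      rw [sre]; by_contra h; push Not at h; exact FF_ne hm (by linarith) hz)).2 ρ
    (by
      have : ρ - s = ((ρ.re - σ : ℝ) : ℂ) := by apply Complex.ext <;> simp [hs]
      rw [this, Complex.norm_real, Real.norm_eq_abs, abs_le]; constructor <;> linarith) h0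
  have L2 := (landau (isOpen_re _) (by norm_num) hM0 (hball s2 s2re) (hdiff (2 * m)) (FF_ne hm2 (by rw [s2re]; linarith))
    (hrat q X hq0 (by linarith) hX3 (2 * m) hm2 (by push_cast; rw [abs_mul, abs_two]; linarith) s2 (by rw [s2im, abs_mul, abs_two]; linarith) (by rw [s2re]; linarith) (by rw [s2re]; linarith))
    (fun z hz => by
      rw [s2re]; by_contra h; push Not at h; exact FF_ne hm2 (by linarith) hz)).1
  rw [FF_logderiv hm (by rw [sre]; linarith), Complex.add_re, Complex.neg_re] at L1
  rw [FF_logderiv hm2 (by rw [s2re]; linarith), Complex.add_re, Complex.neg_re] at L2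
  have P1 := pole_bound (m := m) (s := s) hr (by rw [sim]; exact hγ)
  have P2 := pole_bound (m := 2 * m) (s := s2) hr (by
    intro h; rw [s2im, abs_mul, abs_two]; have := hγ (by omega); linarith)
  have h341 := l341 m (σ := σ) (by linarith) ρ.im
  have hD := hDb σ (by linarith) (by linarith)
  rw [show σ - 1 = δ by rw [hσ]; ring] at hD
  have e1 : (1 / (s - ρ)).re = 1 / (σ - ρ.re) := by
    have : s - ρ = ((σ - ρ.re : ℝ) : ℂ) := by apply Complex.ext <;> simp [hs]
    rw [this, ← Complex.ofReal_one, ← Complex.ofReal_div, Complex.ofReal_re]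
  rw [e1] at L1
  have hmain : 4 / (σ - ρ.re) ≤ 3 / δ + (1800 * M + 5 * (1/r) + 3 * C) := by
    have e2 : 4 / (σ - ρ.re) = 4 * (1 / (σ - ρ.re)) := by ring
    have e3 : 3 / δ = 3 * (1/δ) := by ring
    rw [e2, e3]
    linarith
  have hsmall : δ * (1800 * M + 5 * (1/r) + 3 * C) ≤ 1/2 := by
    have e4 : δ * M = A * q := by rw [hδ, hM]; field_simp
    have e5 : δ ≤ q := by
      rw [hδ, div_le_iff₀ (by linarith)]; nlinarith
    have e7 : δ * (5 * (1/r) + 3 * C) ≤ q * (5 * (1/r) + 3 * C) := mul_le_mul_of_nonneg_right e5 (by positivity)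
    calc δ * (1800 * M + 5 * (1/r) + 3 * C) = 1800 * (δ * M) + δ * (5 * (1/r) + 3 * C) := by ring
      _ ≤ 1800 * (A * q) + q * (5 * (1/r) + 3 * C) := by rw [e4]; linarith
      _ = q * B := by rw [hB]; ring
      _ ≤ 1/2 := hqB
  have hd : 0 < σ - ρ.re := by linarith
  rw [div_le_iff₀ hd] at hmain
  have e6 : (3 / δ + (1800 * M + 5 * (1/r) + 3 * C)) * δ ≤ 7/2 := by
    rw [add_mul, div_mul_cancel₀ _ hδ0.ne']; linarith
  have : 4 * δ ≤ 7/2 * (σ - ρ.re) := by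
    have a1 := mul_le_mul_of_nonneg_right hmain hδ0.le
    have a2 := mul_le_mul_of_nonneg_right e6 hd.le
    linarith
  linarith

lemma logderiv_FF : ∃ c0 > 0, c0 ≤ 1/120 ∧ ∃ C > 0, ∀ X : ℝ, 3 ≤ X → ∀ m : ℤ, 4 ∣ m → |(m:ℝ)| ≤ X → ∀ s : ℂ,
    |s.im| ≤ X → 1 - c0 / Real.log X ≤ s.re → s.re ≤ 1 + c0 / Real.log X →
    FF m s ≠ 0 ∧ ‖deriv (FF m) s / FF m s‖ ≤ C * Real.log X ^ 2 := by
  obtain ⟨c, hc, hc30, hz⟩ := zero_free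
  obtain ⟨A, hA, hrat⟩ := ratio
  set c0 := c / 12 with hc0
  have hc0p : 0 < c0 := by positivity
  have hc01 : c0 ≤ 1/120 := by rw [hc0]; linarith
  refine ⟨c0, hc0p, hc01, 6 * A / (c0 ^ 2), by positivity, fun X hX m hm hmX s ht h1 h2 => ?_⟩
  have hl := one_le_log hX
  set l := Real.log X with hldef
  set η := c0 / l with hη
  have hη0 : 0 < η := by positivity
  have hη1 : η ≤ 1/120 := by rw [hη, div_le_iff₀ (by linarith)]; nlinarith
  have hzf : ∀ z : ℂ, 1 - 3 * η ≤ z.re → |z.im| ≤ X + 1 → FF m z ≠ 0 := by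
    intro z hzr hzi
    refine hz m hm z ?_
    have hm0 : 0 ≤ |(m:ℝ)| := abs_nonneg _
    have hi0 : 0 ≤ |z.im| := abs_nonneg _
    have hY : |(m:ℝ)| + |z.im| + 3 ≤ X ^ 3 := by
      have : 0 ≤ X * ((X - 3) * (X + 3)) := mul_nonneg (by linarith) (mul_nonneg (by linarith) (by linarith))
      nlinarith
    have hlog : Real.log (|(m:ℝ)| + |z.im| + 3) ≤ 3 * l := by
      have := Real.log_le_log (by linarith) hY
      rwa [Real.log_pow] at this
    have hl2 := one_le_log (show 3 ≤ |(m:ℝ)| + |z.im| + 3 by linarith)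
    have : 3 * η ≤ c / Real.log (|(m:ℝ)| + |z.im| + 3) := by
      rw [le_div_iff₀ (by linarith)]
      calc 3 * η * Real.log (|(m:ℝ)| + |z.im| + 3) ≤ 3 * η * (3 * l) := by gcongr
        _ = 9/12 * c := by rw [hη, hc0]; field_simp; norm_num
        _ ≤ c := by linarith
    linarith
  refine ⟨hzf s (by linarith) (by linarith), ?_⟩
  set w : ℂ := (1 + η : ℝ) + s.im * Complex.I with hw
  have wre : w.re = 1 + η := by simp [hw]
  have wim : w.im = s.im := by simp [hw]
  set q := Real.sqrt c0 with hq
  have hq0 : 0 < q := Real.sqrt_pos.mpr hc0p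
  have hqs : q ^ 2 = c0 := Real.sq_sqrt hc0p.le
  have hq1 : q ≤ 1 := by nlinarith
  have hFw : FF m w ≠ 0 := FF_ne hm (by rw [wre]; linarith)
  have hre : ∀ z : ℂ, ‖z‖ < 4 * η → 1 - 3 * η < (w + z).re ∧ |(w + z).im| ≤ X + 1 ∧ w + z ∈ closedBall w (1/5) := by
    intro z hz
    have a := (abs_lt.mp ((Complex.abs_re_le_norm z).trans_lt hz)).1
    have b := (Complex.abs_im_le_norm z).trans_lt hz
    refine ⟨by rw [Complex.add_re, wre]; linarith, ?_, by rw [mem_closedBall, dist_eq_norm]; simp; linarith⟩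
    rw [Complex.add_im, wim]
    exact (abs_add_le _ _).trans (by linarith)
  have key := logderiv_bound (R := 4 * η) (M := A * l / q) (f := fun z => FF m (w + z) / FF m w) (z := s - w)
    (by positivity) (by positivity)
    (by
      intro z hz
      rw [mem_ball, dist_zero_right] at hz
      have h3 := FF_diff m (s := w + z) (by have := (hre z hz).1; linarith)
      exact ((h3.comp z ((differentiableAt_const w).add differentiableAt_id)).div_const _).differentiableWithinAt)
    (by simp [hFw])
    (by
      intro z hz
      rw [mem_ball, dist_zero_right] at hz
      rw [norm_div, div_le_iff₀ (norm_pos_iff.mpr hFw)]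
      exact hrat q X hq0 hq1 hX m hm (by linarith) w (by rw [wim]; linarith) (by rw [wre, hqs]; linarith) (by rw [wre]; linarith) _ (hre z hz).2.2)
    (by
      intro z hz
      rw [mem_ball, dist_zero_right] at hz
      exact div_ne_zero (hzf _ (hre z hz).1.le (hre z hz).2.1) hFw)
    (by
      have : s - w = ((s.re - (1 + η) : ℝ) : ℂ) := by apply Complex.ext <;> simp [hw]
      rw [this, Complex.norm_real, Real.norm_eq_abs, abs_le]; constructor <;> linarith)
  rw [deriv_div_const, deriv_comp_const_add, add_sub_cancel, div_div_div_cancel_right₀ hFw] at key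
  refine key.trans ?_
  have e : 24 * (A * l / q) / (4 * η) = 6 * A * l ^ 2 / (q * c0) := by rw [hη]; field_simp; norm_num
  rw [e, div_mul_eq_mul_div]
  gcongr
  nlinarith

open MeasureTheory Metric
noncomputable def psi (m : ℤ) (y : ℝ) : ℂ := gg (lam m) y - (dlt m : ℝ) • (pp y : ℂ)
noncomputable def GG (m : ℤ) (s : ℂ) : ℂ := -(deriv (FF m) s / FF m s) / (s * (s + 1))

lemma psi_mellin {m : ℤ} (hm : 4 ∣ m) {s : ℂ} (hs : 1 < s.re) : HasMellin (psi m) s (GG m s) := by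
  have h1 := gg_mellin (lam m) (fib_zero _) (fun s hs => lam_summable m hs) hs
  have h2 := pp_mellin hs
  have h3 := hasMellin_const_smul h2.1 (dlt m : ℝ)
  have h4 := hasMellin_sub h1.1 h3.1
  obtain ⟨a1, a2, a3⟩ := ne_of_re hs
  rw [h1.2, h3.2, h2.2] at h4
  refine ⟨h4.1, h4.2.trans ?_⟩
  rw [GG, FF_logderiv hm hs, Complex.real_smul, DD]
  field_simp
  ring

lemma den_bound {s : ℂ} (hs : 1/2 ≤ s.re) : (1 + s.im ^ 2) / 4 ≤ ‖s * (s + 1)‖ := by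
  have h1 : ‖s‖ ^ 2 = s.re ^ 2 + s.im ^ 2 := by rw [Complex.sq_norm, Complex.normSq_apply]; ring
  have h2 : ‖s + 1‖ ^ 2 = (s.re + 1) ^ 2 + s.im ^ 2 := by rw [Complex.sq_norm, Complex.normSq_apply]; simp; ring
  have h3 : ‖s‖ ≤ ‖s + 1‖ := abs_le_of_sq_le_sq' (by nlinarith) (norm_nonneg _) |>.2
  rw [norm_mul]
  have : ‖s‖ * ‖s‖ ≤ ‖s‖ * ‖s + 1‖ := mul_le_mul_of_nonneg_left h3 (norm_nonneg _)
  nlinarith [sq_nonneg s.im]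

lemma GG_le {m : ℤ} {s : ℂ} (hs : 1/2 ≤ s.re) {B : ℝ} (hB : ‖deriv (FF m) s / FF m s‖ ≤ B) :
    ‖GG m s‖ ≤ 4 * B * (1 + s.im ^ 2)⁻¹ := by
  have h := den_bound hs
  have h0 : 0 < 1 + s.im ^ 2 := by positivity
  rw [GG, norm_div, norm_neg, div_le_iff₀ (by linarith)]
  have hB0 := (norm_nonneg _).trans hB
  calc _ ≤ B := hB
    _ = 4 * B * (1 + s.im ^ 2)⁻¹ * ((1 + s.im ^ 2) / 4) := by field_simp
    _ ≤ _ := by gcongr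

lemma GG_right : ∃ C > 0, ∀ m : ℤ, 4 ∣ m → ∀ s : ℂ, 1 < s.re → s.re ≤ 2 →
    ‖GG m s‖ ≤ C / (s.re - 1) * (1 + s.im ^ 2)⁻¹ := by
  obtain ⟨C, hC, hD⟩ := DD_bound
  refine ⟨4 * (2 + C), by positivity, fun m hm s h1 h2 => ?_⟩
  have hx : 0 < s.re - 1 := by linarith
  have := GG_le (m := m) (s := s) (by linarith) (B := (2 + C) / (s.re - 1)) ?_
  · rwa [← mul_div_assoc] at this
  rw [FF_logderiv hm h1]
  have a1 := DD_le m h1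
  have a2 := hD s.re h1 h2
  have a3 : ‖(dlt m / (s - 1) : ℂ)‖ ≤ 1 / (s.re - 1) := by
    have hd : 0 ≤ dlt m ∧ dlt m ≤ 1 := by unfold dlt; split_ifs <;> norm_num
    rw [norm_div, Complex.norm_real, Real.norm_of_nonneg hd.1]
    have : s.re - 1 ≤ ‖s - 1‖ := by
      have := (le_abs_self _).trans (Complex.abs_re_le_norm (s - 1)); simpa using this
    gcongr
    exact hd.2
  have a4 : C ≤ C / (s.re - 1) := by rw [le_div_iff₀ hx]; nlinarith
  refine (norm_add_le _ _).trans ?_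
  rw [norm_neg]
  have : (2 + C) / (s.re - 1) = 1 / (s.re - 1) + C / (s.re - 1) + 1 / (s.re - 1) := by ring
  linarith

lemma GG_cont {m : ℤ} {s : ℂ} (hs : 1/2 < s.re) (h : FF m s ≠ 0) : DifferentiableAt ℂ (GG m) s := by
  have h1 := FF_diff m hs
  have hD : DifferentiableOn ℂ (FF m) {s : ℂ | 1/2 < s.re} := fun z hz => (FF_diff m hz).differentiableWithinAt
  have h2 := ((hD.deriv (isOpen_re _)).differentiableAt ((isOpen_re _).mem_nhds hs))
  have h3 : s * (s + 1) ≠ 0 := by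
    refine mul_ne_zero ?_ ?_ <;> (intro h; have := congrArg Complex.re h; simp at this; linarith)
  unfold GG
  exact (h2.div h1 h).neg.div (by fun_prop) h3

lemma tail_int {T B : ℝ} (hT : 0 < T) {f : ℝ → ℂ} (hf : Integrable f) (hB : ∀ t, ‖f t‖ ≤ B * (1 + t ^ 2)⁻¹) :
    ‖∫ t, f t‖ ≤ ‖∫ t in (-T)..T, f t‖ + 2 * B / T := by
  have hB0 : 0 ≤ B := by have := (norm_nonneg _).trans (hB 0); simpa using this
  have hi := integrable_inv_one_add_sq
  have e1 := integral_add_compl (measurableSet_Ioc (a := -T) (b := T)) hf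
  have e2 := integral_add_compl (measurableSet_Ioc (a := -T) (b := T)) hi
  rw [integral_univ_inv_one_add_sq, ← intervalIntegral.integral_of_le (by linarith), integral_inv_one_add_sq, Real.arctan_neg] at e2
  rw [← e1, ← intervalIntegral.integral_of_le (by linarith)]
  refine (norm_add_le _ _).trans ?_
  gcongr
  refine (norm_integral_le_of_norm_le ((hi.const_mul B).integrableOn) (Filter.Eventually.of_forall hB)).trans ?_
  rw [integral_const_mul]
  have h3 : Real.arctan T⁻¹ = Real.pi / 2 - Real.arctan T := Real.arctan_inv_of_pos hT
  have h4 : Real.arctan T⁻¹ ≤ T⁻¹ := by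
    have := Real.le_tan (Real.arctan_nonneg.2 (inv_pos.2 hT).le) (Real.arctan_lt_pi_div_two T⁻¹)
    rwa [Real.tan_arctan] at this
  rw [mul_comm 2 B, mul_div_assoc]
  gcongr
  have : 2 / T = 2 * T⁻¹ := by ring
  linarith

lemma psi_bound : ∃ c > 0, c ≤ 1 ∧ ∃ C > 0, ∀ Y : ℝ, 2 ≤ Y → ∀ m : ℤ, 4 ∣ m → |(m:ℝ)| ≤ Real.exp Y →
    ‖psi m (Real.exp (-Y ^ 2))‖ ≤ C * (Y ^ 2 * Real.exp (Y ^ 2 - c * Y)) := by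
  obtain ⟨c0, hc0, hc01, C1, hC1, hF⟩ := logderiv_FF
  obtain ⟨C2, hC2, hG⟩ := GG_right
  refine ⟨c0, hc0, by linarith, 2 * C2 / c0 + 64 * C1 + 16 * C1 , by positivity, fun Y hY m hm hmY => ?_⟩
  set X := Real.exp Y with hX
  have hX3 : 3 ≤ X := by have := Real.add_one_le_exp Y; linarith
  have hlX : Real.log X = Y := Real.log_exp Y
  have hF' := hF X hX3 m hm hmY
  rw [hlX] at hF'
  set η := c0 / Y with hη
  have hη0 : 0 < η := by positivity
  have hη1 : η ≤ 1/240 := by rw [hη, div_le_iff₀ (by linarith)]; nlinarith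
  have hηY : η * Y ^ 2 = c0 * Y := by rw [hη]; field_simp
  set y := Real.exp (-Y ^ 2) with hy
  have hy0 : 0 < y := Real.exp_pos _
  have hyn : ∀ s : ℂ, ‖(y:ℂ) ^ (-s)‖ = Real.exp (Y ^ 2 * s.re) := by
    intro s
    rw [Complex.norm_cpow_eq_rpow_re_of_pos hy0, hy, ← Real.exp_mul]; simp
  set Φ : ℂ → ℂ := fun s => (y:ℂ) ^ (-s) * GG m s with hΦ
  set σ := 1 + η with hσ
  have hlineR : ∀ t : ℝ, ‖GG m (σ + t * Complex.I)‖ ≤ C2 / η * (1 + t ^ 2)⁻¹ := by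
    intro t
    have := hG m hm (σ + t * Complex.I) (by simp [hσ, hη0]) (by simp [hσ]; linarith)
    simpa [hσ] using this
  have hcontR : Continuous (fun t : ℝ => GG m (σ + t * Complex.I)) := by
    rw [continuous_iff_continuousAt]
    intro t
    have : ContinuousAt (GG m) (σ + t * Complex.I) :=
      (GG_cont (by simp [hσ]; linarith) (FF_ne hm (by simp [hσ, hη0]))).continuousAt
    exact ContinuousAt.comp (f := fun t : ℝ => (σ + t * Complex.I : ℂ)) this (by fun_prop)
  have hVI : Integrable (fun t : ℝ => GG m (σ + t * Complex.I)) :=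
    (integrable_inv_one_add_sq.const_mul (C2 / η)).mono' hcontR.aestronglyMeasurable (Filter.Eventually.of_forall hlineR)
  have hmel : ∀ t : ℝ, mellin (psi m) (σ + t * Complex.I) = GG m (σ + t * Complex.I) := fun t =>
    (psi_mellin hm (by simp [hσ, hη0])).2
  have hcy : ContinuousAt (psi m) y := by
    have h1 := pp_cont hy0
    have h2 := gg_cont (lam m) hy0
    unfold psi; fun_prop
  have hinv := mellinInv_mellin_eq σ (psi m) hy0 (psi_mellin hm (s := σ) (by simp [hσ, hη0])).1
    (by rw [Complex.VerticalIntegrable]; simp only [hmel]; exact hVI) hcy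
  rw [mellinInv] at hinv
  simp only [hmel, smul_eq_mul] at hinv
  have hΦR : ∀ t : ℝ, ‖Φ (σ + t * Complex.I)‖ ≤ Real.exp (Y ^ 2 + c0 * Y) * (C2 / η) * (1 + t ^ 2)⁻¹ := by
    intro t
    have e : Y ^ 2 * (σ + t * Complex.I : ℂ).re = Y ^ 2 + c0 * Y := by simp [hσ]; linarith
    rw [hΦ]
    simp only [norm_mul, hyn, e]
    rw [mul_assoc]
    gcongr
    exact hlineR t
  have hΦI : Integrable (fun t : ℝ => Φ (σ + t * Complex.I)) := by
    refine (integrable_inv_one_add_sq.const_mul _).mono' (Continuous.aestronglyMeasurable ?_) (Filter.Eventually.of_forall hΦR)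
    refine Continuous.mul ?_ hcontR
    have hyc : (y:ℂ) ≠ 0 := by exact_mod_cast hy0.ne'
    exact Continuous.const_cpow (by fun_prop) (Or.inl hyc)
  have htail := tail_int (T := X) (by linarith) hΦI hΦR
  have hrect := Complex.integral_boundary_rect_eq_zero_of_differentiableOn Φ (((1 - η : ℝ) : ℂ) - X * Complex.I) (σ + X * Complex.I) (by
    intro s hs
    rw [Complex.mem_reProdIm] at hs
    simp only [Complex.sub_re, Complex.ofReal_re, Complex.mul_re, Complex.I_re, mul_zero, Complex.ofReal_im, Complex.I_im, mul_one, sub_zero,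
      Complex.add_re, Complex.sub_im, Complex.mul_im, Complex.add_im, zero_mul, add_zero, zero_sub, zero_add, sub_self] at hs
    rw [Set.uIcc_of_le (by linarith), Set.uIcc_of_le (by linarith)] at hs
    obtain ⟨⟨h1, h2⟩, h3, h4⟩ := hs
    have h5 := (hF' s (abs_le.mpr ⟨h3, h4⟩) h1 h2).1
    have hyc : (y:ℂ) ≠ 0 := by exact_mod_cast hy0.ne'
    refine (DifferentiableAt.mul ?_ (GG_cont (by linarith) h5)).differentiableWithinAt
    exact DifferentiableAt.const_cpow (by fun_prop) (Or.inl hyc))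
  simp only [Complex.sub_re, Complex.ofReal_re, Complex.mul_re, Complex.I_re, mul_zero, Complex.ofReal_im, Complex.I_im, mul_one, sub_zero,
      Complex.add_re, Complex.sub_im, Complex.mul_im, Complex.add_im, zero_mul, add_zero, zero_sub, zero_add, sub_self] at hrect
  have hΦF : ∀ s : ℂ, |s.im| ≤ X → 1 - η ≤ s.re → s.re ≤ 1 + η →
      ‖Φ s‖ ≤ Real.exp (Y ^ 2 * s.re) * (4 * (C1 * Y ^ 2) * (1 + s.im ^ 2)⁻¹) := by
    intro s h1 h2 h3
    rw [hΦ]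
    simp only [norm_mul, hyn]
    gcongr
    exact GG_le (by linarith) (hF' s h1 h2 h3).2
  have hhor : ∀ τ : ℝ, |τ| = X → ‖∫ x in (1 - η)..σ, Φ (x + τ * Complex.I)‖ ≤ Real.exp (Y ^ 2 + c0 * Y) * (4 * (C1 * Y ^ 2) * (1 + X ^ 2)⁻¹) := by
    intro τ hτ
    have := intervalIntegral.norm_integral_le_of_norm_le_const (a := 1 - η) (b := σ) (f := fun x : ℝ => Φ (x + τ * Complex.I))
      (C := Real.exp (Y ^ 2 + c0 * Y) * (4 * (C1 * Y ^ 2) * (1 + X ^ 2)⁻¹)) (by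
        intro x hx
        rw [Set.uIoc_of_le (by linarith)] at hx
        refine (hΦF (x + τ * Complex.I) (by simp [hτ]) (by simp; linarith [hx.1]) (by simp; linarith [hx.2])).trans ?_
        have e1 : (x + τ * Complex.I : ℂ).im ^ 2 = X ^ 2 := by simp [← hτ]
        rw [e1]
        gcongr
        simp
        nlinarith [hx.2, sq_nonneg Y])
    refine this.trans (mul_le_of_le_one_right (by positivity) ?_)
    rw [abs_le]; constructor <;> linarith
  have hleft : ‖∫ t in (-X)..X, Φ ((1 - η : ℝ) + t * Complex.I)‖ ≤ Real.exp (Y ^ 2 - c0 * Y) * (4 * (C1 * Y ^ 2)) * Real.pi := by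
    have := intervalIntegral.norm_integral_le_of_norm_le (a := -X) (b := X) (f := fun t : ℝ => Φ ((1 - η : ℝ) + t * Complex.I))
      (g := fun t => Real.exp (Y ^ 2 - c0 * Y) * (4 * (C1 * Y ^ 2)) * (1 + t ^ 2)⁻¹) (by linarith) (by
        refine Filter.Eventually.of_forall fun t ht => ?_
        refine (hΦF _ (by simp; rw [abs_le]; exact ⟨ht.1.le, ht.2⟩) (by simp) (by simp; linarith)).trans (le_of_eq ?_)
        simp
        rw [show Y ^ 2 * (1 - η) = Y ^ 2 - c0 * Y by linarith]; ring)
      ((integrable_inv_one_add_sq.const_mul _).intervalIntegrable)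
    refine this.trans ?_
    rw [intervalIntegral.integral_const_mul, integral_inv_one_add_sq, Real.arctan_neg]
    gcongr
    have := Real.arctan_lt_pi_div_two X
    linarith
  have hright : ‖∫ t in (-X)..X, Φ (σ + t * Complex.I)‖ ≤ 2 * (Real.exp (Y ^ 2 + c0 * Y) * (4 * (C1 * Y ^ 2) * (1 + X ^ 2)⁻¹))
      + Real.exp (Y ^ 2 - c0 * Y) * (4 * (C1 * Y ^ 2)) * Real.pi := by
    have h1 := hhor (-X) (by rw [abs_neg, abs_of_pos (by linarith)])
    have h2 := hhor X (abs_of_pos (by linarith))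
    set I1 := ∫ x in (1 - η)..σ, Φ (x + (-X:ℝ) * Complex.I)
    set I2 := ∫ x in (1 - η)..σ, Φ (x + X * Complex.I)
    set I3 := ∫ t in (-X)..X, Φ (σ + t * Complex.I)
    set I4 := ∫ t in (-X)..X, Φ ((1 - η : ℝ) + t * Complex.I)
    simp only [smul_eq_mul] at hrect
    have e : I3 = I4 + Complex.I * (I1 - I2) := by
      linear_combination (-Complex.I) * hrect + (I3 - I4) * Complex.I_sq
    rw [e]
    refine (norm_add_le _ _).trans ?_
    rw [norm_mul, Complex.norm_I, one_mul]
    have := norm_sub_le I1 I2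
    linarith
  rw [← hinv]
  simp only [Complex.real_smul, norm_mul]
  have hpi := Real.pi_gt_three
  have hpi4 := Real.pi_le_four
  have hn : ‖((1 / (2 * Real.pi) : ℝ) : ℂ)‖ ≤ 1 := by
    rw [Complex.norm_real, Real.norm_of_nonneg (by positivity), div_le_one (by positivity)]; linarith
  refine (mul_le_of_le_one_left (norm_nonneg _) hn).trans ?_
  refine htail.trans ?_
  -- numeric
  have hXinv : Real.exp (Y ^ 2 + c0 * Y) / X ≤ Real.exp (Y ^ 2 - c0 * Y) := by
    rw [hX, ← Real.exp_sub]
    refine Real.exp_le_exp.mpr (by nlinarith)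
  have hX2 : (1 + X ^ 2)⁻¹ ≤ 1 / X := by
    rw [inv_eq_one_div]; gcongr; nlinarith
  set E := Real.exp (Y ^ 2 - c0 * Y)
  have hE : 0 < E := Real.exp_pos _
  have t1 : 2 * (Real.exp (Y ^ 2 + c0 * Y) * (4 * (C1 * Y ^ 2) * (1 + X ^ 2)⁻¹)) ≤ 8 * (C1 * Y ^ 2) * E := by
    calc 2 * (Real.exp (Y ^ 2 + c0 * Y) * (4 * (C1 * Y ^ 2) * (1 + X ^ 2)⁻¹)) ≤ 2 * (Real.exp (Y ^ 2 + c0 * Y) * (4 * (C1 * Y ^ 2) * (1 / X))) := by gcongr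
      _ = 8 * (C1 * Y ^ 2) * (Real.exp (Y ^ 2 + c0 * Y) / X) := by ring
      _ ≤ _ := by gcongr
  have t2 : E * (4 * (C1 * Y ^ 2)) * Real.pi ≤ E * (4 * (C1 * Y ^ 2)) * 4 := by gcongr
  have t3 : 2 * (Real.exp (Y ^ 2 + c0 * Y) * (C2 / η)) / X ≤ 2 * C2 / c0 * (Y ^ 2 * E) := by
    have e : 2 * (Real.exp (Y ^ 2 + c0 * Y) * (C2 / η)) / X = 2 * C2 / c0 * (Y * (Real.exp (Y ^ 2 + c0 * Y) / X)) := by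
      rw [hη]; field_simp
    rw [e]
    gcongr
    nlinarith
  have t4 : 0 ≤ C1 * Y ^ 2 * E := by positivity
  calc _ ≤ 8 * (C1 * Y ^ 2) * E + E * (4 * (C1 * Y ^ 2)) * 4 + 2 * C2 / c0 * (Y ^ 2 * E) := by linarith
    _ ≤ _ := by nlinarith

open MeasureTheory

lemma arg2pi_mem (z : ℂ) : 0 ≤ arg2pi z ∧ arg2pi z < 2 * Real.pi := by
  have h1 := Complex.neg_pi_lt_arg z
  have h2 := Complex.arg_le_pi z
  have h3 := Real.pi_pos
  unfold arg2pi; split_ifs <;> constructor <;> linarith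

lemma chi_exp (m : ℤ) {z : GaussianInt} (hz : z ≠ 0) :
    chi m z = Complex.exp (m * (arg2pi (GaussianInt.toComplex z) * Complex.I)) := by
  have h0 : (‖GaussianInt.toComplex z‖ : ℂ) ≠ 0 := by exact_mod_cast norm_ne_zero_iff.mpr (toC_ne hz)
  have h1 := Complex.norm_mul_exp_arg_mul_I (GaussianInt.toComplex z)
  rw [chi, Complex.exp_int_mul]
  congr 1
  have h2 : Complex.exp (arg2pi (GaussianInt.toComplex z) * Complex.I) = Complex.exp ((GaussianInt.toComplex z).arg * Complex.I) := by
    unfold arg2pi; split_ifs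
    · rfl
    · push_cast
      rw [add_mul, Complex.exp_add, Complex.exp_two_pi_mul_I, mul_one]
  rw [h2]
  nth_rewrite 1 [← h1]
  field_simp

lemma cos_series {v : ℝ} (hv : |v| ≤ 1) :
    HasSum (fun n : ℕ => 1 / (n:ℝ) ^ 2 * Real.cos (2 * Real.pi * n * v)) (Real.pi ^ 2 * (v ^ 2 - |v| + 1 / 6)) := by
  have h := hasSum_one_div_nat_pow_mul_cos (k := 1) one_ne_zero (x := |v|) ⟨abs_nonneg v, hv⟩
  have e : ∀ n : ℕ, Real.cos (2 * Real.pi * n * |v|) = Real.cos (2 * Real.pi * n * v) := fun n => by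
    rcases abs_cases v with ⟨h, _⟩ | ⟨h, _⟩ <;> rw [h]
    rw [mul_neg, Real.cos_neg]
  simp only [e] at h
  convert h using 1
  have : (Polynomial.map (algebraMap ℚ ℝ) (Polynomial.bernoulli (2 * 1))).eval |v| = v ^ 2 - |v| + 6⁻¹ := by
    rw [← sq_abs v]; exact bernoulliFun_two |v|
  rw [this]
  norm_num [Nat.factorial]; ring_nf; simp

lemma abs_sector {ι : Type*} (S : Finset ι) (w θ : ι → ℝ) (hw : ∀ i ∈ S, 0 ≤ w i) (hθ : ∀ i ∈ S, 0 ≤ θ i ∧ θ i < 1)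
    {h ε : ℝ} (h0 : 0 < h) (h1 : h ≤ 1)
    (hQ : ∀ t, 0 ≤ t → t ≤ 1 → |∑ i ∈ S, w i * ((t - θ i) ^ 2 - |t - θ i| + 1 / 6)| ≤ ε) {t : ℝ} (ht0 : 0 ≤ t) (ht1 : t ≤ 1) :
    ∑ i ∈ S, w i * (if θ i ≤ t then 1 else 0) ≤ (∑ i ∈ S, w i) * t + ((∑ i ∈ S, w i) * h + 2 * (ε / h)) ∧
    (∑ i ∈ S, w i) * t - ((∑ i ∈ S, w i) * h + 2 * (ε / h)) ≤ ∑ i ∈ S, w i * (if θ i < t then 1 else 0) := by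
  set W := ∑ i ∈ S, w i with hW
  set V : ℝ → ℝ := fun t => ∑ i ∈ S, w i * max 0 (t - θ i) with hV
  set K := ∑ i ∈ S, w i * (1 - 2 * θ i) with hK
  have hW0 : 0 ≤ W := Finset.sum_nonneg hw
  have hε : 0 ≤ ε / h := div_nonneg ((abs_nonneg _).trans (hQ 0 le_rfl zero_le_one)) h0.le
  have key : ∀ t, 0 ≤ t → t + h ≤ 1 → |V (t + h) - V t - (W * (2 * t * h + h ^ 2) + K * h) / 2| ≤ ε := by
    intro t ht0 ht1
    have a1 := hQ t ht0 (by linarith)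
    have a2 := hQ (t + h) (by linarith) ht1
    have e : V (t + h) - V t - (W * (2 * t * h + h ^ 2) + K * h) / 2 =
      (∑ i ∈ S, w i * ((t - θ i) ^ 2 - |t - θ i| + 1 / 6) - ∑ i ∈ S, w i * ((t + h - θ i) ^ 2 - |t + h - θ i| + 1 / 6)) / 2 := by
      simp only [hV, hW, hK, Finset.sum_mul, ← Finset.sum_sub_distrib, ← Finset.sum_add_distrib, Finset.sum_div]
      refine Finset.sum_congr rfl fun i _ => ?_
      have m : ∀ v : ℝ, |v| = 2 * max 0 v - v := fun v => by
        rcases le_total 0 v with h | h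
        · rw [abs_of_nonneg h, max_eq_right h]; ring
        · rw [abs_of_nonpos h, max_eq_left h]; ring
      rw [m, m]; ring
    rw [e, abs_le]
    rw [abs_le] at a1 a2
    constructor <;> linarith [a1.1, a1.2, a2.1, a2.2]
  have up : ∀ t, h * ∑ i ∈ S, w i * (if θ i ≤ t then 1 else 0) ≤ V (t + h) - V t := by
    intro t
    rw [Finset.mul_sum, ← Finset.sum_sub_distrib]
    refine Finset.sum_le_sum fun i hi => ?_
    rw [← mul_sub, mul_left_comm]
    refine mul_le_mul_of_nonneg_left ?_ (hw i hi)
    split_ifs with hh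
    · rw [max_eq_right (by linarith), max_eq_right (by linarith)]; linarith
    · have := max_le_max (le_refl (0:ℝ)) (show t - θ i ≤ t + h - θ i by linarith)
      linarith
  have lo : ∀ t, V (t + h) - V t ≤ h * ∑ i ∈ S, w i * (if θ i < t + h then 1 else 0) := by
    intro t
    rw [Finset.mul_sum, ← Finset.sum_sub_distrib]
    refine Finset.sum_le_sum fun i hi => ?_
    rw [← mul_sub, mul_left_comm]
    refine mul_le_mul_of_nonneg_left ?_ (hw i hi)
    split_ifs with hh
    · rw [max_eq_right (by linarith)]; linarith [le_max_right 0 (t - θ i)]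
    · rw [max_eq_left (by linarith), max_eq_left (by linarith)]; linarith
  have A0 : ∀ t, 0 ≤ ∑ i ∈ S, w i * (if θ i ≤ t then (1:ℝ) else 0) := fun t =>
    Finset.sum_nonneg fun i hi => mul_nonneg (hw i hi) (by split_ifs <;> norm_num)
  have A0' : ∀ t, 0 ≤ ∑ i ∈ S, w i * (if θ i < t then (1:ℝ) else 0) := fun t =>
    Finset.sum_nonneg fun i hi => mul_nonneg (hw i hi) (by split_ifs <;> norm_num)
  have A1 : ∀ t, ∑ i ∈ S, w i * (if θ i ≤ t then (1:ℝ) else 0) ≤ W := fun t =>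
    Finset.sum_le_sum fun i hi => mul_le_of_le_one_right (hw i hi) (by split_ifs <;> norm_num)
  have A1' : ∀ t, ∑ i ∈ S, w i * (if θ i < t then (1:ℝ) else 0) ≤ W := fun t =>
    Finset.sum_le_sum fun i hi => mul_le_of_le_one_right (hw i hi) (by split_ifs <;> norm_num)
  have hεh : ε = ε / h * h := by field_simp
  have K1 : -(W * h) - 2 * (ε / h) ≤ K := by
    have a := (abs_le.1 (key 0 le_rfl (by linarith))).2
    have b := up 0
    have c := mul_nonneg h0.le (A0 0)
    refine le_of_mul_le_mul_right ?_ h0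
    nlinarith
  have K2 : K ≤ W * h + 2 * (ε / h) := by
    have a := (abs_le.1 (key (1 - h) (by linarith) (by linarith))).1
    have b := lo (1 - h)
    have c := mul_le_mul_of_nonneg_left (A1' (1 - h + h)) h0.le
    refine le_of_mul_le_mul_right ?_ h0
    nlinarith
  constructor
  · by_cases hc : t + h ≤ 1
    · have a := (abs_le.1 (key t ht0 hc)).2
      have b := up t
      refine le_of_mul_le_mul_right ?_ h0
      have c := mul_le_mul_of_nonneg_right K2 h0.le
      nlinarith
    · have := A1 t
      nlinarith
  · by_cases hc : h ≤ t
    · have a := (abs_le.1 (key (t - h) (by linarith) (by linarith))).1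
      have b := lo (t - h)
      rw [sub_add_cancel] at a b
      refine le_of_mul_le_mul_right ?_ h0
      have c := mul_le_mul_of_nonneg_right K1 h0.le
      nlinarith
    · have := A0' t
      nlinarith

noncomputable def tht (z : GaussianInt) : ℝ := arg2pi (GaussianInt.toComplex z) / (2 * Real.pi)

lemma tht_mem (z : GaussianInt) : 0 ≤ tht z ∧ tht z < 1 := by
  have h := arg2pi_mem (GaussianInt.toComplex z)
  have h3 := Real.pi_pos
  exact ⟨div_nonneg h.1 (by positivity), (div_lt_one (by positivity)).2 h.2⟩

lemma Q_bound : ∃ C > 0, ∀ (S : Finset GaussianInt) (w : GaussianInt → ℝ) (B W K : ℝ), (∀ z ∈ S, z ≠ 0) → 0 ≤ B → 0 ≤ W → 0 < K →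
    (∀ n : ℕ, ‖∑ z ∈ S, w z * chi n z‖ ≤ W) → (∀ n : ℕ, 0 < n → (n:ℝ) ≤ K ^ 2 → ‖∑ z ∈ S, w z * chi n z‖ ≤ B) →
    ∀ t, 0 ≤ t → t ≤ 1 → |∑ z ∈ S, w z * ((t - tht z) ^ 2 - |t - tht z| + 1 / 6)| ≤ C * (B + W / K) := by
  have s2 : Summable (fun n : ℕ => 1 / (n:ℝ) ^ 2) := Real.summable_one_div_nat_pow.2 (by norm_num)
  have s3 : Summable (fun n : ℕ => 1 / (n:ℝ) ^ (3/2:ℝ)) := Real.summable_one_div_nat_rpow.2 (by norm_num)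
  have p2 : 0 ≤ ∑' n : ℕ, 1 / (n:ℝ) ^ 2 := tsum_nonneg fun n => by positivity
  have p3 : 0 ≤ ∑' n : ℕ, 1 / (n:ℝ) ^ (3/2:ℝ) := tsum_nonneg fun n => by positivity
  refine ⟨∑' n : ℕ, 1 / (n:ℝ) ^ 2 + ∑' n : ℕ, 1 / (n:ℝ) ^ (3/2:ℝ) + 1, by positivity, ?_⟩
  intro S w B W K hS hB hW hK h1 h2 t ht0 ht1
  have hs : HasSum (fun n : ℕ => ∑ z ∈ S, w z * (1 / (n:ℝ) ^ 2 * Real.cos (2 * Real.pi * n * (t - tht z))))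
      (∑ z ∈ S, w z * (Real.pi ^ 2 * ((t - tht z) ^ 2 - |t - tht z| + 1 / 6))) :=
    hasSum_sum fun z _ => (cos_series (by have := tht_mem z; rw [abs_le]; constructor <;> linarith)).mul_left _
  have hg := (s2.hasSum.mul_left B).add (s3.hasSum.mul_left (W / K))
  have hb : ∀ n : ℕ, ‖∑ z ∈ S, w z * (1 / (n:ℝ) ^ 2 * Real.cos (2 * Real.pi * n * (t - tht z)))‖ ≤
      B * (1 / (n:ℝ) ^ 2) + W / K * (1 / (n:ℝ) ^ (3/2:ℝ)) := by
    intro n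
    rcases Nat.eq_zero_or_pos n with rfl | hn
    · simp
    have hn' : (0:ℝ) < n := by exact_mod_cast hn
    have e : ∑ z ∈ S, w z * (1 / (n:ℝ) ^ 2 * Real.cos (2 * Real.pi * n * (t - tht z))) =
        (1 / (n:ℝ) ^ 2) * (Complex.exp (((-(2 * Real.pi * n * t) : ℝ) : ℂ) * Complex.I) * ∑ z ∈ S, w z * chi n z).re := by
      rw [Finset.mul_sum, Complex.re_sum, Finset.mul_sum]
      refine Finset.sum_congr rfl fun z hz => ?_
      rw [chi_exp _ (hS z hz), mul_left_comm (Complex.exp _), ← Complex.exp_add, Complex.re_ofReal_mul]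
      have : (((-(2 * Real.pi * n * t) : ℝ) : ℂ) * Complex.I) + ((n:ℤ):ℂ) * (arg2pi (GaussianInt.toComplex z) * Complex.I) =
          ((-(2 * Real.pi * n * (t - tht z)) : ℝ) : ℂ) * Complex.I := by
        have : arg2pi (GaussianInt.toComplex z) = tht z * (2 * Real.pi) := by
          have := Real.pi_pos; unfold tht; field_simp
        rw [this]; push_cast; ring
      rw [this, Complex.exp_ofReal_mul_I_re, Real.cos_neg]; ring
    have e2 : ‖∑ z ∈ S, w z * (1 / (n:ℝ) ^ 2 * Real.cos (2 * Real.pi * n * (t - tht z)))‖ ≤ (1 / (n:ℝ) ^ 2) * ‖∑ z ∈ S, w z * chi n z‖ := by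
      rw [e, norm_mul, Real.norm_of_nonneg (by positivity)]
      gcongr
      refine (Complex.abs_re_le_norm _).trans ?_
      rw [norm_mul, Complex.norm_exp_ofReal_mul_I, one_mul]
    refine e2.trans ?_
    by_cases hc : (n:ℝ) ≤ K ^ 2
    · have := h2 n hn hc
      have p : 0 ≤ W / K * (1 / (n:ℝ) ^ (3/2:ℝ)) := by positivity
      have : (1 / (n:ℝ) ^ 2) * ‖∑ z ∈ S, w z * chi n z‖ ≤ (1 / (n:ℝ) ^ 2) * B := by gcongr
      linarith
    · push Not at hc
      have h3 : K ≤ (n:ℝ) ^ (1/2:ℝ) := by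
        rw [← Real.sqrt_eq_rpow]; exact Real.le_sqrt_of_sq_le hc.le
      have h4 : (n:ℝ) ^ 2 = (n:ℝ) ^ (1/2:ℝ) * (n:ℝ) ^ (3/2:ℝ) := by
        rw [← Real.rpow_add hn']; norm_num
      have p : 0 ≤ B * (1 / (n:ℝ) ^ 2) := by positivity
      have : (1 / (n:ℝ) ^ 2) * ‖∑ z ∈ S, w z * chi n z‖ ≤ 1 / (K * (n:ℝ) ^ (3/2:ℝ)) * W := by
        rw [h4]; have := h1 n; gcongr
      have e3 : 1 / (K * (n:ℝ) ^ (3/2:ℝ)) * W = W / K * (1 / (n:ℝ) ^ (3/2:ℝ)) := by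
        field_simp
      linarith
  have hf := tsum_of_norm_bounded hg hb
  rw [hs.tsum_eq] at hf
  have e4 : ∑ z ∈ S, w z * (Real.pi ^ 2 * ((t - tht z) ^ 2 - |t - tht z| + 1 / 6)) =
      Real.pi ^ 2 * ∑ z ∈ S, w z * ((t - tht z) ^ 2 - |t - tht z| + 1 / 6) := by
    rw [Finset.mul_sum]; refine Finset.sum_congr rfl fun z _ => by ring
  rw [e4, norm_mul, Real.norm_of_nonneg (by positivity), Real.norm_eq_abs] at hf
  have hp : 1 ≤ Real.pi ^ 2 := by nlinarith [Real.pi_gt_three]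
  have := le_mul_of_one_le_left (abs_nonneg (∑ z ∈ S, w z * ((t - tht z) ^ 2 - |t - tht z| + 1 / 6))) hp
  have q : 0 ≤ W / K := by positivity
  nlinarith [mul_nonneg hB p3, mul_nonneg q p2]

open MeasureTheory

lemma vM_gI (z : GaussianInt) : vM (gI * z) = vM z := by
  have ha : Associated z (gI * z) := assoc_iff.2 (by simp)
  rcases vM_cases z with h | ⟨p, j, hp, hj, h⟩
  · rcases vM_cases (gI * z) with h' | ⟨p, j, hp, hj, h'⟩
    · rw [h, h']
    · rw [vM_eq hp hj h', vM_eq hp hj (h'.trans ha.symm)]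
  · rw [vM_eq hp hj h, vM_eq hp hj (h.trans ha)]

lemma sum_chi_zero (N : ℕ) (m : ℤ) (hm : ¬ (4:ℤ) ∣ m) (g : ℕ → ℝ) :
    ∑ z ∈ Sle N, ((vM z * g (nrm z) : ℝ) : ℂ) * chi m z = 0 := by
  have hI0 : gI ≠ 0 := by intro h; simpa [gI] using congrArg Zsqrtd.im h
  have hn : ∀ z, nrm (gI * z) = nrm z := fun z => by rw [nrm_mul]; simp [nrm, gI, Zsqrtd.norm_def]
  have hmem : ∀ z ∈ Sle N, gI * z ∈ Sle N := fun z hz => by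
    rw [mem_Sle] at *; exact ⟨mul_ne_zero hI0 hz.1, by rw [hn]; exact hz.2⟩
  have hinj : Set.InjOn (fun z => gI * z) (Sle N : Set GaussianInt) := fun a _ b _ h => mul_left_cancel₀ hI0 h
  have e : ∑ z ∈ Sle N, ((vM z * g (nrm z) : ℝ) : ℂ) * chi m z = chi m gI * ∑ z ∈ Sle N, ((vM z * g (nrm z) : ℝ) : ℂ) * chi m z := by
    have him : (Sle N).image (fun z => gI * z) = Sle N :=
      Finset.eq_of_subset_of_card_le (Finset.image_subset_iff.2 hmem) (by rw [Finset.card_image_of_injOn hinj])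
    conv_lhs => rw [← him]
    rw [Finset.sum_image hinj, Finset.mul_sum]
    refine Finset.sum_congr rfl fun z hz => ?_
    rw [hn, vM_gI z, chi_mul]; ring
  have hc : chi m gI ≠ 1 := by
    have h1 : chi m gI = Complex.I ^ m := by
      have : GaussianInt.toComplex gI = Complex.I := by simp [gI, GaussianInt.toComplex_def]
      rw [chi, this]; simp
    rw [h1]
    intro h
    have h4 : m = 4 * (m / 4) + m % 4 := by omega
    have hr : m % 4 = 1 ∨ m % 4 = 2 ∨ m % 4 = 3 := by omega
    rw [h4, zpow_add₀ Complex.I_ne_zero, zpow_mul] at h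
    have h5 : Complex.I ^ (4:ℤ) = 1 := by exact_mod_cast Complex.I_pow_four
    rw [h5, one_zpow, one_mul] at h
    rcases hr with hr | hr | hr <;> rw [hr] at h
    · rw [zpow_one] at h; simpa using congrArg Complex.im h
    · have : Complex.I ^ (2:ℤ) = -1 := by exact_mod_cast Complex.I_sq
      rw [this] at h; have := congrArg Complex.re h; norm_num at this
    · have : Complex.I ^ (3:ℤ) = -Complex.I := by exact_mod_cast Complex.I_pow_three
      rw [this] at h; simpa using congrArg Complex.im h
  have := sub_eq_zero.2 e
  rw [← one_sub_mul] at this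
  rcases mul_eq_zero.1 this with h | h
  · exact absurd (sub_eq_zero.1 h).symm hc
  · exact h

lemma sum_chi_gg {y : ℝ} (hy : 0 < y) {N : ℕ} (hN : 1 ≤ N * y) (m : ℤ) :
    ∑ z ∈ Sle N, ((vM z * max 0 (1 - (nrm z:ℝ) * y) : ℝ) : ℂ) * chi m z = 4 * gg (lam m) y := by
  rw [gg_eq _ hy hN]
  unfold lam
  rw [sum_fib _ (fun n => ((max 0 (1 - (n:ℝ) * y) : ℝ) : ℂ))]
  rw [← mul_assoc]; norm_num
  refine Finset.sum_congr rfl fun z _ => by ring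

lemma sq_exp_le {c : ℝ} (hc : 0 < c) {Y : ℝ} (hY : 0 ≤ Y) : Y ^ 2 * Real.exp (Y ^ 2 - c * Y) ≤ 8 / c ^ 2 * Real.exp (Y ^ 2 - c / 2 * Y) := by
  have h1 := Real.quadratic_le_exp_of_nonneg (show 0 ≤ c / 2 * Y by positivity)
  have h2 : Real.exp (Y ^ 2 - c / 2 * Y) = Real.exp (c / 2 * Y) * Real.exp (Y ^ 2 - c * Y) := by
    rw [← Real.exp_add]; ring_nf
  rw [h2, ← mul_assoc]
  gcongr
  have h3 : (c / 2 * Y) ^ 2 / 2 ≤ Real.exp (c / 2 * Y) := by nlinarith [show 0 ≤ c / 2 * Y by positivity]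
  calc Y ^ 2 = 8 / c ^ 2 * ((c / 2 * Y) ^ 2 / 2) := by field_simp; norm_num
    _ ≤ _ := by gcongr

lemma chi_sum_bound : ∃ c > 0, c ≤ 1 / 2 ∧ ∃ C > 0, ∀ Y : ℝ, 2 ≤ Y → ∀ N : ℕ, Real.exp (Y ^ 2) ≤ N → ∀ m : ℤ, |(m:ℝ)| ≤ Real.exp Y →
    ‖∑ z ∈ Sle N, ((vM z * max 0 (1 - (nrm z:ℝ) * Real.exp (-Y ^ 2)) : ℝ) : ℂ) * chi m z - (dlt m * (2 * Real.exp (Y ^ 2)) : ℝ)‖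
      ≤ C * Real.exp (Y ^ 2 - c * Y) := by
  obtain ⟨c, hc, hc1, C, hC, h⟩ := psi_bound
  refine ⟨c / 2, by positivity, by linarith, 4 * (C * (8 / c ^ 2)) + 4, by positivity, ?_⟩
  intro Y hY N hN m hm
  set y := Real.exp (-Y ^ 2) with hy
  have hy0 : 0 < y := Real.exp_pos _
  have hyx : Real.exp (Y ^ 2) = 1 / y := by rw [hy, Real.exp_neg]; simp
  by_cases h4 : (4:ℤ) ∣ m
  · rw [sum_chi_gg hy0 (by rwa [hyx, div_le_iff₀ hy0] at hN)]
    have h1 := h Y hY m h4 hm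
    have h2 := sq_exp_le hc (show 0 ≤ Y by linarith)
    have e : 4 * gg (lam m) y - (dlt m * (2 * Real.exp (Y ^ 2)) : ℝ) = 4 * psi m y + ((dlt m * (4 * pp y - 2 * Real.exp (Y ^ 2)) : ℝ) : ℂ) := by
      simp only [psi, Complex.real_smul]; push_cast; ring
    rw [e]
    have h3 : ‖((dlt m * (4 * pp y - 2 * Real.exp (Y ^ 2)) : ℝ) : ℂ)‖ ≤ 4 * 1 := by
      rw [Complex.norm_real, norm_mul]
      have d : ‖dlt m‖ ≤ 1 := by unfold dlt; split_ifs <;> simp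
      have hy1 : y ≤ 1 := Real.exp_le_one_iff.2 (by nlinarith)
      have p : ‖4 * pp y - 2 * Real.exp (Y ^ 2)‖ ≤ 4 := by
        rw [pp, max_eq_right (by linarith), hyx, Real.norm_eq_abs]
        have : 4 * ((1 - y) ^ 2 / (2 * y)) - 2 * (1 / y) = 2 * y - 4 := by field_simp; ring
        rw [this, abs_le]; constructor <;> linarith
      calc _ ≤ 1 * (4:ℝ) := by gcongr
        _ = _ := by norm_num
    have h5 : 1 ≤ Real.exp (Y ^ 2 - c / 2 * Y) := Real.one_le_exp (by nlinarith)
    refine (norm_add_le _ _).trans ?_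
    rw [norm_mul, Complex.norm_ofNat]
    have : C * (Y ^ 2 * Real.exp (Y ^ 2 - c * Y)) ≤ C * (8 / c ^ 2 * Real.exp (Y ^ 2 - c / 2 * Y)) := by gcongr
    nlinarith
  · have hm0 : dlt m = 0 := by unfold dlt; rw [if_neg]; rintro rfl; exact h4 (dvd_zero _)
    rw [sum_chi_zero N m h4 (fun n => max 0 (1 - (n:ℝ) * y)), hm0]
    simp; positivity

lemma sector_smooth : ∃ c > 0, c ≤ 1 ∧ ∃ C > 0, ∀ Y : ℝ, 2 ≤ Y → ∀ N : ℕ, Real.exp (Y ^ 2) ≤ N → ∀ α β : ℝ, 0 ≤ α → α ≤ β → β ≤ 2 * Real.pi →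
    |∑ z ∈ Sle N, vM z * max 0 (1 - (nrm z:ℝ) * Real.exp (-Y ^ 2)) *
      (if α ≤ arg2pi (GaussianInt.toComplex z) ∧ arg2pi (GaussianInt.toComplex z) ≤ β then 1 else 0) - (β - α) / Real.pi * Real.exp (Y ^ 2)|
      ≤ C * Real.exp (Y ^ 2 - c * Y) := by
  obtain ⟨c, hc, hc1, C, hC, h⟩ := chi_sum_bound
  obtain ⟨D, hD, hQ⟩ := Q_bound
  refine ⟨c / 2, by positivity, by linarith, 2 * (2 + C + 2 * (D * (C + (2 + C)))) + C, by positivity, ?_⟩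
  intro Y hY N hN α β hα hαβ hβ
  set w : GaussianInt → ℝ := fun z => vM z * max 0 (1 - (nrm z:ℝ) * Real.exp (-Y ^ 2)) with hw
  set E := Real.exp (Y ^ 2) with hE
  have hw0 : ∀ z ∈ Sle N, 0 ≤ w z := fun z _ => mul_nonneg (vM_nonneg z) (le_max_left _ _)
  set W := ∑ z ∈ Sle N, w z with hW
  have hW0 : 0 ≤ W := Finset.sum_nonneg hw0
  set q := Real.exp (-(c / 2 * Y)) with hq
  have hq0 : 0 < q := Real.exp_pos _
  have hq1 : q ≤ 1 := Real.exp_le_one_iff.2 (by nlinarith)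
  have hE0 : 0 < E := Real.exp_pos _
  have e1 : Real.exp (Y ^ 2 - c * Y) = E * q ^ 2 := by
    rw [hq, hE, ← Real.exp_nat_mul, ← Real.exp_add]; congr 1; push_cast; ring
  have e2 : Real.exp (Y ^ 2 - c / 2 * Y) = E * q := by
    rw [hq, hE, ← Real.exp_add]; congr 1
  have hWE : |W - 2 * E| ≤ C * (E * q ^ 2) := by
    have := h Y hY N hN 0 (by simp; positivity)
    rw [e1] at this
    simp only [chi_zero, dlt, if_true, mul_one, one_mul, ← Complex.ofReal_sum, ← Complex.ofReal_sub, Complex.norm_real, Real.norm_eq_abs] at this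
    exact this
  have hWle : W ≤ (2 + C) * E := by
    have := (abs_le.1 hWE).2
    have : C * (E * q ^ 2) ≤ C * (E * 1) := by gcongr; nlinarith
    linarith
  have hQ' := hQ (Sle N) w (C * (E * q ^ 2)) W (Real.exp (Y / 2)) (fun z hz => (mem_Sle.1 hz).1) (by positivity) hW0 (Real.exp_pos _)
    (fun n => by
      refine (norm_sum_le _ _).trans (Finset.sum_le_sum fun z hz => ?_)
      rw [norm_mul, norm_chi _ (mem_Sle.1 hz).1, mul_one, Complex.norm_real, Real.norm_of_nonneg (hw0 z hz)])
    (fun n hn hnK => by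
      have := h Y hY N hN n (by
        rw [← Real.exp_nat_mul] at hnK
        push_cast at *
        rw [abs_of_nonneg (by positivity)]; convert hnK using 2; ring)
      rw [e1] at this
      have hd : dlt (n:ℤ) = 0 := by unfold dlt; rw [if_neg]; exact_mod_cast hn.ne'
      rw [hd, zero_mul, Complex.ofReal_zero, sub_zero] at this
      exact this)
  have hε : C * (E * q ^ 2) + W / Real.exp (Y / 2) ≤ (C + (2 + C)) * (E * q ^ 2) := by
    have : W / Real.exp (Y / 2) ≤ (2 + C) * E * q ^ 2 := by
      rw [div_eq_mul_inv, ← Real.exp_neg]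
      have : Real.exp (-(Y / 2)) ≤ q ^ 2 := by
        rw [hq, ← Real.exp_nat_mul]; refine Real.exp_le_exp.2 ?_; push_cast; nlinarith
      gcongr
    linarith
  have key := fun t ht0 ht1 => abs_sector (Sle N) w tht hw0 (fun z _ => tht_mem z) hq0 hq1 hQ' (t := t) ht0 ht1
  have hpi := Real.pi_pos
  have k1 := key (β / (2 * Real.pi)) (by apply div_nonneg <;> linarith) ((div_le_one (by positivity)).2 hβ)
  have k2 := key (α / (2 * Real.pi)) (by apply div_nonneg <;> linarith) ((div_le_one (by positivity)).2 (by linarith))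
  have e3 : ∑ z ∈ Sle N, w z * (if α ≤ arg2pi (GaussianInt.toComplex z) ∧ arg2pi (GaussianInt.toComplex z) ≤ β then 1 else 0) =
      ∑ z ∈ Sle N, w z * (if tht z ≤ β / (2 * Real.pi) then 1 else 0) - ∑ z ∈ Sle N, w z * (if tht z < α / (2 * Real.pi) then 1 else 0) := by
    rw [← Finset.sum_sub_distrib]
    refine Finset.sum_congr rfl fun z _ => ?_
    rw [← mul_sub]; congr 1
    simp only [tht, div_le_div_iff_of_pos_right (show 0 < 2 * Real.pi by positivity), div_lt_div_iff_of_pos_right (show 0 < 2 * Real.pi by positivity)]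
    split_ifs <;> grind
  have mono : ∀ t, ∑ z ∈ Sle N, w z * (if tht z < t then (1:ℝ) else 0) ≤ ∑ z ∈ Sle N, w z * (if tht z ≤ t then 1 else 0) := fun t =>
    Finset.sum_le_sum fun z hz => mul_le_mul_of_nonneg_left (by split_ifs <;> grind) (hw0 z hz)
  have m1 := mono (β / (2 * Real.pi))
  have m2 := mono (α / (2 * Real.pi))
  rw [e3, e2]
  set G := W * q + 2 * (D * (C * (E * q ^ 2) + W / Real.exp (Y / 2)) / q) with hG
  have hGle : G ≤ (2 + C + 2 * (D * (C + (2 + C)))) * (E * q) := by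
    have a : W * q ≤ (2 + C) * E * q := by gcongr
    have b : D * (C * (E * q ^ 2) + W / Real.exp (Y / 2)) / q ≤ D * ((C + (2 + C)) * (E * q ^ 2)) / q := by gcongr
    have b2 : D * ((C + (2 + C)) * (E * q ^ 2)) / q = D * (C + (2 + C)) * (E * q) := by field_simp
    rw [b2] at b
    linarith
  set τ := (β - α) / (2 * Real.pi) with hτ
  have hτ0 : 0 ≤ τ := by apply div_nonneg <;> linarith
  have hτ1 : τ ≤ 1 := (div_le_one (by positivity)).2 (by linarith)
  have e5 : (β - α) / Real.pi * E = 2 * E * τ := by rw [hτ]; field_simp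
  have e6 : W * (β / (2 * Real.pi)) - W * (α / (2 * Real.pi)) = W * τ := by rw [hτ]; ring
  have d : |(W - 2 * E) * τ| ≤ C * (E * q) := by
    rw [abs_mul, abs_of_nonneg hτ0]
    calc _ ≤ C * (E * q ^ 2) * 1 := by gcongr
      _ ≤ _ := by rw [mul_one]; gcongr; nlinarith
  rw [e5, abs_le]
  rw [abs_le] at d
  constructor <;> linarith [k1.1, k1.2, k2.1, k2.2, d.1, d.2]

open MeasureTheory

open Classical in
noncomputable def ind (α β : ℝ) (z : GaussianInt) : ℝ :=
  if α ≤ arg2pi (GaussianInt.toComplex z) ∧ arg2pi (GaussianInt.toComplex z) ≤ β then 1 else 0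

lemma ind_nonneg (α β : ℝ) (z : GaussianInt) : 0 ≤ ind α β z := by unfold ind; split_ifs <;> norm_num
lemma ind_le (α β : ℝ) (z : GaussianInt) : ind α β z ≤ 1 := by unfold ind; split_ifs <;> norm_num

noncomputable def SS (α β : ℝ) (N : ℕ) (x : ℝ) : ℝ := ∑ z ∈ Sle N, vM z * ind α β z * max 0 (x - nrm z)

lemma SS_bound : ∃ c > 0, c ≤ 1 ∧ ∃ C > 0, ∀ x : ℝ, Real.exp 4 ≤ x → ∀ N : ℕ, x ≤ N → ∀ α β : ℝ, 0 ≤ α → α ≤ β → β ≤ 2 * Real.pi →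
    |SS α β N x - (β - α) / Real.pi * x ^ 2| ≤ C * (x ^ 2 * Real.exp (-(c * √(Real.log x)))) := by
  obtain ⟨c, hc, hc1, C, hC, h⟩ := sector_smooth
  refine ⟨c, hc, hc1, C, hC, fun x hx N hN α β h1 h2 h3 => ?_⟩
  have hx0 : 0 < x := (Real.exp_pos _).trans_le hx
  have hl : 4 ≤ Real.log x := (Real.le_log_iff_exp_le hx0).2 hx
  have hY2 : √(Real.log x) ^ 2 = Real.log x := Real.sq_sqrt (by linarith)
  have hY : 2 ≤ √(Real.log x) := Real.le_sqrt_of_sq_le (by linarith)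
  have := h _ hY N (by rwa [hY2, Real.exp_log hx0]) α β h1 h2 h3
  rw [hY2, Real.exp_log hx0, sub_eq_add_neg (Real.log x), Real.exp_add, Real.exp_neg (Real.log x), Real.exp_log hx0] at this
  have e : SS α β N x - (β - α) / Real.pi * x ^ 2 = x * (∑ z ∈ Sle N, vM z * max 0 (1 - (nrm z:ℝ) * x⁻¹) *
      (if α ≤ arg2pi (GaussianInt.toComplex z) ∧ arg2pi (GaussianInt.toComplex z) ≤ β then 1 else 0) - (β - α) / Real.pi * x) := by
    rw [mul_sub, Finset.mul_sum, SS]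
    congr 1
    · refine Finset.sum_congr rfl fun z _ => ?_
      have : max 0 (x - nrm z) = x * max 0 (1 - (nrm z:ℝ) * x⁻¹) := by
        rw [mul_max_of_nonneg _ _ hx0.le, mul_zero]; congr 1
        field_simp
      rw [this, ind]; simp only [mul_ite, mul_one, mul_zero, ite_mul, zero_mul]
      split_ifs <;> ring
    · ring
  rw [e, abs_mul, abs_of_pos hx0]
  calc _ ≤ x * (C * (x * Real.exp (-(c * √(Real.log x))))) := by gcongr
    _ = _ := by ring

lemma sqrt_log_half {x y : ℝ} (hx : Real.exp 4 ≤ x) (hy : x / 2 ≤ y) : √(Real.log x) - 1 ≤ √(Real.log y) := by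
  have hx0 : 0 < x := (Real.exp_pos _).trans_le hx
  have hl : 4 ≤ Real.log x := (Real.le_log_iff_exp_le hx0).2 hx
  apply Real.le_sqrt_of_sq_le
  have h1 : Real.log x - 1 ≤ Real.log y := by
    have := Real.log_le_log (by positivity) hy
    rw [Real.log_div hx0.ne' (by norm_num)] at this
    have := Real.log_two_lt_d9
    linarith
  have hY2 : √(Real.log x) ^ 2 = Real.log x := Real.sq_sqrt (by linarith)
  have hY : 2 ≤ √(Real.log x) := Real.le_sqrt_of_sq_le (by linarith)
  nlinarith

noncomputable def PP (α β : ℝ) (n : ℕ) : ℝ := ∑ z ∈ Sle n, vM z * ind α β z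

lemma PP_bound : ∃ c > 0, c ≤ 1 / 2 ∧ ∃ C > 0, ∀ x : ℝ, 2 * Real.exp 4 ≤ x → ∀ α β : ℝ, 0 ≤ α → α ≤ β → β ≤ 2 * Real.pi →
    |PP α β ⌊x⌋₊ - 2 * ((β - α) / Real.pi) * x| ≤ C * (x * Real.exp (-(c * √(Real.log x)))) := by
  obtain ⟨c, hc, hc1, C, hC, h⟩ := SS_bound
  refine ⟨c / 2, by positivity, by linarith, 2 + 10 * C, by positivity, fun x hx α β h1 h2 h3 => ?_⟩
  have he4 := Real.exp_pos 4
  have hx0 : 0 < x := by linarith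
  set κ := (β - α) / Real.pi with hκ
  have hpi := Real.pi_pos
  have hκ0 : 0 ≤ κ := by apply div_nonneg <;> linarith
  have hκ2 : κ ≤ 2 := (div_le_iff₀ hpi).2 (by linarith)
  set q := Real.exp (-(c / 2 * √(Real.log x))) with hq
  have hq0 : 0 < q := Real.exp_pos _
  have hq1 : q ≤ 1 := Real.exp_le_one_iff.2 (by have := Real.sqrt_nonneg (Real.log x); rw [neg_nonpos]; positivity)
  have hq2 : Real.exp (-(c * √(Real.log x))) = q ^ 2 := by
    rw [hq, ← Real.exp_nat_mul]; congr 1; push_cast; ring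
  obtain ⟨N, hN⟩ := exists_nat_ge (2 * x)
  set k := x * q / 2 with hk
  have hk0 : 0 < k := by positivity
  have hkx : k ≤ x / 2 := by rw [hk]; nlinarith
  have hP : PP α β ⌊x⌋₊ = ∑ z ∈ Sle N, vM z * ind α β z * (if (nrm z : ℝ) ≤ x then 1 else 0) := by
    simp only [mul_ite, mul_one, mul_zero, ← Finset.sum_filter]
    refine Finset.sum_congr ?_ fun _ _ => rfl
    ext z
    simp only [Finset.mem_filter, mem_Sle, Nat.le_floor_iff hx0.le]
    constructor
    · rintro ⟨a, b⟩; exact ⟨⟨a, by have : (nrm z:ℝ) ≤ N := by linarith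
                                   exact_mod_cast this⟩, b⟩
    · rintro ⟨⟨a, _⟩, b⟩; exact ⟨a, b⟩
  have hv : ∀ z, 0 ≤ vM z * ind α β z := fun z => mul_nonneg (vM_nonneg z) (ind_nonneg α β z)
  have up : k * PP α β ⌊x⌋₊ ≤ SS α β N (x + k) - SS α β N x := by
    rw [hP, Finset.mul_sum, SS, SS, ← Finset.sum_sub_distrib]
    refine Finset.sum_le_sum fun i hi => ?_
    rw [← mul_sub, mul_left_comm]
    refine mul_le_mul_of_nonneg_left ?_ (hv i)
    split_ifs with hh
    · rw [max_eq_right (by linarith), max_eq_right (by linarith)]; linarith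
    · have := max_le_max (le_refl (0:ℝ)) (show x - nrm i ≤ x + k - nrm i by linarith)
      linarith
  have lo : SS α β N x - SS α β N (x - k) ≤ k * PP α β ⌊x⌋₊ := by
    rw [hP, Finset.mul_sum, SS, SS, ← Finset.sum_sub_distrib]
    refine Finset.sum_le_sum fun i hi => ?_
    rw [← mul_sub, mul_left_comm]
    refine mul_le_mul_of_nonneg_left ?_ (hv i)
    split_ifs with hh
    · rw [max_eq_right (by linarith)]; linarith [le_max_right 0 (x - k - nrm i)]
    · rw [max_eq_left (by linarith), max_eq_left (by linarith)]; linarith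
  have b0 := h x (by linarith) N (by linarith) α β h1 h2 h3
  have b1 := h (x + k) (by linarith) N (by linarith) α β h1 h2 h3
  have b2 := h (x - k) (by linarith) N (by linarith) α β h1 h2 h3
  have e1 : C * ((x + k) ^ 2 * Real.exp (-(c * √(Real.log (x + k))))) ≤ C * ((2 * x) ^ 2 * q ^ 2) := by
    rw [← hq2]; gcongr
    · linarith
    · linarith
  have e2 : C * ((x - k) ^ 2 * Real.exp (-(c * √(Real.log (x - k))))) ≤ C * (x ^ 2 * (3 * q ^ 2)) := by
    have h5 : Real.exp (-(c * √(Real.log (x - k)))) ≤ 3 * q ^ 2 := by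
      have := sqrt_log_half (x := x) (y := x - k) (by linarith) (by linarith)
      have h6 : Real.exp 1 ≤ 3 := by linarith [Real.exp_one_lt_d9]
      calc _ ≤ Real.exp (1 + -(c * √(Real.log x))) := Real.exp_le_exp.2 (by nlinarith)
        _ = Real.exp 1 * q ^ 2 := by rw [Real.exp_add, hq2]
        _ ≤ _ := by gcongr
    have : 0 ≤ x - k := by linarith
    gcongr
    linarith
  rw [hq2] at b0
  rw [abs_le] at b0 b1 b2
  have ek : x ^ 2 * q ^ 2 = 2 * x * q * k := by rw [hk]; ring
  have ek2 : κ * k ^ 2 ≤ 2 * (x * q * k) := by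
    have : k ^ 2 ≤ x * q * k := by rw [sq]; gcongr; rw [hk]; linarith [mul_pos hx0 hq0]
    nlinarith [sq_nonneg k]
  have hCk : 0 ≤ C * (x * q * k) := by positivity
  rw [abs_le]
  constructor
  · refine le_of_mul_le_mul_left ?_ hk0
    have : C * (x ^ 2 * (3 * q ^ 2)) = 6 * (C * (x * q * k)) := by linear_combination 3 * C * ek
    have : C * (x ^ 2 * q ^ 2) = 2 * (C * (x * q * k)) := by linear_combination C * ek
    linarith [b0.1, b0.2, b1.1, b1.2, b2.1, b2.2]
  · refine le_of_mul_le_mul_left ?_ hk0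
    have : C * ((2 * x) ^ 2 * q ^ 2) = 8 * (C * (x * q * k)) := by linear_combination 4 * C * ek
    have : C * (x ^ 2 * q ^ 2) = 2 * (C * (x * q * k)) := by linear_combination C * ek
    linarith [b0.1, b0.2, b1.1, b1.2, b2.1, b2.2]

open MeasureTheory

open Classical in
noncomputable def TH (α β : ℝ) (n : ℕ) : ℝ := ∑ z ∈ Sle n, if Prime z then Real.log (nrm z) * ind α β z else 0

open Classical in
lemma bad_card (n : ℕ) (hn : 0 < n) : (((Sle n).filter (fun z => vM z ≠ 0 ∧ ¬ Prime z)).card : ℝ) ≤ 128 * (Nat.sqrt n * (Nat.log 2 n + 1)) := by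
  have hsub : (Sle n).filter (fun z => vM z ≠ 0 ∧ ¬ Prime z) ⊆
      (Sle (Nat.sqrt n) ×ˢ Finset.range (Nat.log 2 n + 1)).biUnion
        (fun a => ({a.1 ^ a.2, -a.1 ^ a.2, gI * a.1 ^ a.2, -gI * a.1 ^ a.2} : Finset GaussianInt)) := by
    intro z hz
    rw [Finset.mem_filter, mem_Sle] at hz
    obtain ⟨⟨hz0, hzn⟩, hv, hnp⟩ := hz
    rcases vM_cases z with h | ⟨p, j, hp, hj, h⟩
    · exact absurd h hv
    have hj2 : 2 ≤ j := by
      by_contra hc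
      have : j = 1 := by omega
      subst this
      rw [pow_one] at h
      exact hnp (h.prime hp)
    have hnz : nrm p ^ j ≤ n := by rw [← nrm_pow, nrm_assoc h]; exact hzn
    have h2 := nrm_prime hp
    rw [Finset.mem_biUnion]
    refine ⟨(p, j), ?_, assoc_iff.1 h⟩
    rw [Finset.mem_product, mem_Sle, Finset.mem_range]
    refine ⟨⟨hp.ne_zero, ?_⟩, ?_⟩
    · rw [Nat.le_sqrt']
      exact (Nat.pow_le_pow_right (show 0 < nrm p by omega) hj2).trans hnz
    · rw [Nat.lt_succ_iff]
      exact Nat.le_log_of_pow_le (by norm_num) ((Nat.pow_le_pow_left h2 j).trans hnz)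
  have h1 := (Finset.card_le_card hsub).trans (Finset.card_biUnion_le_card_mul _ _ 4 fun a _ => Finset.card_le_four)
  rw [Finset.card_product, Finset.card_range] at h1
  have h2 : (((Sle n).filter (fun z => vM z ≠ 0 ∧ ¬ Prime z)).card : ℝ) ≤ (Sle (Nat.sqrt n)).card * (Nat.log 2 n + 1) * 4 := by exact_mod_cast h1
  have h3 := card_Sle (Nat.sqrt n)
  have h4 : ((Sle (Nat.sqrt n)).card : ℝ) * (Nat.log 2 n + 1) ≤ 32 * Nat.sqrt n * (Nat.log 2 n + 1) := by gcongr
  linarith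

lemma PP_TH (α β : ℝ) (n : ℕ) (hn : 0 < n) : 0 ≤ PP α β n - TH α β n ∧ PP α β n - TH α β n ≤ 128 * (Nat.sqrt n * (Nat.log 2 n + 1)) * Real.log n := by
  classical
  have e : PP α β n - TH α β n = ∑ z ∈ (Sle n).filter (fun z => vM z ≠ 0 ∧ ¬ Prime z), vM z * ind α β z := by
    rw [PP, TH, ← Finset.sum_sub_distrib, Finset.sum_filter]
    refine Finset.sum_congr rfl fun z hz => ?_
    by_cases hp : Prime z
    · rw [if_pos hp, if_neg (by tauto), vM_eq (j := 1) hp one_pos (by rw [pow_one])]; ring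
    · by_cases hv : vM z = 0
      · simp [hv, hp]
      · simp [hv, hp]
  rw [e]
  refine ⟨Finset.sum_nonneg fun z _ => mul_nonneg (vM_nonneg z) (ind_nonneg α β z), ?_⟩
  have h1 : ∀ z ∈ (Sle n).filter (fun z => vM z ≠ 0 ∧ ¬ Prime z), vM z * ind α β z ≤ Real.log n := fun z hz => by
    have hz' := mem_Sle.1 (Finset.mem_filter.1 hz).1
    have : Real.log (nrm z) ≤ Real.log n := Real.log_le_log (by exact_mod_cast nrm_pos hz'.1) (by exact_mod_cast hz'.2)
    have := vM_le z
    have := mul_le_of_le_one_right (vM_nonneg z) (ind_le α β z)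
    linarith
  refine (Finset.sum_le_card_nsmul _ _ _ h1).trans ?_
  rw [nsmul_eq_mul]
  exact mul_le_mul_of_nonneg_right (bad_card n hn) (Real.log_natCast_nonneg n)

lemma pw_bound {x : ℝ} (hx : 1 ≤ x) : 128 * (Nat.sqrt ⌊x⌋₊ * (Nat.log 2 ⌊x⌋₊ + 1)) * Real.log ⌊x⌋₊ ≤ 30000 * (x * Real.exp (-√(Real.log x))) := by
  have hx0 : 0 < x := by linarith
  set L := Real.log x with hL
  have hL0 : 0 ≤ L := Real.log_nonneg hx
  have hfl : (⌊x⌋₊ : ℝ) ≤ x := Nat.floor_le hx0.le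
  have hf1 : 1 ≤ ⌊x⌋₊ := Nat.le_floor (by simpa using hx)
  have h1 : Real.log ⌊x⌋₊ ≤ L := Real.log_le_log (by exact_mod_cast hf1) hfl
  have h2 : (Nat.log 2 ⌊x⌋₊ : ℝ) ≤ 2 * L := by
    have a : (2:ℝ) ^ Nat.log 2 ⌊x⌋₊ ≤ x := by
      have := Nat.pow_log_le_self 2 (x := ⌊x⌋₊) (by omega)
      have : ((2 ^ Nat.log 2 ⌊x⌋₊ : ℕ) : ℝ) ≤ ⌊x⌋₊ := by exact_mod_cast this
      push_cast at this; linarith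
    have b := Real.log_le_log (by positivity) a
    rw [Real.log_pow] at b
    have := Real.log_two_gt_d9
    nlinarith [Nat.cast_nonneg (α := ℝ) (Nat.log 2 ⌊x⌋₊)]
  have h3 : (Nat.sqrt ⌊x⌋₊ : ℝ) ≤ Real.exp (L / 2) := by
    have : (Nat.sqrt ⌊x⌋₊ : ℝ) ≤ √x := (Real.nat_sqrt_le_real_sqrt).trans (Real.sqrt_le_sqrt hfl)
    rw [Real.sqrt_eq_rpow, Real.rpow_def_of_pos hx0] at this
    convert this using 2; ring
  have h4 : √L ≤ L / 4 + 1 := by nlinarith [Real.sq_sqrt hL0, sq_nonneg (√L - 2)]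
  have h5 := Real.quadratic_le_exp_of_nonneg (show 0 ≤ L / 4 by positivity)
  have h6 : x = Real.exp L := (Real.exp_log hx0).symm
  have h7 : Real.exp (L / 2) * Real.exp (L / 4) ≤ 3 * (x * Real.exp (-√L)) := by
    have : Real.exp 1 ≤ 3 := by linarith [Real.exp_one_lt_d9]
    calc _ ≤ Real.exp 1 * (Real.exp L * Real.exp (-√L)) := by
          simp only [← Real.exp_add]; exact Real.exp_le_exp.2 (by linarith)
      _ ≤ 3 * (Real.exp L * Real.exp (-√L)) := by gcongr
      _ = _ := by rw [← h6]
  calc _ ≤ 128 * (Real.exp (L / 2) * (2 * L + 1)) * L := by gcongr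
    _ = 128 * Real.exp (L / 2) * (2 * L ^ 2 + L) := by ring
    _ ≤ 128 * Real.exp (L / 2) * (70 * Real.exp (L / 4)) := by gcongr; nlinarith
    _ = 8960 * (Real.exp (L / 2) * Real.exp (L / 4)) := by ring
    _ ≤ _ := by nlinarith [mul_pos hx0 (Real.exp_pos (-√L))]

lemma TH_bound : ∃ c > 0, c ≤ 1 / 2 ∧ ∃ C > 0, ∀ x : ℝ, 2 ≤ x → ∀ α β : ℝ, 0 ≤ α → α ≤ β → β ≤ 2 * Real.pi →
    |TH α β ⌊x⌋₊ - 2 * ((β - α) / Real.pi) * x| ≤ C * (x * Real.exp (-(c * √(Real.log x)))) := by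
  obtain ⟨c, hc, hc1, C, hC, h⟩ := PP_bound
  set X := 2 * Real.exp 4 with hX
  have hX0 : 0 < X := by positivity
  refine ⟨c, hc, hc1, C + 30000 + (32 * X + 4) * Real.exp √X, by positivity, fun x hx α β h1 h2 h3 => ?_⟩
  have hx0 : 0 < x := by linarith
  have hP : 0 < (32 * X + 4) * Real.exp √X := by positivity
  have hr : 0 < x * Real.exp (-(c * √(Real.log x))) := by positivity
  have hf1 : 0 < ⌊x⌋₊ := Nat.floor_pos.2 (by linarith)
  have hPT := PP_TH α β ⌊x⌋₊ hf1
  by_cases hc' : X ≤ x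
  · have a := h x hc' α β h1 h2 h3
    have b := pw_bound (show 1 ≤ x by linarith)
    have d : Real.exp (-√(Real.log x)) ≤ Real.exp (-(c * √(Real.log x))) := Real.exp_le_exp.2 (by nlinarith [Real.sqrt_nonneg (Real.log x)])
    have e := mul_le_mul_of_nonneg_left d hx0.le
    rw [abs_le] at *
    have := mul_pos hP hr
    constructor <;> linarith [a.1, a.2, hPT.1, hPT.2]
  · push Not at hc'
    have hT0 : 0 ≤ TH α β ⌊x⌋₊ := Finset.sum_nonneg fun z _ => by
      split_ifs
      · exact mul_nonneg (Real.log_natCast_nonneg _) (ind_nonneg _ _ _)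
      · exact le_rfl
    have hl : Real.log x ≤ X := (Real.log_le_self hx0.le).trans hc'.le
    have hP1 : PP α β ⌊x⌋₊ ≤ 32 * x * X := by
      have : ∀ z ∈ Sle ⌊x⌋₊, vM z * ind α β z ≤ X := fun z hz => by
        have hz' := mem_Sle.1 hz
        have h0 : (nrm z:ℝ) ≤ x := (Nat.le_floor_iff hx0.le).1 hz'.2
        have : Real.log (nrm z) ≤ Real.log x := Real.log_le_log (by exact_mod_cast nrm_pos hz'.1) h0
        have := vM_le z
        have := mul_le_of_le_one_right (vM_nonneg z) (ind_le α β z)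
        linarith
      refine (Finset.sum_le_card_nsmul _ _ _ this).trans ?_
      rw [nsmul_eq_mul]
      have a := card_Sle ⌊x⌋₊
      have b := Nat.floor_le hx0.le
      gcongr; linarith
    have hpi := Real.pi_pos
    have hκ0 : 0 ≤ (β - α) / Real.pi := by apply div_nonneg <;> linarith
    have hκ2 : (β - α) / Real.pi ≤ 2 := (div_le_iff₀ hpi).2 (by linarith)
    have f : 1 ≤ Real.exp √X * Real.exp (-(c * √(Real.log x))) := by
      rw [← Real.exp_add]
      apply Real.one_le_exp
      have := Real.sqrt_le_sqrt hl
      nlinarith [Real.sqrt_nonneg (Real.log x)]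
    have g : (32 * X + 4) * x ≤ (32 * X + 4) * x * (Real.exp √X * Real.exp (-(c * √(Real.log x)))) := le_mul_of_one_le_right (by positivity) f
    have g2 : (0:ℝ) ≤ (C + 30000) * (x * Real.exp (-(c * √(Real.log x)))) := by positivity
    have g3 : (β - α) / Real.pi * x ≤ 2 * x := by gcongr
    have g4 : 0 ≤ (β - α) / Real.pi * x := by positivity
    have g5 : 0 ≤ X * x := by positivity
    rw [abs_le]
    constructor <;> linarith [hPT.1]

open MeasureTheory

open Classical in
noncomputable def CC (α β : ℝ) (n : ℕ) : ℝ := ∑ z ∈ Sle n, if Prime z then ind α β z else 0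
open Classical in
noncomputable def cc (α β : ℝ) (n : ℕ) : ℝ := ∑ z ∈ Sn n, if Prime z then Real.log (nrm z) * ind α β z else 0

lemma sum_Sle (g : GaussianInt → ℝ) (N : ℕ) : ∑ n ∈ Finset.Icc 0 N, ∑ z ∈ Sn n, g z = ∑ z ∈ Sle N, g z := by
  rw [← Finset.sum_fiberwise_of_maps_to (s := Sle N) (t := Finset.Icc 0 N) (g := nrm)
    (fun z hz => by rw [Finset.mem_Icc]; exact ⟨Nat.zero_le _, (mem_Sle.1 hz).2⟩)]
  refine Finset.sum_congr rfl fun n hn => Finset.sum_congr ?_ fun _ _ => rfl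
  ext z
  rw [mem_Sn, Finset.mem_filter, mem_Sle]
  have := (Finset.mem_Icc.1 hn).2
  constructor
  · rintro ⟨a, b⟩; exact ⟨⟨a, by omega⟩, b⟩
  · rintro ⟨⟨a, _⟩, b⟩; exact ⟨a, b⟩

lemma cc_sum (α β : ℝ) (N : ℕ) : ∑ n ∈ Finset.Icc 0 N, cc α β n = TH α β N := sum_Sle _ N

lemma cc_one (α β : ℝ) : cc α β 1 = 0 := Finset.sum_eq_zero fun z hz => by
  rw [mem_Sn] at hz; rw [hz.2]; simp

lemma cc_log (α β : ℝ) (N : ℕ) : ∑ n ∈ Finset.Icc 0 N, (Real.log n)⁻¹ * cc α β n = CC α β N := by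
  rw [CC, ← sum_Sle]
  refine Finset.sum_congr rfl fun n _ => ?_
  rw [cc, Finset.mul_sum]
  refine Finset.sum_congr rfl fun z hz => ?_
  split_ifs with hp
  · rw [mem_Sn] at hz
    have h2 := nrm_prime hp
    rw [hz.2] at h2 ⊢
    have : Real.log n ≠ 0 := (Real.log_pos (by exact_mod_cast h2)).ne'
    field_simp
  · simp

lemma log_ne {v : ℝ} (hv : 2 ≤ v) : Real.log v ≠ 0 := (Real.log_pos (by linarith)).ne'

lemma CC_eq (α β : ℝ) {u : ℝ} (hu : 2 ≤ u) :
    CC α β ⌊u⌋₊ = TH α β ⌊u⌋₊ / Real.log u + ∫ t in (2:ℝ)..u, (t⁻¹ / Real.log t ^ 2) * TH α β ⌊t⌋₊ := by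
  rw [← cc_log, sum_mul_eq_sub_integral_mul₁ (cc α β) (f := fun n => (Real.log n)⁻¹) (by simp [cc, Sn_zero]) (cc_one α β),
    ← intervalIntegral.integral_of_le hu]
  · simp only [cc_sum, Real.deriv_inv_log_apply]
    have : ∀ t : ℝ, -t⁻¹ / Real.log t ^ 2 * TH α β ⌊t⌋₊ = -(t⁻¹ / Real.log t ^ 2 * TH α β ⌊t⌋₊) := fun t => by ring
    simp only [this, intervalIntegral.integral_neg]
    ring
  · intro z ⟨h1, _⟩
    have : z ≠ 0 := by linarith
    have := log_ne h1
    fun_prop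
  · refine ContinuousOn.integrableOn_Icc fun z ⟨h1, _⟩ ↦ ContinuousWithinAt.congr ?_
      (fun _ _ ↦ Real.deriv_inv_log_apply) Real.deriv_inv_log_apply
    have : z ≠ 0 := by linarith
    have : Real.log z ^ 2 ≠ 0 := pow_ne_zero 2 (log_ne h1)
    exact ContinuousAt.continuousWithinAt <| by fun_prop

lemma li_eq {u : ℝ} (hu : 2 ≤ u) : ∫ v in (2:ℝ)..u, 1 / Real.log v = u / Real.log u - 2 / Real.log 2 + ∫ v in (2:ℝ)..u, 1 / Real.log v ^ 2 := by
  have hm : ∀ v ∈ Set.uIcc 2 u, 2 ≤ v := fun v hv => by rw [Set.uIcc_of_le hu] at hv; exact hv.1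
  have c1 : IntervalIntegrable (fun v => 1 / Real.log v) volume 2 u := ContinuousOn.intervalIntegrable fun v hv => by
    have := log_ne (hm v hv); have : v ≠ 0 := by linarith [hm v hv]
    exact ContinuousAt.continuousWithinAt <| by fun_prop
  have c2 : IntervalIntegrable (fun v => 1 / Real.log v ^ 2) volume 2 u := ContinuousOn.intervalIntegrable fun v hv => by
    have := pow_ne_zero 2 (log_ne (hm v hv)); have : v ≠ 0 := by linarith [hm v hv]
    exact ContinuousAt.continuousWithinAt <| by fun_prop
  have := intervalIntegral.integral_eq_sub_of_hasDerivAt (f := fun v => v / Real.log v) (f' := fun v => 1 / Real.log v - 1 / Real.log v ^ 2) (a := 2) (b := u)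
    (fun v hv => by
      have h0 := log_ne (hm v hv); have h1 : v ≠ 0 := by linarith [hm v hv]
      refine ((hasDerivAt_id' v).div (Real.hasDerivAt_log h1) h0).congr_deriv ?_
      field_simp) (c1.sub c2)
  rw [intervalIntegral.integral_sub c1 c2] at this
  linarith

lemma exp_mono {c v u : ℝ} (hc : c ≤ 1 / 2) (hv : 2 ≤ v) (huv : v ≤ u) :
    Real.exp (-(c * √(Real.log v))) ≤ v ^ (-(1/2) : ℝ) * (u ^ (1/2 : ℝ) * Real.exp (-(c * √(Real.log u)))) := by
  have hv0 : 0 < v := by linarith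
  have hu0 : 0 < u := by linarith
  rw [Real.rpow_def_of_pos hv0, Real.rpow_def_of_pos hu0, ← Real.exp_add, ← Real.exp_add]
  refine Real.exp_le_exp.2 ?_
  have l2 : 0.69 ≤ Real.log v := by
    have := Real.log_le_log (by norm_num) hv; linarith [Real.log_two_gt_d9]
  have l3 : Real.log v ≤ Real.log u := Real.log_le_log hv0 huv
  set a := √(Real.log v) with ha
  set b := √(Real.log u) with hb
  have ha2 : a ^ 2 = Real.log v := Real.sq_sqrt (by linarith)
  have hb2 : b ^ 2 = Real.log u := Real.sq_sqrt (by linarith)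
  have hab : a ≤ b := Real.sqrt_le_sqrt l3
  have ha1 : 1 / 2 ≤ a := Real.le_sqrt_of_sq_le (by norm_num; linarith)
  rw [← ha2, ← hb2]
  nlinarith [mul_nonneg (sub_nonneg.2 hab) (show 0 ≤ (a + b) / 2 - c by linarith)]

lemma int_bound {c C u l : ℝ} (hc : c ≤ 1 / 2) (hC : 0 < C) (hu : 2 ≤ u) (T : ℝ → ℝ)
    (hT : ∀ v, 2 ≤ v → |T v - l * v| ≤ C * (v * Real.exp (-(c * √(Real.log v)))))
    (hi : IntervalIntegrable (fun t => (t⁻¹ / Real.log t ^ 2) * T t) volume 2 u) :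
    |(∫ t in (2:ℝ)..u, (t⁻¹ / Real.log t ^ 2) * T t) - l * ∫ v in (2:ℝ)..u, 1 / Real.log v ^ 2| ≤ 8 * C * (u * Real.exp (-(c * √(Real.log u)))) := by
  have hm : ∀ v ∈ Set.uIcc 2 u, 2 ≤ v := fun v hv => by rw [Set.uIcc_of_le hu] at hv; exact hv.1
  have hu0 : 0 < u := by linarith
  have c2 : IntervalIntegrable (fun v => 1 / Real.log v ^ 2) volume 2 u := ContinuousOn.intervalIntegrable fun v hv => by
    have := pow_ne_zero 2 (log_ne (hm v hv)); have : v ≠ 0 := by linarith [hm v hv]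
    exact ContinuousAt.continuousWithinAt <| by fun_prop
  rw [← intervalIntegral.integral_const_mul, ← intervalIntegral.integral_sub hi (c2.const_mul l)]
  set D := u ^ (1/2 : ℝ) * Real.exp (-(c * √(Real.log u))) with hD
  have hD0 : 0 ≤ D := by positivity
  have hg : IntervalIntegrable (fun v : ℝ => 4 * C * D * v ^ (-(1/2) : ℝ)) volume 2 u :=
    (intervalIntegral.intervalIntegrable_rpow' (by norm_num)).const_mul _
  have := intervalIntegral.norm_integral_le_of_norm_le hu (f := fun t => (t⁻¹ / Real.log t ^ 2) * T t - l * (1 / Real.log t ^ 2))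
    (Filter.Eventually.of_forall fun v hv => by
      have hv2 : 2 ≤ v := hv.1.le
      have hv0 : 0 < v := by linarith
      have hl := log_ne hv2
      have l2 : 1 / 2 ≤ Real.log v := by
        have := Real.log_le_log (by norm_num) hv2; linarith [Real.log_two_gt_d9]
      have e : (v⁻¹ / Real.log v ^ 2) * T v - l * (1 / Real.log v ^ 2) = (1 / Real.log v ^ 2) * (v⁻¹ * (T v - l * v)) := by
        field_simp
      have h4 : 1 / Real.log v ^ 2 ≤ 4 := by
        rw [div_le_iff₀ (by positivity)]; nlinarith
      calc ‖(v⁻¹ / Real.log v ^ 2) * T v - l * (1 / Real.log v ^ 2)‖ = (1 / Real.log v ^ 2) * (v⁻¹ * |T v - l * v|) := by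
            rw [e, Real.norm_eq_abs, abs_mul, abs_mul, abs_of_nonneg (show 0 ≤ 1 / Real.log v ^ 2 by positivity), abs_of_nonneg (show 0 ≤ v⁻¹ by positivity)]
        _ ≤ 4 * (v⁻¹ * (C * (v * (v ^ (-(1/2) : ℝ) * D)))) := by
            have := hT v hv2
            have := exp_mono hc hv2 hv.2
            gcongr
            refine (hT v hv2).trans ?_
            gcongr
        _ = 4 * C * D * v ^ (-(1/2) : ℝ) := by field_simp) hg
  rw [Real.norm_eq_abs] at this
  refine this.trans ?_
  rw [intervalIntegral.integral_const_mul, integral_rpow (Or.inl (by norm_num))]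
  norm_num
  have e2 : u ^ (1/2 : ℝ) * u ^ (1/2 : ℝ) = u := by rw [← Real.rpow_add hu0]; norm_num
  have p : (0:ℝ) ≤ 2 ^ (1/2:ℝ) := by positivity
  have : 4 * C * D * ((u ^ (1/2:ℝ) - 2 ^ (1/2:ℝ)) / (1/2)) ≤ 4 * C * D * (2 * u ^ (1/2:ℝ)) := by gcongr; linarith
  have e3 : 4 * C * D * (2 * u ^ (1/2:ℝ)) = 8 * C * (u * Real.exp (-(c * √(Real.log u)))) := by
    rw [hD]; linear_combination 8 * C * Real.exp (-(c * √(Real.log u))) * e2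
  norm_num at this e3
  linarith

lemma TH_int (α β : ℝ) {u : ℝ} (hu : 2 ≤ u) : IntervalIntegrable (fun t => (t⁻¹ / Real.log t ^ 2) * TH α β ⌊t⌋₊) volume 2 u := by
  rw [intervalIntegrable_iff_integrableOn_Icc_of_le hu]
  simp only [← cc_sum]
  refine integrableOn_mul_sum_Icc _ (by norm_num) <| ContinuousOn.integrableOn_Icc fun x hx ↦ ContinuousAt.continuousWithinAt ?_
  have : x ≠ 0 := by linarith [hx.1]
  have := pow_ne_zero 2 (log_ne hx.1)
  fun_prop

lemma CC_bound : ∃ c > 0, ∃ C > 0, ∀ u : ℝ, 2 ≤ u → ∀ α β : ℝ, 0 ≤ α → α ≤ β → β ≤ 2 * Real.pi →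
    |CC α β ⌊u⌋₊ - 2 * ((β - α) / Real.pi) * ∫ v in (2:ℝ)..u, 1 / Real.log v| ≤ C * (u * Real.exp (-(c * √(Real.log u)))) := by
  obtain ⟨c, hc, hc1, C, hC, h⟩ := TH_bound
  refine ⟨c, hc, 10 * C + 32, by positivity, fun u hu α β h1 h2 h3 => ?_⟩
  set l := 2 * ((β - α) / Real.pi) with hl
  have hpi := Real.pi_pos
  have hl0 : 0 ≤ l := by rw [hl]; have : 0 ≤ β - α := by linarith
                         positivity
  have hl4 : l ≤ 4 := by have : (β - α) / Real.pi ≤ 2 := (div_le_iff₀ hpi).2 (by linarith)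
                         linarith
  have a := int_bound (l := l) hc1 hC hu (fun v => TH α β ⌊v⌋₊) (fun v hv => h v hv α β h1 h2 h3) (TH_int α β hu)
  have b := h u hu α β h1 h2 h3
  rw [CC_eq α β hu, li_eq hu]
  set I1 := ∫ t in (2:ℝ)..u, (t⁻¹ / Real.log t ^ 2) * TH α β ⌊t⌋₊
  set I2 := ∫ v in (2:ℝ)..u, 1 / Real.log v ^ 2
  set r := u * Real.exp (-(c * √(Real.log u))) with hr
  have lu : 1 / 2 ≤ Real.log u := by
    have := Real.log_le_log (by norm_num) hu; linarith [Real.log_two_gt_d9]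
  have e : TH α β ⌊u⌋₊ / Real.log u + I1 - l * (u / Real.log u - 2 / Real.log 2 + I2) =
      (TH α β ⌊u⌋₊ - l * u) / Real.log u + (I1 - l * I2) + l * (2 / Real.log 2) := by ring
  have d : |(TH α β ⌊u⌋₊ - l * u) / Real.log u| ≤ 2 * (C * r) := by
    rw [abs_div, abs_of_pos (show 0 < Real.log u by linarith), div_le_iff₀ (by linarith)]
    have : 0 ≤ C * r := (abs_nonneg _).trans b
    nlinarith
  have f : |l * (2 / Real.log 2)| ≤ 16 := by
    have := Real.log_two_gt_d9
    have g : 2 / Real.log 2 ≤ 4 := by rw [div_le_iff₀ (by linarith)]; linarith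
    have g0 : 0 ≤ 2 / Real.log 2 := by positivity
    rw [abs_of_nonneg (by positivity)]
    nlinarith
  have r1 : 1 ≤ 2 * r := by
    have : 1 / u ≤ Real.exp (-(c * √(Real.log u))) := by
      have hu0 : 0 < u := by linarith
      rw [one_div, ← Real.exp_log (inv_pos.2 hu0), Real.log_inv]
      refine Real.exp_le_exp.2 (neg_le_neg ?_)
      have s := Real.sq_sqrt (show 0 ≤ Real.log u by linarith)
      have s2 : 1 / 2 ≤ √(Real.log u) := Real.le_sqrt_of_sq_le (by linarith)
      nlinarith
    have : u * (1 / u) ≤ r := by rw [hr]; gcongr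
    rw [mul_one_div_cancel (by linarith)] at this
    linarith
  rw [e]
  refine (abs_add_le _ _).trans ?_
  have := abs_add_le ((TH α β ⌊u⌋₊ - l * u) / Real.log u) (I1 - l * I2)
  linarith

/-- Kubilyus' theorem: the number of Gaussian primes `ω` with `|ω|² ≤ u` and
`α ≤ arg ω ≤ β` equals `(2/π)(β - α) ∫₂ᵘ dv / log v` up to an error
`O(u exp(-b √(log u)))`. -/
theorem kubilyus_gaussian_primes_in_sectors :
    ∃ b > (0 : ℝ), ∃ C > (0 : ℝ), ∀ u : ℝ, 2 ≤ u → ∀ α β : ℝ,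
      0 ≤ α → α ≤ β → β ≤ 2 * Real.pi →
      |({ω : GaussianInt | Prime ω ∧ (Zsqrtd.norm ω : ℝ) ≤ u ∧
            α ≤ arg2pi (GaussianInt.toComplex ω) ∧
            arg2pi (GaussianInt.toComplex ω) ≤ β}.ncard : ℝ)
          - (2 / Real.pi) * (β - α) * ∫ v in (2 : ℝ)..u, 1 / Real.log v|
        ≤ C * u * Real.exp (-b * Real.sqrt (Real.log u)) := by
  classical
  obtain ⟨c, hc, C, hC, h⟩ := CC_bound
  refine ⟨c, hc, C, hC, fun u hu α β h1 h2 h3 => ?_⟩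
  have a := h u hu α β h1 h2 h3
  have e : ({ω : GaussianInt | Prime ω ∧ (Zsqrtd.norm ω : ℝ) ≤ u ∧ α ≤ arg2pi (GaussianInt.toComplex ω) ∧
      arg2pi (GaussianInt.toComplex ω) ≤ β}.ncard : ℝ) = CC α β ⌊u⌋₊ := by
    have hs : {ω : GaussianInt | Prime ω ∧ (Zsqrtd.norm ω : ℝ) ≤ u ∧ α ≤ arg2pi (GaussianInt.toComplex ω) ∧
      arg2pi (GaussianInt.toComplex ω) ≤ β} = (((Sle ⌊u⌋₊).filter Prime).filter (fun ω => α ≤ arg2pi (GaussianInt.toComplex ω) ∧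
      arg2pi (GaussianInt.toComplex ω) ≤ β) : Finset GaussianInt) := by
      ext z
      have hz : (Zsqrtd.norm z : ℝ) = nrm z := by
        have : (nrm z : ℤ) = Zsqrtd.norm z := by rw [nrm, Int.natCast_natAbs, abs_of_nonneg (GaussianInt.norm_nonneg z)]
        rw [← this]; simp
      simp only [Set.mem_ofPred_eq, Finset.coe_filter, Finset.mem_filter, mem_Sle, hz, Nat.le_floor_iff (show 0 ≤ u by linarith)]
      constructor
      · rintro ⟨p, q, r⟩; exact ⟨⟨⟨p.ne_zero, q⟩, p⟩, r⟩
      · rintro ⟨⟨⟨_, q⟩, p⟩, r⟩; exact ⟨p, q, r⟩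
    rw [hs, Set.ncard_coe_finset, Finset.card_eq_sum_ones, Finset.sum_filter, Finset.sum_filter, CC]
    push_cast
    refine Finset.sum_congr rfl fun z _ => ?_
    unfold ind
    rfl
  rw [e]
  convert a using 1
  · congr 2; ring
  · rw [mul_assoc]; congr 3; ring
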